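/- arXiv:1711.00998 — 2 statements merged into one kernel-verified Lean document; each statement's English description precedes it below -/
import Mathlib

section
/- Let n ≥ 1, let θ ∈ S^{n-1} be a unit vector in ℝ^n, and let γ ∈ (0,∞). Let f : ℝ^n → [0,∞) be a γ-concave function with 0 < ∫_{ℝ^n} f(x) dx < ∞ and with centroid at the origin, i.e. ∫_{ℝ^n} x f(x) dx = 0. Then ∫_0^∞ f(sθ) ds ≥ ((γ+1)/(γn+γ+1))^{(γ+1)/γ} · ∫_{-∞}^∞ f(sθ) ds. -/
open MeasureTheory Set
open scoped RealInnerProductSpace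

/-!
Write `ℝⁿ = E ⊕ ℝθ` and `p = γ / (1 + γ)`. By the one-dimensional Borell–Brascamp–Lieb inequality
the marginal `T z = ∫ f (z, t) dt` and the tail `R (z, t) = ∫_{s > t} f (z, s) ds` are
`p`-concave. Three inequalities then combine:

* Jensen at the centroid, for the concave function `R ^ p`: `∫ R ^ p f ≤ R 0 ^ p ∫ f`;
* on each line, `∫ R (z, t) ^ p f (z, t) dt ≥ T z ^ (p + 1) / (p + 1)`, so that
  `∫_E T ^ (p + 1) ≤ (p + 1) ∫ R ^ p f`;
* comparing `T (l z)` with `T z` and `T 0` through concavity of `T ^ p` and letting `l → 1`,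
  `(1 + p) T 0 ^ p ∫_E T ≤ (1 + p + p (n - 1)) ∫_E T ^ (p + 1)`.

Since `∫_E T = ∫ f`, they give `T 0 ^ p ≤ (1 + p n) R 0 ^ p`, and
`1 / (1 + p n) = (γ + 1) / (γ n + γ + 1)`.
-/

open Filter Function Module Topology
open scoped ENNReal NNReal Pointwise

section BorellBrascampLieb

/-- After translating `A` by `min B` and `B` by `max A`, the two sets lie in `A + B` and meet in one
point. -/
lemma volume_add_volume_le_of_isCompact {A B : Set ℝ} (hA : IsCompact A) (hB : IsCompact B)
    (hA₀ : A.Nonempty) (hB₀ : B.Nonempty) : volume A + volume B ≤ volume (A + B) := by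
  obtain ⟨a, haA, ha⟩ := hA.exists_isGreatest hA₀
  obtain ⟨b, hbB, hb⟩ := hB.exists_isLeast hB₀
  have hdisj : AEDisjoint volume (b +ᵥ A) (a +ᵥ B) := by
    refine measure_mono_null (t := {a + b}) ?_ (by simp)
    rintro _ ⟨⟨x, hx, rfl⟩, ⟨y, hy, hxy⟩⟩
    have := ha hx
    have := hb hy
    simp only [vadd_eq_add, mem_singleton_iff] at hxy ⊢
    linarith
  calc volume A + volume B = volume (b +ᵥ A) + volume (a +ᵥ B) := by simp only [measure_vadd]
    _ = volume ((b +ᵥ A) ∪ (a +ᵥ B)) :=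
      (measure_union₀ (hB.vadd a).measurableSet.nullMeasurableSet hdisj).symm
    _ ≤ volume (A + B) := by
      refine measure_mono (union_subset ?_ (vadd_set_subset_add haA))
      rw [add_comm A B]
      exact vadd_set_subset_add hbB

lemma volume_add_volume_le_volume_add {A B : Set ℝ} (hA : MeasurableSet A) (hB : MeasurableSet B)
    (hA₀ : A.Nonempty) (hB₀ : B.Nonempty) : volume A + volume B ≤ volume (A + B) := by
  obtain ⟨a, ha⟩ := hA₀
  obtain ⟨b, hb⟩ := hB₀
  rw [hA.measure_eq_iSup_isCompact, hB.measure_eq_iSup_isCompact]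
  simp only [iSup_and']
  refine ENNReal.biSup_add_biSup_le' ⟨∅, empty_subset _, isCompact_empty⟩
    ⟨∅, empty_subset _, isCompact_empty⟩ fun K ⟨hKA, hK⟩ L ⟨hLB, hL⟩ => ?_
  calc volume K + volume L ≤ volume (insert a K) + volume (insert b L) := by
        gcongr <;> exact subset_insert _ _
    _ ≤ volume (insert a K + insert b L) :=
      volume_add_volume_le_of_isCompact (hK.insert a) (hL.insert b) (insert_nonempty _ _)
        (insert_nonempty _ _)
    _ ≤ volume (A + B) := by
      gcongr
      exacts [insert_subset ha hKA, insert_subset hb hLB]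

lemma mul_volume_add_mul_volume_le {A B C : Set ℝ} (hA : MeasurableSet A) (hB : MeasurableSet B)
    (hA₀ : A.Nonempty) (hB₀ : B.Nonempty) (a b : ℝ≥0)
    (h : ∀ x ∈ A, ∀ y ∈ B, a * x + b * y ∈ C) : a * volume A + b * volume B ≤ volume C :=
  calc a * volume A + b * volume B = volume (a • A) + volume (b • B) := by
        simp [Measure.addHaar_nnreal_smul]
    _ ≤ volume (a • A + b • B) :=
      volume_add_volume_le_volume_add (hA.const_smul₀ a) (hB.const_smul₀ b) hA₀.smul_set
        hB₀.smul_set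
    _ ≤ volume C := by
      refine measure_mono ?_
      rintro _ ⟨_, ⟨x, hx, rfl⟩, _, ⟨y, hy, rfl⟩, rfl⟩
      exact h x hx y hy

lemma volume_Ioi_inter_lt (c : ℝ≥0∞) : volume (Ioi (0 : ℝ) ∩ {t | ENNReal.ofReal t < c}) = c := by
  rcases eq_or_ne c ∞ with rfl | hc
  · simp
  · have : Ioi (0 : ℝ) ∩ {t | ENNReal.ofReal t < c} = Ioo 0 c.toReal := by
      ext t
      exact and_congr_right fun ht => ENNReal.ofReal_lt_iff_lt_toReal (le_of_lt ht) hc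
    rw [this, Real.volume_Ioo, sub_zero, ENNReal.ofReal_toReal hc]

/-- Both sides are the measure of the region under the graph of `F`. -/
lemma lintegral_eq_lintegral_measure_lt {α : Type*} [MeasurableSpace α] (μ : Measure α) [SFinite μ]
    {F : α → ℝ≥0∞} (hF : Measurable F) :
    ∫⁻ x, F x ∂μ = ∫⁻ t in Ioi (0 : ℝ), μ {x | ENNReal.ofReal t < F x} := by
  have hS : MeasurableSet {q : α × ℝ | ENNReal.ofReal q.2 < F q.1} :=
    measurableSet_lt (by fun_prop) (by fun_prop)
  calc ∫⁻ x, F x ∂μ = ∫⁻ x, volume.restrict (Ioi 0) {t : ℝ | ENNReal.ofReal t < F x} ∂μ := by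
        refine lintegral_congr fun x => ?_
        rw [Measure.restrict_apply (measurableSet_lt (by fun_prop) (by fun_prop)), inter_comm,
          volume_Ioi_inter_lt]
    _ = ∫⁻ t in Ioi (0 : ℝ), μ {x | ENNReal.ofReal t < F x} :=
      (Measure.prod_apply hS).symm.trans (Measure.prod_apply_symm hS)

lemma lintegral_add_lintegral_le_of_min_le {F G H : ℝ → ℝ≥0∞} (hF : Measurable F)
    (hG : Measurable G) (hH : Measurable H) (a b : ℝ≥0) (hFG : ⨆ s, F s = ⨆ t, G t)
    (h : ∀ s t, min (F s) (G t) ≤ H (a * s + b * t)) :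
    a * (∫⁻ s, F s) + b * (∫⁻ t, G t) ≤ ∫⁻ x, H x := by
  have hmeas : Measurable fun r : ℝ => volume {s | ENNReal.ofReal r < F s} :=
    Antitone.measurable fun r r' hr => measure_mono fun s hs =>
      (ENNReal.ofReal_le_ofReal hr).trans_lt hs
  simp only [lintegral_eq_lintegral_measure_lt volume hF,
    lintegral_eq_lintegral_measure_lt volume hG, lintegral_eq_lintegral_measure_lt volume hH]
  rw [← lintegral_const_mul' _ _ ENNReal.coe_ne_top, ← lintegral_const_mul' _ _ ENNReal.coe_ne_top,
    ← lintegral_add_left (hmeas.const_mul _)]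
  refine lintegral_mono fun r => ?_
  rcases lt_or_ge (ENNReal.ofReal r) (⨆ s, F s) with hr | hr
  · refine mul_volume_add_mul_volume_le (measurableSet_lt measurable_const hF)
      (measurableSet_lt measurable_const hG) (lt_iSup_iff.1 hr) (lt_iSup_iff.1 (hr.trans_eq hFG))
      a b fun s hs t ht => ?_
    exact (lt_min hs ht).trans_le (h s t)
  · have hF' : {s | ENNReal.ofReal r < F s} = ∅ :=
      eq_empty_of_forall_notMem fun s => ((le_iSup F s).trans hr).not_gt
    have hG' : {t | ENNReal.ofReal r < G t} = ∅ :=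
      eq_empty_of_forall_notMem fun t => ((le_iSup G t).trans (hFG.symm.trans_le hr)).not_gt
    simp [hF', hG']

lemma two_point_holder_le {γ : ℝ} (hγ : 0 < γ) (a b : ℝ≥0) {A B : ℝ≥0∞} (hA₀ : A ≠ 0)
    (hA : A ≠ ∞) (hB₀ : B ≠ 0) (hB : B ≠ ∞) (I J : ℝ≥0∞) :
    a * I ^ (γ / (1 + γ)) + b * J ^ (γ / (1 + γ)) ≤
      ((a * A ^ γ + b * B ^ γ) ^ γ⁻¹ * (a * (I / A) + b * (J / B))) ^ (γ / (1 + γ)) := by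
  have hweight {c : ℝ≥0} {C K : ℝ≥0∞} (hC₀ : C ≠ 0) (hC : C ≠ ∞) :
      c * C ^ γ * (K ^ (γ / (1 + γ)) / C ^ γ) = c * K ^ (γ / (1 + γ)) := by
    rw [mul_assoc, ENNReal.mul_div_cancel (by simp [hC₀, hC]) (by simp [hC₀, hC])]
  have hpower {c : ℝ≥0} {C K : ℝ≥0∞} (hC₀ : C ≠ 0) (hC : C ≠ ∞) :
      c * C ^ γ * (K ^ (γ / (1 + γ)) / C ^ γ) ^ ((1 + γ) / γ) = c * (K / C) := by
    rw [ENNReal.div_rpow_of_nonneg _ _ (by positivity), ← ENNReal.rpow_mul, ← ENNReal.rpow_mul,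
      div_mul_div_cancel₀ (by positivity), div_self hγ.ne', ENNReal.rpow_one,
      mul_div_cancel₀ _ hγ.ne', ENNReal.rpow_add _ _ hC₀ hC, ENNReal.rpow_one,
      mul_assoc, ← mul_div_assoc, mul_comm (C ^ γ) K,
      ENNReal.mul_div_mul_right _ _ (by simp [hC₀, hC]) (by simp [hC₀, hC])]
  have hHolder := ENNReal.inner_le_weight_mul_Lp_of_nonneg Finset.univ
    (p := (1 + γ) / γ) (by rw [one_le_div hγ]; linarith) ![a * A ^ γ, b * B ^ γ]
    ![I ^ (γ / (1 + γ)) / A ^ γ, J ^ (γ / (1 + γ)) / B ^ γ]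
  simp only [Fin.sum_univ_two, Matrix.cons_val_zero, Matrix.cons_val_one, hweight hA₀ hA,
    hweight hB₀ hB, hpower hA₀ hA, hpower hB₀ hB, inv_div] at hHolder
  rw [ENNReal.mul_rpow_of_nonneg _ _ (by positivity), ← ENNReal.rpow_mul]
  convert hHolder using 3
  field_simp
  ring

lemma borell_brascamp_lieb_of_iSup_ne_top {γ : ℝ} (hγ : 0 < γ) {F G H : ℝ → ℝ≥0∞}
    (hF : Measurable F) (hG : Measurable G) (hH : Measurable H) {a b : ℝ≥0}
    (h : ∀ s t, F s ≠ 0 → G t ≠ 0 → a * F s ^ γ + b * G t ^ γ ≤ H (a * s + b * t) ^ γ)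
    (hF₀ : ∫⁻ s, F s ≠ 0) (hG₀ : ∫⁻ t, G t ≠ 0) (hF_top : ⨆ s, F s ≠ ∞) (hG_top : ⨆ t, G t ≠ ∞) :
    a * (∫⁻ s, F s) ^ (γ / (1 + γ)) + b * (∫⁻ t, G t) ^ (γ / (1 + γ)) ≤
      (∫⁻ x, H x) ^ (γ / (1 + γ)) := by
  set A := ⨆ s, F s
  set B := ⨆ t, G t
  have hA₀ : A ≠ 0 := fun hA => hF₀ (by simp [ENNReal.iSup_eq_zero.1 hA])
  have hB₀ : B ≠ 0 := fun hB => hG₀ (by simp [ENNReal.iSup_eq_zero.1 hB])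
  refine (two_point_holder_le hγ a b hA₀ hF_top hB₀ hG_top _ _).trans ?_
  gcongr
  set W := (a * A ^ γ + b * B ^ γ) ^ γ⁻¹ with hW
  rcases eq_or_ne W 0 with hW₀ | hW₀
  · simp [hW₀]
  have hW_top : W ≠ ∞ := by simp [hW, hγ.le, hF_top, hG_top, ENNReal.mul_eq_top]
  have hmin s t : min (F s / A) (G t / B) ≤ H (a * s + b * t) / W := by
    set r := min (F s / A) (G t / B)
    have hr_F : r * A ≤ F s := ENNReal.mul_le_of_le_div (min_le_left _ _)
    have hr_G : r * B ≤ G t := ENNReal.mul_le_of_le_div (min_le_right _ _)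
    rcases eq_or_ne r 0 with hr | hr
    · simp [hr]
    rw [ENNReal.le_div_iff_mul_le (.inl hW₀) (.inl hW_top), ← ENNReal.rpow_le_rpow_iff hγ]
    calc (r * W) ^ γ = a * (r * A) ^ γ + b * (r * B) ^ γ := by
          simp only [ENNReal.mul_rpow_of_nonneg _ _ hγ.le, hW, ENNReal.rpow_inv_rpow hγ.ne']
          ring
      _ ≤ a * F s ^ γ + b * G t ^ γ := by gcongr
      _ ≤ H (a * s + b * t) ^ γ := h s t (fun h₀ => by simp_all) (fun h₀ => by simp_all)
  have hsup : ⨆ s, F s / A = ⨆ t, G t / B := by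
    rw [← ENNReal.iSup_div, ← ENNReal.iSup_div, ENNReal.div_self hA₀ hF_top,
      ENNReal.div_self hB₀ hG_top]
  have hint := lintegral_add_lintegral_le_of_min_le (hF.div_const A) (hG.div_const B)
    (hH.div_const W) a b hsup hmin
  simp only [div_eq_mul_inv] at hint ⊢
  rw [lintegral_mul_const _ hF, lintegral_mul_const _ hG, lintegral_mul_const _ hH] at hint
  rw [mul_comm]
  exact ENNReal.mul_le_of_le_div hint

lemma tendsto_lintegral_min_natCast {α : Type*} [MeasurableSpace α] (μ : Measure α)
    {F : α → ℝ≥0∞} (hF : Measurable F) :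
    Tendsto (fun N : ℕ => ∫⁻ x, min (F x) N ∂μ) atTop (𝓝 (∫⁻ x, F x ∂μ)) :=
  lintegral_tendsto_of_tendsto_of_monotone (fun N => (hF.min measurable_const).aemeasurable)
    (.of_forall fun x N M hNM => by dsimp only; gcongr)
    (.of_forall fun x => by
      simpa using (tendsto_const_nhds (x := F x)).min ENNReal.tendsto_nat_nhds_top)

/-- The hypothesis passes to the truncations `min F N` and `min G N`. -/
theorem borell_brascamp_lieb {γ : ℝ} (hγ : 0 < γ) {F G H : ℝ → ℝ≥0∞}
    (hF : Measurable F) (hG : Measurable G) (hH : Measurable H) {a b : ℝ≥0}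
    (h : ∀ s t, F s ≠ 0 → G t ≠ 0 → a * F s ^ γ + b * G t ^ γ ≤ H (a * s + b * t) ^ γ)
    (hF₀ : ∫⁻ s, F s ≠ 0) (hG₀ : ∫⁻ t, G t ≠ 0) :
    a * (∫⁻ s, F s) ^ (γ / (1 + γ)) + b * (∫⁻ t, G t) ^ (γ / (1 + γ)) ≤
      (∫⁻ x, H x) ^ (γ / (1 + γ)) := by
  have hF_lim := tendsto_lintegral_min_natCast volume hF
  have hG_lim := tendsto_lintegral_min_natCast volume hG
  refine le_of_tendsto
    ((ENNReal.Tendsto.const_mul (hF_lim.ennrpow_const _) (.inr ENNReal.coe_ne_top)).add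
      (ENNReal.Tendsto.const_mul (hG_lim.ennrpow_const _) (.inr ENNReal.coe_ne_top))) ?_
  filter_upwards [hF_lim.eventually_ne hF₀, hG_lim.eventually_ne hG₀] with N hFN hGN
  have hsup (K : ℝ → ℝ≥0∞) : ⨆ x, min (K x) N ≠ ∞ :=
    ((iSup_le fun _ => min_le_right _ _).trans_lt (ENNReal.natCast_lt_top N)).ne
  refine borell_brascamp_lieb_of_iSup_ne_top hγ (hF.min measurable_const)
    (hG.min measurable_const) hH (fun s t hs ht => ?_) hFN hGN (hsup F) (hsup G)
  calc a * min (F s) N ^ γ + b * min (G t) N ^ γ ≤ a * F s ^ γ + b * G t ^ γ := by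
        gcongr <;> exact min_le_left _ _
    _ ≤ H (a * s + b * t) ^ γ :=
      h s t (fun h₀ => hs (by simp [h₀])) (fun h₀ => ht (by simp [h₀]))

end BorellBrascampLieb

section Tail

lemma antitone_measure_Ici (ν : Measure ℝ) : Antitone fun t => ν (Ici t) :=
  fun _ _ hst => measure_mono (Ici_subset_Ici.2 hst)

lemma measurableSet_measure_Ici_lt (ν : Measure ℝ) (r : ℝ≥0∞) :
    MeasurableSet {t | ν (Ici t) < r} :=
  measurableSet_lt (antitone_measure_Ici ν).measurable measurable_const

lemma measure_setOf_measure_Ici_lt_le (ν : Measure ℝ) [IsFiniteMeasure ν] (r : ℝ≥0∞) :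
    ν {t | ν (Ici t) < r} ≤ r := by
  rw [(measurableSet_measure_Ici_lt ν r).measure_eq_iSup_isCompact]
  refine iSup₂_le fun K hK => iSup_le fun hK_compact => ?_
  rcases K.eq_empty_or_nonempty with rfl | hK₀
  · simp
  · obtain ⟨t, htK, ht⟩ := hK_compact.exists_isLeast hK₀
    exact (measure_mono ht).trans (hK htK).le

/-- Under `ν`, the function `t ↦ ν [t, ∞)` stochastically dominates the uniform variable on
`(0, ν ℝ]`. -/
lemma volume_restrict_Ici_le_measure (ν : Measure ℝ) [IsFiniteMeasure ν] {r : ℝ} (hr : 0 < r) :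
    volume.restrict (Ioc 0 (ν.real univ)) (Ici r) ≤ ν {t | r ≤ ν.real (Ici t)} := by
  have hset : {t | r ≤ ν.real (Ici t)} = {t | ν (Ici t) < ENNReal.ofReal r}ᶜ := by
    ext t
    simp [Measure.real, ENNReal.ofReal_le_iff_le_toReal]
  have hinter : Ici r ∩ Ioc 0 (ν.real univ) = Icc r (ν.real univ) :=
    Set.ext fun x => ⟨fun h => ⟨h.1, h.2.2⟩, fun h => ⟨h.1, hr.trans_le h.1, h.2⟩⟩
  calc volume.restrict (Ioc 0 (ν.real univ)) (Ici r) = ν univ - ENNReal.ofReal r := by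
        rw [Measure.restrict_apply measurableSet_Ici, hinter, Real.volume_Icc,
          ENNReal.ofReal_sub _ hr.le, ofReal_measureReal]
    _ ≤ ν univ - ν {t | ν (Ici t) < ENNReal.ofReal r} := by
      gcongr
      exact measure_setOf_measure_Ici_lt_le ν _
    _ = ν {t | r ≤ ν.real (Ici t)} := by
      rw [hset, measure_compl (measurableSet_measure_Ici_lt ν _) (measure_ne_top _ _)]

lemma measureReal_univ_rpow_div_le_integral (ν : Measure ℝ) [IsFiniteMeasure ν] {p : ℝ}
    (hp : 0 < p) : ν.real univ ^ (p + 1) / (p + 1) ≤ ∫ t, ν.real (Ici t) ^ p ∂ν := by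
  have hmeas : Measurable fun t => ν.real (Ici t) :=
    (antitone_measure_Ici ν).measurable.ennreal_toReal
  have hint : Integrable (fun t => ν.real (Ici t) ^ p) ν :=
    .of_bound (hmeas.pow_const p).aestronglyMeasurable (ν.real univ ^ p)
      (.of_forall fun t => by
        rw [Real.norm_of_nonneg (by positivity)]
        gcongr
        exacts [measure_ne_top _ _, subset_univ _])
  have hnonneg : 0 ≤ᵐ[volume.restrict (Ioc 0 (ν.real univ))] fun x : ℝ => x :=
    (ae_restrict_iff' measurableSet_Ioc).2 (.of_forall fun x hx => hx.1.le)
  calc ν.real univ ^ (p + 1) / (p + 1) = ∫ x in Ioc 0 (ν.real univ), x ^ p := by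
        rw [← intervalIntegral.integral_of_le measureReal_nonneg,
          integral_rpow (.inl (by linarith)), Real.zero_rpow (by linarith), sub_zero]
    _ = (∫⁻ x in Ioc 0 (ν.real univ), ENNReal.ofReal (x ^ p)).toReal :=
      integral_eq_lintegral_of_nonneg_ae (hnonneg.mono fun x hx => Real.rpow_nonneg hx p)
        (by fun_prop)
    _ ≤ (∫⁻ t, ENNReal.ofReal (ν.real (Ici t) ^ p) ∂ν).toReal := by
      refine ENNReal.toReal_mono hint.lintegral_lt_top.ne ?_
      rw [lintegral_rpow_eq_lintegral_meas_le_mul _ hnonneg aemeasurable_id hp,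
        lintegral_rpow_eq_lintegral_meas_le_mul _ (.of_forall fun _ => measureReal_nonneg)
          hmeas.aemeasurable hp]
      gcongr ENNReal.ofReal p * ?_
      refine setLIntegral_mono' measurableSet_Ioi fun r hr => ?_
      gcongr ?_ * _
      exact volume_restrict_Ici_le_measure ν hr
    _ = ∫ t, ν.real (Ici t) ^ p ∂ν :=
      (integral_eq_lintegral_of_nonneg_ae (.of_forall fun _ => by positivity) hint.1).symm

lemma integral_rpow_div_le_integral_tail_rpow_mul {F : ℝ → ℝ} (hF : Integrable F)
    (hF₀ : ∀ t, 0 ≤ F t) {p : ℝ} (hp : 0 < p) :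
    (∫ t, F t) ^ (p + 1) / (p + 1) ≤ ∫ t, (∫ s in Ioi t, F s) ^ p * F t := by
  set ν := volume.withDensity fun t => ENNReal.ofReal (F t)
  have : IsFiniteMeasure ν := isFiniteMeasure_withDensity_ofReal hF.2
  have hν {A : Set ℝ} (hA : MeasurableSet A) : ν.real A = ∫ t in A, F t := by
    rw [Measure.real, withDensity_apply _ hA, integral_eq_lintegral_of_nonneg_ae
      (.of_forall hF₀) hF.1.restrict]
  have h := measureReal_univ_rpow_div_le_integral ν hp
  rw [integral_withDensity_eq_integral_toReal_smul₀ (by fun_prop) (by simp)] at h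
  simpa only [hν MeasurableSet.univ, hν measurableSet_Ici, setIntegral_univ, smul_eq_mul,
    ENNReal.toReal_ofReal (hF₀ _), integral_Ici_eq_integral_Ioi, mul_comm] using h

end Tail

lemma coe_mul_ofReal_rpow_add_le_iff {p : ℝ} (hp : 0 ≤ p) (a b : ℝ≥0) {x y z : ℝ} (hx : 0 ≤ x)
    (hy : 0 ≤ y) (hz : 0 ≤ z) :
    a * ENNReal.ofReal x ^ p + b * ENNReal.ofReal y ^ p ≤ ENNReal.ofReal z ^ p ↔
      a * x ^ p + b * y ^ p ≤ z ^ p := by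
  lift x to ℝ≥0 using hx
  lift y to ℝ≥0 using hy
  lift z to ℝ≥0 using hz
  simp only [ENNReal.ofReal_coe_nnreal, ← ENNReal.coe_rpow_of_nonneg _ hp]
  norm_cast

/-- `PowConcave γ f` says that the real function `f` is `γ`-concave (for `γ > 0`): `f` is
nonnegative and `f ^ γ` is concave on the support of `f`. Convexity of the support is part of
`ConcaveOn`. -/
structure PowConcave {X : Type*} [AddCommGroup X] [Module ℝ X] (γ : ℝ) (f : X → ℝ) : Prop where
  nonneg : ∀ x, 0 ≤ f x
  concaveOn : ConcaveOn ℝ (support f) fun x => f x ^ γ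

namespace PowConcave

section VectorSpace

variable {X Y V : Type*} [AddCommGroup X] [Module ℝ X] [AddCommGroup Y] [Module ℝ Y]
  [AddCommGroup V] [Module ℝ V] {γ : ℝ} {f : X → ℝ}

lemma pos (hf : PowConcave γ f) {x : X} (hx : x ∈ support f) : 0 < f x :=
  (hf.nonneg x).lt_of_ne' hx

lemma convex_support (hf : PowConcave γ f) : Convex ℝ (support f) := hf.concaveOn.1

lemma of_rpow_add_rpow_le (hγ : 0 < γ) (hf : ∀ x, 0 ≤ f x)
    (h : ∀ x ∈ support f, ∀ y ∈ support f, ∀ a b : ℝ, 0 ≤ a → 0 ≤ b → a + b = 1 →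
      a * f x ^ γ + b * f y ^ γ ≤ f (a • x + b • y) ^ γ) : PowConcave γ f := by
  refine ⟨hf, fun x hx y hy a b ha hb hab h₀ => ?_, fun x hx y hy a b ha hb hab =>
    h x hx y hy a b ha hb hab⟩
  have hpos : 0 < a * f x ^ γ + b * f y ^ γ :=
    convex_Ioi (0 : ℝ) (Real.rpow_pos_of_pos ((hf x).lt_of_ne' hx) γ)
      (Real.rpow_pos_of_pos ((hf y).lt_of_ne' hy) γ) ha hb hab
  have hle := h x hx y hy a b ha hb hab
  rw [h₀, Real.zero_rpow hγ.ne'] at hle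
  exact hpos.not_ge hle

lemma of_rpow_inv_le (hγ : 0 < γ) (hf : ∀ x, 0 ≤ f x)
    (h : ∀ x y, f x ≠ 0 → f y ≠ 0 → ∀ l : ℝ, 0 ≤ l → l ≤ 1 →
      (l * f x ^ γ + (1 - l) * f y ^ γ) ^ (1 / γ) ≤ f (l • x + (1 - l) • y)) :
    PowConcave γ f := by
  refine of_rpow_add_rpow_le hγ hf fun x hx y hy a b ha hb hab => ?_
  obtain rfl : b = 1 - a := by linarith
  have := hf x
  have := hf y
  rw [← Real.rpow_inv_le_iff_of_pos (by positivity) (hf _) hγ, ← one_div]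
  exact h x y hx hy a ha (by linarith)

lemma comp_affineMap (hf : PowConcave γ f) (A : Y →ᵃ[ℝ] X) : PowConcave γ (f ∘ A) :=
  ⟨fun y => hf.nonneg (A y), hf.concaveOn.comp_affineMap A⟩

lemma indicator (hf : PowConcave γ f) {K : Set X} (hK : Convex ℝ K) :
    PowConcave γ (K.indicator f) := by
  refine ⟨indicator_nonneg fun x _ => hf.nonneg x, ?_⟩
  rw [support_indicator]
  refine (hf.concaveOn.subset inter_subset_right (hK.inter hf.convex_support)).congr
    fun x hx => ?_
  simp only [indicator_of_mem hx.1]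

lemma slice {f : V × ℝ → ℝ} (hf : PowConcave γ f) (z : V) : PowConcave γ fun t => f (z, t) :=
  hf.comp_affineMap ((AffineMap.const ℝ ℝ z).prod (AffineMap.id ℝ ℝ))

lemma measurable (hγ : 0 < γ) {f : ℝ → ℝ} (hf : PowConcave γ f) : Measurable f := by
  refine measurable_of_Ioi fun c => ?_
  rcases lt_or_ge c 0 with hc | hc
  · rw [show f ⁻¹' Ioi c = univ from eq_univ_of_forall fun x => hc.trans_le (hf.nonneg x)]
    exact .univ
  · have hlevel : f ⁻¹' Ioi c = {x ∈ support f | c ^ γ < f x ^ γ} := by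
      ext x
      simp only [mem_preimage, mem_Ioi, mem_ofPred_eq, mem_support,
        Real.rpow_lt_rpow_iff hc (hf.nonneg x) hγ]
      exact ⟨fun h => ⟨(hc.trans_lt h).ne', h⟩, And.right⟩
    rw [hlevel]
    exact (hf.concaveOn.convex_gt _).ordConnected.measurableSet

lemma rpow_lintegral_le (hγ : 0 < γ) {f : V × ℝ → ℝ} (hf : PowConcave γ f) {z w : V}
    (hz : ∫⁻ t, ENNReal.ofReal (f (z, t)) ≠ 0) (hw : ∫⁻ t, ENNReal.ofReal (f (w, t)) ≠ 0)
    {a b : ℝ≥0} (hab : a + b = 1) :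
    a * (∫⁻ t, ENNReal.ofReal (f (z, t))) ^ (γ / (1 + γ)) +
        b * (∫⁻ t, ENNReal.ofReal (f (w, t))) ^ (γ / (1 + γ)) ≤
      (∫⁻ t, ENNReal.ofReal (f (a • z + b • w, t))) ^ (γ / (1 + γ)) := by
  have hmeas (v : V) : Measurable fun t => ENNReal.ofReal (f (v, t)) :=
    ((hf.slice v).measurable hγ).ennreal_ofReal
  refine borell_brascamp_lieb hγ (hmeas z) (hmeas w) (hmeas _) (fun s t hs ht => ?_) hz hw
  have hs' : (z, s) ∈ support f := fun h => hs (by simp [h])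
  have ht' : (w, t) ∈ support f := fun h => ht (by simp [h])
  exact (coe_mul_ofReal_rpow_add_le_iff hγ.le a b (hf.nonneg _) (hf.nonneg _) (hf.nonneg _)).2
    (hf.concaveOn.2 hs' ht' a.2 b.2 (congrArg NNReal.toReal hab))

lemma marginal (hγ : 0 < γ) {f : V × ℝ → ℝ} (hf : PowConcave γ f)
    (hint : ∀ z, Integrable fun t => f (z, t)) :
    PowConcave (γ / (1 + γ)) fun z => ∫ t, f (z, t) := by
  have hp : 0 ≤ γ / (1 + γ) := by positivity
  have hnn (z : V) : 0 ≤ ∫ t, f (z, t) := integral_nonneg fun t => hf.nonneg _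
  have hlint (z : V) : ∫⁻ t, ENNReal.ofReal (f (z, t)) = ENNReal.ofReal (∫ t, f (z, t)) :=
    (ofReal_integral_eq_lintegral_ofReal (hint z) (.of_forall fun t => hf.nonneg _)).symm
  have hne {z : V} (hz : ∫ t, f (z, t) ≠ 0) : ∫⁻ t, ENNReal.ofReal (f (z, t)) ≠ 0 := by
    simpa [hlint] using (hnn z).lt_of_ne' hz
  refine of_rpow_add_rpow_le (by positivity) hnn fun z hz w hw a b ha hb hab => ?_
  lift a to ℝ≥0 using ha
  lift b to ℝ≥0 using hb
  have h := hf.rpow_lintegral_le hγ (hne hz) (hne hw) (a := a) (b := b) (by exact_mod_cast hab)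
  simp only [hlint] at h
  exact (coe_mul_ofReal_rpow_add_le_iff hp a b (hnn z) (hnn w) (hnn _)).1 h

/-- The tail is the marginal of `f (z, s)` restricted to the half-space `t < s`. -/
lemma tail (hγ : 0 < γ) {f : V × ℝ → ℝ} (hf : PowConcave γ f)
    (hint : ∀ z, Integrable fun t => f (z, t)) :
    PowConcave (γ / (1 + γ)) fun x : V × ℝ => ∫ s in Ioi x.2, f (x.1, s) := by
  let K : Set ((V × ℝ) × ℝ) := {q | q.1.2 < q.2}
  have hK : Convex ℝ K := by
    intro q hq r hr a b ha hb hab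
    have : 0 < a * (q.2 - q.1.2) + b * (r.2 - r.1.2) :=
      convex_Ioi (0 : ℝ) (mem_Ioi.2 (sub_pos.2 hq)) (mem_Ioi.2 (sub_pos.2 hr)) ha hb hab
    change a * q.1.2 + b * r.1.2 < a * q.2 + b * r.2
    linarith
  let A : (V × ℝ) × ℝ →ₗ[ℝ] V × ℝ := (LinearMap.fst ℝ V ℝ).prodMap LinearMap.id
  have hslice (x : V × ℝ) : (fun s => K.indicator (f ∘ A.toAffineMap) (x, s)) =
      (Ioi x.2).indicator fun s => f (x.1, s) := rfl
  have h := ((hf.comp_affineMap A.toAffineMap).indicator hK).marginal hγ fun x => by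
    rw [hslice]
    exact (hint x.1).indicator measurableSet_Ioi
  simpa only [hslice, integral_indicator measurableSet_Ioi] using h

end VectorSpace

section Topological

variable {V : Type*} [AddCommGroup V] [Module ℝ V] [TopologicalSpace V] {γ : ℝ} {f : V × ℝ → ℝ}

lemma tail_ne_zero (hf : PowConcave γ f) {x : V × ℝ} (hint : Integrable fun t => f (x.1, t))
    (hx : x ∈ interior (support f)) : ∫ s in Ioi x.2, f (x.1, s) ≠ 0 := by
  have hU : IsOpen {s | (x.1, s) ∈ interior (support f)} :=
    isOpen_interior.preimage (Continuous.prodMk_right x.1)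
  obtain ⟨t, hxt, ht⟩ := exists_Ico_subset_of_mem_nhds (hU.mem_nhds hx) (exists_gt x.2)
  refine ((setIntegral_pos_iff_support_of_nonneg_ae (.of_forall fun s => hf.nonneg _)
    hint.integrableOn).2 (lt_of_lt_of_le ?_ (measure_mono (s := Ioo x.2 t) fun s hs =>
      ⟨interior_subset (s := support f) (ht ⟨hs.1.le, hs.2⟩), hs.1⟩))).ne'
  simpa using hxt

lemma integral_slice_ne_zero (hf : PowConcave γ f) {x : V × ℝ}
    (hint : Integrable fun t => f (x.1, t)) (hx : x ∈ interior (support f)) :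
    ∫ t, f (x.1, t) ≠ 0 := by
  have htail : 0 < ∫ s in Ioi x.2, f (x.1, s) :=
    (integral_nonneg fun s => hf.nonneg _).lt_of_ne' (hf.tail_ne_zero hint hx)
  exact (htail.trans_le (setIntegral_le_integral hint (.of_forall fun t => hf.nonneg _))).ne'

/-- If the slice at `z` were not integrable, neither would be those at the midpoints of `z` with
points near the projection of `x`, a nonempty open set. -/
lemma integrable_slice [IsTopologicalAddGroup V] [ContinuousSMul ℝ V] [MeasurableSpace V]
    {μ : Measure V} [μ.IsOpenPosMeasure] [SFinite μ] (hγ : 0 < γ) (hf : PowConcave γ f)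
    (hint : Integrable f (μ.prod volume)) (hf₀ : (interior (support f)).Nonempty) (z : V) :
    Integrable fun t => f (z, t) := by
  have hiff (w : V) : Integrable (fun t => f (w, t)) ↔ ∫⁻ t, ENNReal.ofReal (f (w, t)) ≠ ∞ :=
    (lintegral_ofReal_ne_top_iff_integrable ((hf.slice w).measurable hγ).aestronglyMeasurable
      (.of_forall fun t => hf.nonneg _)).symm
  obtain ⟨⟨z₀, t₀⟩, h₀⟩ := hf₀
  let W : Set V := {w | ((2 : ℝ) • w - z, t₀) ∈ interior (support f)}
  have hW : IsOpen W := isOpen_interior.preimage (by fun_prop)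
  have hW₀ : (2⁻¹ : ℝ) • (z + z₀) ∈ W := by simpa [W] using h₀
  obtain ⟨w, hwW, hw⟩ := (Measure.dense_of_ae hint.prod_right_ae).inter_open_nonempty W hW ⟨_, hW₀⟩
  have hmid : (2⁻¹ : ℝ≥0) • z + (2⁻¹ : ℝ≥0) • ((2 : ℝ) • w - z) = w := by
    simp [NNReal.smul_def, smul_sub, smul_smul]
  by_contra hz
  have hz : ∫⁻ t, ENNReal.ofReal (f (z, t)) = ∞ := by_contra fun h => hz ((hiff z).2 h)
  have hz' : ∫⁻ t, ENNReal.ofReal (f ((2 : ℝ) • w - z, t)) ≠ 0 := fun h =>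
    hf.integral_slice_ne_zero ((hiff _).2 (h.trans_ne ENNReal.zero_ne_top)) hwW <| by
      rw [integral_eq_lintegral_of_nonneg_ae (.of_forall fun t => hf.nonneg _)
        ((hf.slice _).measurable hγ).aestronglyMeasurable, h, ENNReal.toReal_zero]
  have hp : 0 < γ / (1 + γ) := by positivity
  have h := hf.rpow_lintegral_le hγ (by simp [hz]) hz' (z := z) (a := 2⁻¹) (b := 2⁻¹)
    (by rw [← two_mul, mul_inv_cancel₀ two_ne_zero])
  rw [hmid, hz, ENNReal.top_rpow_of_pos hp, ENNReal.mul_top (by simp), top_add, top_le_iff] at h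
  exact ENNReal.rpow_ne_top_of_nonneg hp.le ((hiff w).1 hw) h

end Topological

end PowConcave

section Centroid

lemma exists_le_add_apply_sub_of_concaveOn {X : Type*} [AddCommGroup X] [Module ℝ X]
    [TopologicalSpace X] [IsTopologicalAddGroup X] [ContinuousSMul ℝ X] {U : Set X} {g : X → ℝ}
    (hU : IsOpen U) (hg : ConcaveOn ℝ U g) (hgc : ContinuousOn g U) {x₀ : X} (hx₀ : x₀ ∈ U) :
    ∃ ψ : X →L[ℝ] ℝ, ∀ x ∈ U, g x ≤ g x₀ + ψ (x - x₀) := by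
  let H : Set (X × ℝ) := {q | q.1 ∈ U ∧ q.2 < g q.1}
  have hHo : IsOpen H := by
    have hcont : ContinuousOn (fun q : X × ℝ => g q.1 - q.2) (U ×ˢ univ) :=
      (hgc.comp continuousOn_fst fun q hq => hq.1).sub continuousOn_snd
    convert hcont.isOpen_inter_preimage (hU.prod isOpen_univ) (isOpen_Ioi (a := (0 : ℝ))) using 1
    ext q
    simp [H]
  obtain ⟨Φ, hΦ⟩ :=
    geometric_hahn_banach_open_point hg.convex_strict_hypograph hHo (x := (x₀, g x₀)) (by simp)
  have hsplit (x : X) (r : ℝ) : Φ (x, r) = Φ (x, 0) + r * Φ (0, 1) := by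
    rw [← smul_eq_mul, ← map_smul, ← map_add]
    simp
  have hc : 0 < Φ (0, 1) := by
    have := hΦ (x₀, g x₀ - 1) ⟨hx₀, sub_one_lt _⟩
    rw [hsplit, hsplit x₀ (g x₀)] at this
    linarith
  refine ⟨-((Φ (0, 1))⁻¹ • Φ.comp (.inl ℝ X ℝ)), fun x hx => le_of_forall_lt fun r hr => ?_⟩
  have h := hΦ (x, r) ⟨hx, hr⟩
  have hdiff : Φ (x - x₀, 0) = Φ (x, 0) - Φ (x₀, 0) := by simp [← map_sub]
  rw [hsplit, hsplit x₀ (g x₀)] at h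
  simp only [neg_apply, smul_apply, ContinuousLinearMap.comp_apply,
    ContinuousLinearMap.inl_apply, smul_eq_mul, hdiff]
  rw [← sub_eq_add_neg, lt_sub_iff_add_lt, ← lt_sub_iff_add_lt', inv_mul_lt_iff₀ hc]
  linarith

variable {X : Type*} [NormedAddCommGroup X] [NormedSpace ℝ X] [MeasurableSpace X]
  {μ : Measure X} {f : X → ℝ} {x₀ : X}

lemma integrable_mul_apply_sub (hf : Integrable f μ) (hfx : Integrable (fun x => f x • x) μ)
    (ψ : X →L[ℝ] ℝ) (x₀ : X) : Integrable (fun x => f x * ψ (x - x₀)) μ := by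
  refine ((ψ.integrable_comp hfx).sub (hf.mul_const (ψ x₀))).congr (.of_forall fun x => ?_)
  simp [mul_sub]

lemma integral_mul_apply_sub_centroid [CompleteSpace X] (hf : Integrable f μ)
    (hfx : Integrable (fun x => f x • x) μ) (hx₀ : ∫ x, f x • x ∂μ = (∫ x, f x ∂μ) • x₀)
    (ψ : X →L[ℝ] ℝ) : ∫ x, f x * ψ (x - x₀) ∂μ = 0 := by
  have hψ : Integrable (fun x => ψ (f x • x)) μ := ψ.integrable_comp hfx
  calc ∫ x, f x * ψ (x - x₀) ∂μ = ∫ x, (ψ (f x • x) - f x * ψ x₀) ∂μ := by simp [mul_sub]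
    _ = ψ (∫ x, f x • x ∂μ) - (∫ x, f x ∂μ) * ψ x₀ := by
      rw [integral_sub hψ (hf.mul_const _), integral_mul_const, ψ.integral_comp_comm hfx]
    _ = 0 := by simp [hx₀]

lemma centroid_mem_of_isOpen [CompleteSpace X] (hf₀ : ∀ x, 0 ≤ f x) (hf : Integrable f μ)
    (hpos : 0 < ∫ x, f x ∂μ) (hfx : Integrable (fun x => f x • x) μ)
    (hx₀ : ∫ x, f x • x ∂μ = (∫ x, f x ∂μ) • x₀) {U : Set X} (hU : IsOpen U) (hUc : Convex ℝ U)
    (hfU : ∀ᵐ x ∂μ, x ∈ support f → x ∈ U) : x₀ ∈ U := by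
  by_contra h
  obtain ⟨ψ, hψ⟩ := geometric_hahn_banach_open_point hUc hU h
  have hneg {x : X} (hx : x ∈ U) : ψ (x - x₀) < 0 := by simpa using hψ x hx
  have hnn : ∀ᵐ x ∂μ, 0 ≤ -(f x * ψ (x - x₀)) := by
    filter_upwards [hfU] with x hx
    by_cases hfx₀ : f x = 0
    · simp [hfx₀]
    · exact neg_nonneg.2 (mul_nonpos_of_nonneg_of_nonpos (hf₀ x) (hneg (hx hfx₀)).le)
  have hzero : ∫ x, -(f x * ψ (x - x₀)) ∂μ = 0 := by
    rw [integral_neg, integral_mul_apply_sub_centroid hf hfx hx₀, neg_zero]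
  rw [integral_eq_zero_iff_of_nonneg_ae hnn (integrable_mul_apply_sub hf hfx ψ x₀).neg] at hzero
  refine hpos.ne' (integral_eq_zero_of_ae ?_)
  filter_upwards [hfU, hzero] with x hx hx'
  by_contra hfx₀
  exact mul_ne_zero hfx₀ (hneg (hx hfx₀)).ne (neg_eq_zero.1 hx')

variable [FiniteDimensional ℝ X] [BorelSpace X] {U : Set X} {g : X → ℝ}

lemma aestronglyMeasurable_mul_of_concaveOn (hf : AEStronglyMeasurable f μ) (hU : IsOpen U)
    (hfU : ∀ᵐ x ∂μ, x ∈ support f → x ∈ U) (hg : ConcaveOn ℝ U g) :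
    AEStronglyMeasurable (fun x => g x * f x) μ := by
  have hgU : AEStronglyMeasurable (U.indicator g) μ :=
    (aestronglyMeasurable_indicator_iff hU.measurableSet).2
      ((hg.continuousOn hU).aestronglyMeasurable hU.measurableSet)
  refine (hgU.mul hf).congr ?_
  filter_upwards [hfU] with x hx
  by_cases hfx₀ : f x = 0
  · simp [hfx₀]
  · simp [indicator_of_mem (hx hfx₀)]

/-- Jensen's inequality. `ConcaveOn.le_map_integral` does not apply because `U` is not closed, and
integrability of `g * f` is a conclusion here. -/
lemma integral_concaveOn_mul_le (hf₀ : ∀ x, 0 ≤ f x) (hf : Integrable f μ)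
    (hfx : Integrable (fun x => f x • x) μ) (hx₀ : ∫ x, f x • x ∂μ = (∫ x, f x ∂μ) • x₀)
    (hU : IsOpen U) (hx₀U : x₀ ∈ U) (hfU : ∀ᵐ x ∂μ, x ∈ support f → x ∈ U)
    (hg : ConcaveOn ℝ U g) (hg₀ : ∀ x, 0 ≤ g x) :
    Integrable (fun x => g x * f x) μ ∧ ∫ x, g x * f x ∂μ ≤ g x₀ * ∫ x, f x ∂μ := by
  obtain ⟨ψ, hψ⟩ := exists_le_add_apply_sub_of_concaveOn hU hg (hg.continuousOn hU) hx₀U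
  have hle : ∀ᵐ x ∂μ, g x * f x ≤ g x₀ * f x + f x * ψ (x - x₀) := by
    filter_upwards [hfU] with x hx
    by_cases hfx₀ : f x = 0
    · simp [hfx₀]
    · linarith [mul_le_mul_of_nonneg_right (hψ x (hx hfx₀)) (hf₀ x)]
  have hψi : Integrable (fun x => f x * ψ (x - x₀)) μ := integrable_mul_apply_sub hf hfx ψ x₀
  have hi : Integrable (fun x => g x * f x) μ := by
    refine ((hf.const_mul (g x₀)).add hψi).mono'
      (aestronglyMeasurable_mul_of_concaveOn hf.aestronglyMeasurable hU hfU hg) ?_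
    filter_upwards [hle] with x hx
    rwa [Real.norm_of_nonneg (mul_nonneg (hg₀ x) (hf₀ x))]
  refine ⟨hi, ?_⟩
  calc ∫ x, g x * f x ∂μ ≤ ∫ x, (g x₀ * f x + f x * ψ (x - x₀)) ∂μ :=
        integral_mono_ae hi ((hf.const_mul _).add hψi) hle
    _ = g x₀ * ∫ x, f x ∂μ := by
      rw [integral_add (hf.const_mul _) hψi, integral_const_mul,
        integral_mul_apply_sub_centroid hf hfx hx₀, add_zero]

end Centroid

section Dilation

/-- The left-hand side is the tangent line at `l = 1` of the right-hand side, a convex function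
of `l`. -/
lemma rpow_add_tangent_le {p η t l : ℝ} (hp : 0 < p) (hη : 0 ≤ η) (ht : 0 < t) (hl₀ : 0 ≤ l)
    (hl₁ : l ≤ 1) :
    t ^ (p + 1) + (1 - l) * ((p + 1) / p * (η * t - t ^ (p + 1))) ≤
      (l * t ^ p + (1 - l) * η) ^ ((p + 1) / p) := by
  have htp : 0 < t ^ p := by positivity
  set s := (1 - l) * (η - t ^ p) / t ^ p with hs
  have hs₁ : -1 ≤ s := by
    rw [hs, le_div_iff₀ htp]
    linarith [mul_nonneg (sub_nonneg.2 hl₁) hη, mul_nonneg hl₀ htp.le]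
  calc t ^ (p + 1) + (1 - l) * ((p + 1) / p * (η * t - t ^ (p + 1)))
      = t ^ (p + 1) * (1 + (p + 1) / p * s) := by
        rw [hs, Real.rpow_add_one ht.ne']
        field_simp
    _ ≤ t ^ (p + 1) * (1 + s) ^ ((p + 1) / p) := by
        refine mul_le_mul_of_nonneg_left (one_add_mul_self_le_rpow_one_add hs₁ ?_) (by positivity)
        rw [le_div_iff₀ hp]
        linarith
    _ = (t ^ p * (1 + s)) ^ ((p + 1) / p) := by
        rw [Real.mul_rpow htp.le (by linarith), ← Real.rpow_mul ht.le, mul_div_cancel₀ _ hp.ne']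
    _ = (l * t ^ p + (1 - l) * η) ^ ((p + 1) / p) := by
        congr 1
        rw [hs]
        field_simp
        ring

/-- Bernoulli's inequality `1 - l ^ d ≤ d * (1 - l)`, then division by `1 - l` and `l → 1`. -/
lemma le_natCast_mul_of_forall_pow_mul_le {J D : ℝ} (hJ : 0 ≤ J) (d : ℕ)
    (h : ∀ l ∈ Ioo (0 : ℝ) 1, l ^ d * (J + (1 - l) * D) ≤ J) : D ≤ d * J := by
  have hbound : ∀ l ∈ Ioo (0 : ℝ) 1, l ^ d * D ≤ d * J := fun l hl => by
    have hbern : 1 - l ^ d ≤ d * (1 - l) := by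
      have := one_add_mul_le_pow (a := l - 1) (by linarith [hl.1]) d
      rw [add_sub_cancel] at this
      linarith
    refine le_of_mul_le_mul_left ?_ (sub_pos.2 hl.2)
    linarith [h l hl, mul_le_mul_of_nonneg_right hbern hJ]
  have hlim : Tendsto (fun l : ℝ => l ^ d * D) (𝓝[<] 1) (𝓝 D) := by
    have : Continuous fun l : ℝ => l ^ d * D := by fun_prop
    simpa using (this.tendsto 1).mono_left nhdsWithin_le_nhds
  exact le_of_tendsto hlim (eventually_of_mem (Ioo_mem_nhdsLT one_pos) hbound)

namespace PowConcave

lemma rpow_add_tangent_le_rpow_smul {V : Type*} [AddCommGroup V] [Module ℝ V] {p : ℝ} {T : V → ℝ}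
    (hp : 0 < p) (hT : PowConcave p T) (hT₀ : T 0 ≠ 0) (z : V) {l : ℝ} (hl₀ : 0 ≤ l) (hl₁ : l ≤ 1) :
    T z ^ (p + 1) + (1 - l) * ((p + 1) / p * (T 0 ^ p * T z - T z ^ (p + 1))) ≤
      T (l • z) ^ (p + 1) := by
  by_cases hz : T z = 0
  · simpa [hz, Real.zero_rpow (by linarith : p + 1 ≠ 0)] using Real.rpow_nonneg (hT.nonneg _) _
  have hη : 0 ≤ T 0 ^ p := Real.rpow_nonneg (hT.nonneg 0) p
  have hηz : 0 ≤ T z ^ p := Real.rpow_nonneg (hT.nonneg z) p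
  have hconc : l * T z ^ p + (1 - l) * T 0 ^ p ≤ T (l • z) ^ p := by
    simpa using hT.concaveOn.2 hz hT₀ hl₀ (sub_nonneg.2 hl₁) (add_sub_cancel l 1)
  calc _ ≤ (l * T z ^ p + (1 - l) * T 0 ^ p) ^ ((p + 1) / p) :=
        rpow_add_tangent_le hp hη (hT.pos hz) hl₀ hl₁
    _ ≤ (T (l • z) ^ p) ^ ((p + 1) / p) :=
        Real.rpow_le_rpow (by have := sub_nonneg.2 hl₁; positivity) hconc (by positivity)
    _ = T (l • z) ^ (p + 1) := by
        rw [← Real.rpow_mul (hT.nonneg _), mul_div_cancel₀ _ hp.ne']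

lemma rpow_zero_mul_integral_le {E : Type*} [NormedAddCommGroup E] [NormedSpace ℝ E]
    [FiniteDimensional ℝ E] [MeasurableSpace E] [BorelSpace E] {μ : Measure E}
    [μ.IsAddHaarMeasure] {p : ℝ} {T : E → ℝ} (hp : 0 < p) (hT : PowConcave p T) (hT₀ : T 0 ≠ 0)
    (hTi : Integrable T μ) (hTp : Integrable (fun z => T z ^ (p + 1)) μ) :
    (1 + p) * (T 0 ^ p * ∫ z, T z ∂μ) ≤ (1 + p + p * finrank ℝ E) * ∫ z, T z ^ (p + 1) ∂μ := by
  have hD : Integrable (fun z => T 0 ^ p * T z - T z ^ (p + 1)) μ := (hTi.const_mul _).sub hTp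
  have hJ : 0 ≤ ∫ z, T z ^ (p + 1) ∂μ := integral_nonneg fun z => Real.rpow_nonneg (hT.nonneg z) _
  have hmain : (p + 1) / p * (T 0 ^ p * ∫ z, T z ∂μ - ∫ z, T z ^ (p + 1) ∂μ) ≤
      finrank ℝ E * ∫ z, T z ^ (p + 1) ∂μ := by
    refine le_natCast_mul_of_forall_pow_mul_le hJ _ fun l hl => ?_
    have hl' : 0 < l ^ finrank ℝ E := pow_pos hl.1 _
    have hle := integral_mono (hTp.add ((hD.const_mul _).const_mul _))
      ((integrable_comp_smul_iff μ (fun z => T z ^ (p + 1)) hl.1.ne').2 hTp) fun z =>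
      hT.rpow_add_tangent_le_rpow_smul hp hT₀ z hl.1.le hl.2.le
    simp only [Pi.add_apply] at hle
    rw [integral_add hTp ((hD.const_mul _).const_mul _), integral_const_mul, integral_const_mul,
      integral_sub (hTi.const_mul _) hTp, integral_const_mul,
      Measure.integral_comp_smul μ (fun z => T z ^ (p + 1)), abs_of_pos (by positivity),
      smul_eq_mul, ← div_eq_inv_mul, le_div_iff₀' hl'] at hle
    exact hle
  rw [div_mul_eq_mul_div, div_le_iff₀ hp] at hmain
  linarith

end PowConcave

end Dilation

section Product

lemma integral_marginal_rpow_le {E : Type*} [MeasurableSpace E] {μ : Measure E} [SFinite μ]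
    {f : E × ℝ → ℝ} {p : ℝ} (hp : 0 < p) (hf₀ : ∀ x, 0 ≤ f x) (hf : Integrable f (μ.prod volume))
    (hint : ∀ z, Integrable fun t => f (z, t))
    (hR : Integrable (fun x => (∫ s in Ioi x.2, f (x.1, s)) ^ p * f x) (μ.prod volume)) :
    Integrable (fun z => (∫ t, f (z, t)) ^ (p + 1)) μ ∧
      ∫ z, (∫ t, f (z, t)) ^ (p + 1) ∂μ ≤
        (p + 1) * ∫ x, (∫ s in Ioi x.2, f (x.1, s)) ^ p * f x ∂μ.prod volume := by
  have hle (z : E) : (∫ t, f (z, t)) ^ (p + 1) ≤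
      (p + 1) * ∫ t, (∫ s in Ioi t, f (z, s)) ^ p * f (z, t) := by
    rw [← div_le_iff₀' (by positivity)]
    exact integral_rpow_div_le_integral_tail_rpow_mul (hint z) (fun t => hf₀ _) hp
  have hT : Integrable (fun z => (∫ t, f (z, t)) ^ (p + 1)) μ := by
    refine (hR.integral_prod_left.const_mul (p + 1)).mono'
      (hf.integral_prod_left.aestronglyMeasurable.aemeasurable.pow_const _).aestronglyMeasurable
      (.of_forall fun z => ?_)
    rw [Real.norm_of_nonneg (Real.rpow_nonneg (integral_nonneg fun t => hf₀ _) _)]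
    exact hle z
  refine ⟨hT, ?_⟩
  rw [integral_prod _ hR, ← integral_const_mul]
  exact integral_mono hT (hR.integral_prod_left.const_mul _) hle

lemma ae_mem_interior_of_convex {X : Type*} [NormedAddCommGroup X] [NormedSpace ℝ X]
    [FiniteDimensional ℝ X] [MeasurableSpace X] [BorelSpace X] (μ : Measure X)
    [μ.IsAddHaarMeasure] {s : Set X} (hs : Convex ℝ s) : ∀ᵐ x ∂μ, x ∈ s → x ∈ interior s := by
  filter_upwards [measure_eq_zero_iff_ae_notMem.1 (hs.addHaar_frontier μ)] with x hx hxs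
  by_contra h
  exact hx ⟨subset_closure hxs, h⟩

namespace PowConcave

lemma zero_mem_interior_support {X : Type*} [NormedAddCommGroup X] [NormedSpace ℝ X]
    [FiniteDimensional ℝ X] [MeasurableSpace X] [BorelSpace X] {μ : Measure X}
    [μ.IsAddHaarMeasure] {γ : ℝ} {f : X → ℝ} (hf : PowConcave γ f) (hint : Integrable f μ)
    (hpos : 0 < ∫ x, f x ∂μ) (hfx : Integrable (fun x => f x • x) μ)
    (hc : ∫ x, f x • x ∂μ = 0) : 0 ∈ interior (support f) :=
  centroid_mem_of_isOpen hf.nonneg hint hpos hfx (by simpa using hc) isOpen_interior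
    hf.convex_support.interior (ae_mem_interior_of_convex μ hf.convex_support)

variable {E : Type*} [NormedAddCommGroup E] [NormedSpace ℝ E] [FiniteDimensional ℝ E]
  [MeasurableSpace E] [BorelSpace E] {μ : Measure E} [μ.IsAddHaarMeasure] {γ : ℝ} {f : E × ℝ → ℝ}

lemma integral_tail_rpow_mul_le (hγ : 0 < γ) (hf : PowConcave γ f)
    (hint : Integrable f (μ.prod volume)) (hslice : ∀ z, Integrable fun t => f (z, t))
    (hfx : Integrable (fun x => f x • x) (μ.prod volume))
    (hc : ∫ x, f x • x ∂μ.prod volume = 0) (h₀ : 0 ∈ interior (support f)) :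
    Integrable (fun x => (∫ s in Ioi x.2, f (x.1, s)) ^ (γ / (1 + γ)) * f x) (μ.prod volume) ∧
      ∫ x, (∫ s in Ioi x.2, f (x.1, s)) ^ (γ / (1 + γ)) * f x ∂μ.prod volume ≤
        (∫ s in Ioi 0, f (0, s)) ^ (γ / (1 + γ)) * ∫ x, f x ∂μ.prod volume := by
  have hU := ae_mem_interior_of_convex (μ.prod volume) hf.convex_support
  have hconc : ConcaveOn ℝ (interior (support f)) fun x =>
      (∫ s in Ioi x.2, f (x.1, s)) ^ (γ / (1 + γ)) :=
    (hf.tail hγ hslice).concaveOn.subset (fun x hx => hf.tail_ne_zero (hslice x.1) hx)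
      hf.convex_support.interior
  exact integral_concaveOn_mul_le hf.nonneg hint hfx (by rw [hc, smul_zero]) isOpen_interior h₀ hU
    hconc fun x => Real.rpow_nonneg ((hf.tail hγ hslice).nonneg x) _

lemma rpow_integral_slice_le (hγ : 0 < γ) (hf : PowConcave γ f)
    (hint : Integrable f (μ.prod volume)) (hpos : 0 < ∫ x, f x ∂μ.prod volume)
    (hfx : Integrable (fun x => f x • x) (μ.prod volume))
    (hc : ∫ x, f x • x ∂μ.prod volume = 0) :
    (∫ t, f (0, t)) ^ (γ / (1 + γ)) ≤
      (1 + γ / (1 + γ) * (finrank ℝ E + 1)) * (∫ s in Ioi 0, f (0, s)) ^ (γ / (1 + γ)) := by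
  have h₀ : 0 ∈ interior (support f) := hf.zero_mem_interior_support hint hpos hfx hc
  have hslice (z : E) : Integrable fun t => f (z, t) := hf.integrable_slice hγ hint ⟨0, h₀⟩ z
  obtain ⟨hRi, hjensen⟩ := hf.integral_tail_rpow_mul_le hγ hint hslice hfx hc h₀
  set p := γ / (1 + γ)
  have hp : 0 < p := by positivity
  obtain ⟨hTi, hfubini⟩ := integral_marginal_rpow_le hp hf.nonneg hint hslice hRi
  have hdil := (hf.marginal hγ hslice).rpow_zero_mul_integral_le hp
    (hf.integral_slice_ne_zero (hslice 0) h₀) hint.integral_prod_left hTi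
  rw [← integral_prod f hint] at hdil
  have hd : 0 ≤ 1 + p + p * finrank ℝ E := by positivity
  refine le_of_mul_le_mul_right ?_ (mul_pos (by positivity : 0 < 1 + p) hpos)
  linarith [mul_le_mul_of_nonneg_left
    (hfubini.trans (mul_le_mul_of_nonneg_left hjensen (by positivity : 0 ≤ p + 1))) hd]

theorem grunbaum_prod (hγ : 0 < γ) (hf : PowConcave γ f)
    (hint : Integrable f (μ.prod volume)) (hpos : 0 < ∫ x, f x ∂μ.prod volume)
    (hfx : Integrable (fun x => f x • x) (μ.prod volume))
    (hc : ∫ x, f x • x ∂μ.prod volume = 0) :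
    ((γ + 1) / (γ * (finrank ℝ E + 1) + γ + 1)) ^ ((γ + 1) / γ) * ∫ t, f (0, t) ≤
      ∫ s in Ioi 0, f (0, s) := by
  have hT₀ : 0 ≤ ∫ t, f (0, t) := integral_nonneg fun t => hf.nonneg _
  have hR₀ : 0 ≤ ∫ s in Ioi 0, f (0, s) := integral_nonneg fun t => hf.nonneg _
  have hexp : ((γ + 1) / γ)⁻¹ = γ / (1 + γ) := by rw [inv_div, add_comm]
  have hconst : 1 + γ / (1 + γ) * (finrank ℝ E + 1) =
      ((γ + 1) / (γ * (finrank ℝ E + 1) + γ + 1))⁻¹ := by field_simp; ring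
  have h := hf.rpow_integral_slice_le hγ hint hpos hfx hc
  rw [hconst, ← div_eq_inv_mul, le_div_iff₀' (by positivity), ← hexp] at h
  rw [← Real.rpow_le_rpow_iff (by positivity) hR₀ (z := ((γ + 1) / γ)⁻¹) (by positivity),
    Real.mul_rpow (by positivity) hT₀, Real.rpow_rpow_inv (by positivity) (by positivity)]
  exact h

end PowConcave

end Product

section HaarMeasure

variable {X : Type*} [NormedAddCommGroup X] [NormedSpace ℝ X]

lemma exists_submodule_prod_continuousLinearEquiv {θ : X} (hθ : θ ≠ 0) :
    ∃ (E : Submodule ℝ X) (L : (E × ℝ) ≃L[ℝ] X), ∀ s, L (0, s) = s • θ := by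
  obtain ⟨φ, hφ⟩ := SeparatingDual.exists_eq_one (R := ℝ) hθ
  have hinv : RightInverse (ContinuousLinearMap.toSpanSingleton ℝ θ) φ := fun s => by simp [hφ]
  refine ⟨φ.ker, (ContinuousLinearEquiv.prodComm ℝ _ _).trans
    (ContinuousLinearEquiv.equivOfRightInverse φ _ hinv).symm, fun s => ?_⟩
  simp

variable [FiniteDimensional ℝ X] [MeasurableSpace X] [BorelSpace X] (ν : Measure X)
  [ν.IsAddHaarMeasure]

lemma exists_measurePreserving_prod_volume {E : Type*} [NormedAddCommGroup E] [NormedSpace ℝ E]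
    [FiniteDimensional ℝ E] [MeasurableSpace E] [BorelSpace E] (L : (E × ℝ) ≃L[ℝ] X) :
    ∃ μ : Measure E, μ.IsAddHaarMeasure ∧ MeasurePreserving L (μ.prod volume) ν := by
  have hL : (((Measure.addHaar : Measure E).prod volume).map L).IsAddHaarMeasure :=
    L.isAddHaarMeasure_map _
  set c := Measure.addHaarScalarFactor ν ((Measure.addHaar.prod volume).map L)
  have hc : c ≠ 0 := (Measure.addHaarScalarFactor_pos_of_isAddHaarMeasure _ _).ne'
  refine ⟨(c : ℝ≥0∞) • Measure.addHaar, .smul _ (by simpa) (by simp), L.continuous.measurable, ?_⟩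
  rw [Measure.prod_smul_left, Measure.map_smul]
  exact (Measure.isAddLeftInvariant_eq_smul ν _).symm

end HaarMeasure

theorem grunbaum_one_dim_sections_general {X : Type*} [NormedAddCommGroup X] [NormedSpace ℝ X]
    [FiniteDimensional ℝ X] [MeasurableSpace X] [BorelSpace X] {ν : Measure X}
    [ν.IsAddHaarMeasure] {θ : X} (hθ : θ ≠ 0) {γ : ℝ} (hγ : 0 < γ) {f : X → ℝ} (hf : PowConcave γ f)
    (hint : Integrable f ν) (hpos : 0 < ∫ x, f x ∂ν) (hfx : Integrable (fun x => f x • x) ν)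
    (hc : ∫ x, f x • x ∂ν = 0) :
    ((γ + 1) / (γ * finrank ℝ X + γ + 1)) ^ ((γ + 1) / γ) * ∫ s : ℝ, f (s • θ) ≤
      ∫ s in Ioi (0 : ℝ), f (s • θ) := by
  obtain ⟨E, L, hL⟩ := exists_submodule_prod_continuousLinearEquiv hθ
  obtain ⟨μ, hμ, hLμ⟩ := exists_measurePreserving_prod_volume ν L
  have hemb : MeasurableEmbedding L := L.toHomeomorph.measurableEmbedding
  have hfxL : Integrable (fun q => f (L q) • q) (μ.prod volume) := by
    simpa [comp_def] using
      L.symm.toContinuousLinearMap.integrable_comp ((hLμ.integrable_comp_emb hemb).2 hfx)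
  have hcL : ∫ q, f (L q) • q ∂μ.prod volume = 0 := by
    refine L.injective ?_
    rw [map_zero, ← hc, ← hLμ.integral_comp hemb, ← L.integral_comp_comm]
    simp
  have h := (hf.comp_affineMap (L : E × ℝ →ₗ[ℝ] X).toAffineMap).grunbaum_prod hγ
    ((hLμ.integrable_comp_emb hemb).2 hint) (by rwa [← hLμ.integral_comp hemb] at hpos) hfxL hcL
  have hdim : (finrank ℝ X : ℝ) = finrank ℝ E + 1 := by
    rw [← L.toLinearEquiv.finrank_eq, finrank_prod, finrank_self, Nat.cast_succ]
  simpa [hdim, hL] using h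

/-- **Grünbaum's inequality for one-dimensional sections of γ-concave functions.**
If `f : ℝⁿ → [0,∞)` is γ-concave (γ > 0) with `0 < ∫ f < ∞` and centroid at the
origin, and `θ` is a unit vector, then
`∫_0^∞ f(sθ) ds ≥ ((γ+1)/(γn+γ+1))^((γ+1)/γ) ∫_{-∞}^∞ f(sθ) ds`. -/
theorem grunbaum_one_dim_sections
    (n : ℕ) (hn : 1 ≤ n)
    (θ : EuclideanSpace ℝ (Fin n)) (hθ : ‖θ‖ = 1)
    (γ : ℝ) (hγ : 0 < γ)
    (f : EuclideanSpace ℝ (Fin n) → ℝ)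
    (hf_nonneg : ∀ x, 0 ≤ f x)
    (hf_concave : ∀ x y : EuclideanSpace ℝ (Fin n), f x ≠ 0 → f y ≠ 0 →
      ∀ l : ℝ, 0 ≤ l → l ≤ 1 →
        (l * f x ^ γ + (1 - l) * f y ^ γ) ^ (1 / γ) ≤ f (l • x + (1 - l) • y))
    (hf_int : Integrable f)
    (hf_pos : 0 < ∫ x, f x)
    (hf_cent_int : Integrable (fun x => f x • x))
    (hf_cent : (∫ x, f x • x) = (0 : EuclideanSpace ℝ (Fin n))) :
    ((γ + 1) / (γ * n + γ + 1)) ^ ((γ + 1) / γ) * ∫ s : ℝ, f (s • θ) ≤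
      ∫ s in Ioi (0 : ℝ), f (s • θ) := by
  have hθ₀ : θ ≠ 0 := norm_ne_zero_iff.1 (hθ ▸ one_ne_zero)
  simpa only [finrank_euclideanSpace_fin] using
    grunbaum_one_dim_sections_general hθ₀ hγ (.of_rpow_inv_le hγ hf_nonneg hf_concave)
      hf_int hf_pos hf_cent_int hf_cent
end

section
/- Let n ≥ 1, θ ∈ S^{n-1}, γ ∈ (0,∞), and let f : ℝ^n → [0,∞) be a γ-concave function, continuous on its support K_f, with 0 < ∫_{ℝ^n} f(x) dx < ∞ and centroid at the origin. Then equality ∫_0^∞ f(sθ) ds = ((γ+1)/(γn+γ+1))^{(γ+1)/γ} · ∫_{-∞}^∞ f(sθ) ds holds if and only if there exist constants m, r > 0, a unit vector ξ ∈ S^{n-1} with ⟨θ,ξ⟩ > 0, and an (n-1)-dimensional convex body D ⊂ ξ^⊥ whose centroid (taken within ξ^⊥) is at the origin, such that K_f = conv( −(nγ/(γ+1)) r θ , r θ + D ) and f(x) = m · 𝟙_{K_f}(x) · ( −⟨x,ξ⟩ + r⟨θ,ξ⟩ )^{1/γ} for all x. -/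
/-!
For a fixed direction `θ`, the integral of `f` over the ray from `x` in direction `θ` is a
`γ / (γ + 1)`-concave function of `x`, by a one-dimensional Borell–Brascamp–Lieb inequality.
Integrating the tangent inequality of its concave power at the centroid against `f` gives Grünbaum's
inequality, so in the equality case that power is affine on the support `K`. Differentiating along
`θ` shows that `f` itself is `m * (r - φ) ^ (1 / γ)` on `K` with `φ` linear. The centroid condition
now balances two moments of `r - φ` over `K` exactly as for a cone with apex on the central chord,
and this balance forces `K` to be the cone over its slice in `{φ = r}`.
-/

open MeasureTheory Set
open scoped RealInnerProductSpace

section BorellBrascampLieb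

open scoped Pointwise

lemma volume_add_volume_le_of_add_subset {A B C : Set ℝ} (hA : A.Nonempty) (hB : B.Nonempty)
    (hC : C.OrdConnected) (hABC : A + B ⊆ C) : volume A + volume B ≤ volume C := by
  have : Nonempty (A × A) := ⟨⟨_, hA.some_mem⟩, ⟨_, hA.some_mem⟩⟩
  have : Nonempty (B × B) := ⟨⟨_, hB.some_mem⟩, ⟨_, hB.some_mem⟩⟩
  have volume_le (S : Set ℝ) : volume S ≤ ⨆ p : S × S, edist (p.1 : ℝ) p.2 :=
    (Real.volume_le_diam S).trans <| Metric.ediam_le fun x hx y hy ↦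
      le_iSup (fun p : S × S ↦ edist (p.1 : ℝ) p.2) (⟨x, hx⟩, ⟨y, hy⟩)
  refine (add_le_add (volume_le A) (volume_le B)).trans (ENNReal.iSup_add_iSup_le ?_)
  rintro ⟨⟨a, ha⟩, ⟨a', ha'⟩⟩ ⟨⟨b, hb⟩, ⟨b', hb'⟩⟩
  have hIcc : Icc (min a a' + min b b') (max a a' + max b b') ⊆ C :=
    hC.out (hABC (add_mem_add (min_rec' (· ∈ A) ha ha') (min_rec' (· ∈ B) hb hb')))
      (hABC (add_mem_add (max_rec' (· ∈ A) ha ha') (max_rec' (· ∈ B) hb hb')))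
  calc edist a a' + edist b b' = volume (Icc (min a a' + min b b') (max a a' + max b b')) := by
        rw [Real.volume_Icc, edist_dist, edist_dist, ← ENNReal.ofReal_add dist_nonneg dist_nonneg,
          add_sub_add_comm, max_sub_min_eq_abs', max_sub_min_eq_abs', Real.dist_eq, Real.dist_eq]
    _ ≤ volume C := measure_mono hIcc

lemma rpow_mul_rpow_add_le {t x₀ x₁ y₀ y₁ : ℝ} (ht₀ : 0 < t) (ht₁ : t < 1) (hx₀ : 0 ≤ x₀)
    (hx₁ : 0 ≤ x₁) (hy₀ : 0 ≤ y₀) (hy₁ : 0 ≤ y₁) :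
    x₀ ^ t * y₀ ^ (1 - t) + x₁ ^ t * y₁ ^ (1 - t) ≤ (x₀ + x₁) ^ t * (y₀ + y₁) ^ (1 - t) := by
  have ht : 0 < 1 - t := by linarith
  have hconj : (t⁻¹).HolderConjugate (1 - t)⁻¹ := .inv_inv ht₀ ht (by ring)
  have hölder := Real.inner_le_Lp_mul_Lq_of_nonneg Finset.univ hconj
    (f := ![x₀ ^ t, x₁ ^ t]) (g := ![y₀ ^ (1 - t), y₁ ^ (1 - t)])
    (by simp [Fin.forall_fin_two, Real.rpow_nonneg, *])
    (by simp [Fin.forall_fin_two, Real.rpow_nonneg, *])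
  simpa [Fin.sum_univ_two, Real.rpow_rpow_inv, ht₀.ne', ht.ne', *] using hölder

/-- Superlevel sets are compared at heights proportional to the suprema, so that either both of the
sets on the left are nonempty or both are empty. -/
lemma volume_superlevel_add_le {a b S₀ S₁ S : ℝ} (ha : 0 < a) (hb : 0 < b) {h₀ h₁ h : ℝ → ℝ}
    (hS₀ : 0 < S₀) (hS₁ : 0 < S₁) (hS : 0 < S) (h₀_sup : IsLUB (range h₀) S₀)
    (h₁_sup : IsLUB (range h₁) S₁) (h_conn : ∀ t, 0 < t → OrdConnected {s | t < h s})
    (h_le : ∀ t, 0 < t → ∀ s₀ s₁, t * S₀ < h₀ s₀ → t * S₁ < h₁ s₁ →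
      t * S < h (a * s₀ + b * s₁)) {t : ℝ} (ht : 0 < t) :
    ENNReal.ofReal a * volume {s | t * S₀ < h₀ s} + ENNReal.ofReal b * volume {s | t * S₁ < h₁ s} ≤
      volume {s | t * S < h s} := by
  rcases lt_or_ge t 1 with ht1 | ht1
  · have nonempty {g : ℝ → ℝ} {M : ℝ} (hM : 0 < M) (hg : IsLUB (range g) M) :
        {s | t * M < g s}.Nonempty := by
      obtain ⟨_, ⟨s, rfl⟩, hs, -⟩ := hg.exists_between (mul_lt_of_lt_one_left hM ht1)
      exact ⟨s, hs⟩
    have brunn_minkowski := volume_add_volume_le_of_add_subset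
      ((nonempty hS₀ h₀_sup).smul_set (a := a)) ((nonempty hS₁ h₁_sup).smul_set (a := b))
      (h_conn (t * S) (by positivity)) (by
        rintro _ ⟨_, ⟨s₀, hs₀, rfl⟩, _, ⟨s₁, hs₁, rfl⟩, rfl⟩
        exact h_le t ht s₀ s₁ hs₀ hs₁)
    simpa [Measure.addHaar_smul, abs_of_pos, ha, hb] using brunn_minkowski
  · have empty {g : ℝ → ℝ} {M : ℝ} (hM : 0 < M) (hg : IsLUB (range g) M) :
        {s | t * M < g s} = ∅ :=
      eq_empty_of_forall_notMem fun s hs ↦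
        absurd (hg.1 ⟨s, rfl⟩) ((le_mul_of_one_le_left hM.le ht1).trans_lt hs).not_ge
    simp [empty hS₀ h₀_sup, empty hS₁ h₁_sup]

lemma mul_integral_div_add_le_integral_div {a b S₀ S₁ S : ℝ} (ha : 0 < a) (hb : 0 < b)
    {h₀ h₁ h : ℝ → ℝ} (h₀_nonneg : 0 ≤ h₀) (h₁_nonneg : 0 ≤ h₁) (h_nonneg : 0 ≤ h)
    (h₀_int : Integrable h₀) (h₁_int : Integrable h₁) (h_int : Integrable h) (hS₀ : 0 < S₀)
    (hS₁ : 0 < S₁) (hS : 0 < S) (h₀_sup : IsLUB (range h₀) S₀) (h₁_sup : IsLUB (range h₁) S₁)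
    (h_conn : ∀ t, 0 < t → OrdConnected {s | t < h s})
    (h_le : ∀ t, 0 < t → ∀ s₀ s₁, t * S₀ < h₀ s₀ → t * S₁ < h₁ s₁ →
      t * S < h (a * s₀ + b * s₁)) :
    a * ((∫ s, h₀ s) / S₀) + b * ((∫ s, h₁ s) / S₁) ≤ (∫ s, h s) / S := by
  have layer {g : ℝ → ℝ} (hg : 0 ≤ g) (hgi : Integrable g) {M : ℝ} (hM : 0 < M) :
      ENNReal.ofReal ((∫ s, g s) / M) = ∫⁻ t in Ioi (0 : ℝ), volume {s | t * M < g s} := by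
    rw [← integral_div, ofReal_integral_eq_lintegral_ofReal (hgi.div_const M)
      (.of_forall fun s ↦ div_nonneg (hg s) hM.le), lintegral_eq_lintegral_meas_lt volume
      (.of_forall fun s ↦ div_nonneg (hg s) hM.le) (hgi.div_const M).aemeasurable]
    simp only [lt_div_iff₀ hM]
  have level_measurable {g : ℝ → ℝ} {M : ℝ} (hM : 0 < M) :
      Measurable fun t ↦ volume {s | t * M < g s} := by
    have anti : Antitone fun t ↦ volume {s | t * M < g s} := fun t t' htt' ↦
      measure_mono fun s hs ↦ (mul_le_mul_of_nonneg_right htt' hM.le).trans_lt hs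
    exact anti.measurable
  have I₀ : 0 ≤ ∫ s, h₀ s := integral_nonneg h₀_nonneg
  have I₁ : 0 ≤ ∫ s, h₁ s := integral_nonneg h₁_nonneg
  have I : 0 ≤ ∫ s, h s := integral_nonneg h_nonneg
  rw [← ENNReal.ofReal_le_ofReal_iff (by positivity), ENNReal.ofReal_add (by positivity)
    (by positivity), ENNReal.ofReal_mul ha.le, ENNReal.ofReal_mul hb.le, layer h₀_nonneg h₀_int hS₀,
    layer h₁_nonneg h₁_int hS₁, layer h_nonneg h_int hS,
    ← lintegral_const_mul _ (level_measurable hS₀), ← lintegral_const_mul _ (level_measurable hS₁),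
    ← lintegral_add_left ((level_measurable hS₀).const_mul _)]
  exact setLIntegral_mono' measurableSet_Ioi fun t ht ↦
    volume_superlevel_add_le ha hb hS₀ hS₁ hS h₀_sup h₁_sup h_conn h_le ht

lemma rpow_add_le_rpow_of_div_add_le {γ a b I₀ I₁ I S₀ S₁ S : ℝ} (hγ : 0 < γ) (ha : 0 < a)
    (hb : 0 < b) (hI₀ : 0 ≤ I₀) (hI₁ : 0 ≤ I₁) (hI : 0 ≤ I) (hS₀ : 0 < S₀) (hS₁ : 0 < S₁)
    (hS : 0 < S) (hSγ : S ^ γ = a * S₀ ^ γ + b * S₁ ^ γ)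
    (h : a * (I₀ / S₀) + b * (I₁ / S₁) ≤ I / S) :
    a * I₀ ^ (γ / (γ + 1)) + b * I₁ ^ (γ / (γ + 1)) ≤ I ^ (γ / (γ + 1)) := by
  have hβ₀ : 0 < γ / (γ + 1) := by positivity
  have hβ₁ : γ / (γ + 1) < 1 := (div_lt_one (by positivity)).2 (by linarith)
  have factor {J M : ℝ} (hJ : 0 ≤ J) (hM : 0 < M) :
      J ^ (γ / (γ + 1)) = (J / M) ^ (γ / (γ + 1)) * (M ^ γ) ^ (1 - γ / (γ + 1)) := by
    rw [← Real.rpow_mul hM.le, show γ * (1 - γ / (γ + 1)) = γ / (γ + 1) by field_simp; ring,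
      ← Real.mul_rpow (by positivity) hM.le, div_mul_cancel₀ _ hM.ne']
  have split {c x y : ℝ} (hc : 0 < c) (hx : 0 ≤ x) (hy : 0 ≤ y) :
      c * (x ^ (γ / (γ + 1)) * y ^ (1 - γ / (γ + 1))) =
        (c * x) ^ (γ / (γ + 1)) * (c * y) ^ (1 - γ / (γ + 1)) := by
    rw [Real.mul_rpow hc.le hx, Real.mul_rpow hc.le hy, mul_mul_mul_comm,
      ← Real.rpow_add hc, add_sub_cancel, Real.rpow_one]
  rw [factor hI₀ hS₀, factor hI₁ hS₁, factor hI hS,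
    split ha (by positivity) (by positivity), split hb (by positivity) (by positivity), hSγ]
  refine (rpow_mul_rpow_add_le hβ₀ hβ₁ (by positivity) (by positivity) (by positivity)
    (by positivity)).trans ?_
  gcongr

lemma borell_brascamp_lieb_s1 {γ a b : ℝ} (hγ : 0 < γ) (ha : 0 < a) (hb : 0 < b)
    {h₀ h₁ h : ℝ → ℝ} (h₀_nonneg : 0 ≤ h₀) (h₁_nonneg : 0 ≤ h₁) (h_nonneg : 0 ≤ h)
    (h₀_bdd : BddAbove (range h₀)) (h₁_bdd : BddAbove (range h₁)) (h_int : Integrable h)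
    (h_conn : ∀ t, 0 < t → OrdConnected {s | t < h s})
    (h_le : ∀ s₀ s₁, 0 < h₀ s₀ → 0 < h₁ s₁ →
      a * h₀ s₀ ^ γ + b * h₁ s₁ ^ γ ≤ h (a * s₀ + b * s₁) ^ γ)
    (I₀ : 0 < ∫ s, h₀ s) (I₁ : 0 < ∫ s, h₁ s) :
    a * (∫ s, h₀ s) ^ (γ / (γ + 1)) + b * (∫ s, h₁ s) ^ (γ / (γ + 1)) ≤
      (∫ s, h s) ^ (γ / (γ + 1)) := by
  have exists_sup {g : ℝ → ℝ} (hbdd : BddAbove (range g)) (hI : 0 < ∫ s, g s) :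
      ∃ S, 0 < S ∧ IsLUB (range g) S := by
    obtain ⟨s, hs⟩ : ∃ s, 0 < g s := by
      by_contra! hle
      exact hI.not_ge (integral_nonpos hle)
    exact ⟨_, hs.trans_le (le_ciSup hbdd s), isLUB_ciSup hbdd⟩
  have integrable {g : ℝ → ℝ} (hI : 0 < ∫ s, g s) : Integrable g :=
    not_imp_comm.1 integral_undef hI.ne'
  obtain ⟨S₀, hS₀, h₀_sup⟩ := exists_sup h₀_bdd I₀
  obtain ⟨S₁, hS₁, h₁_sup⟩ := exists_sup h₁_bdd I₁
  set S := (a * S₀ ^ γ + b * S₁ ^ γ) ^ γ⁻¹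
  have hSγ : S ^ γ = a * S₀ ^ γ + b * S₁ ^ γ := Real.rpow_inv_rpow (by positivity) hγ.ne'
  have hSpos : 0 < S := by positivity
  refine rpow_add_le_rpow_of_div_add_le hγ ha hb I₀.le I₁.le (integral_nonneg h_nonneg) hS₀ hS₁
    hSpos hSγ (mul_integral_div_add_le_integral_div ha hb h₀_nonneg h₁_nonneg h_nonneg
      (integrable I₀) (integrable I₁) h_int hS₀ hS₁ hSpos h₀_sup h₁_sup h_conn ?_)
  intro t ht s₀ s₁ hs₀ hs₁
  have h₀_pos : 0 < h₀ s₀ := (by positivity : 0 < t * S₀).trans hs₀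
  have h₁_pos : 0 < h₁ s₁ := (by positivity : 0 < t * S₁).trans hs₁
  refine lt_of_lt_of_le ?_ ((Real.rpow_le_rpow_iff (by positivity) (h_nonneg _) hγ).1
    ((Real.rpow_inv_rpow (by positivity) hγ.ne').trans_le (h_le s₀ s₁ h₀_pos h₁_pos)))
  rw [← Real.rpow_lt_rpow_iff (by positivity) (by positivity) hγ, Real.rpow_inv_rpow
    (by positivity) hγ.ne', Real.mul_rpow ht.le hSpos.le, hSγ, mul_add, mul_left_comm,
    mul_left_comm (t ^ γ), ← Real.mul_rpow ht.le hS₀.le, ← Real.mul_rpow ht.le hS₁.le]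
  gcongr

end BorellBrascampLieb

section ConvexBounded

variable {E : Type*} [NormedAddCommGroup E] [NormedSpace ℝ E]

lemma norm_le_two_mul_norm_midpoint_add (x y : E) :
    ‖y‖ ≤ 2 * ‖(1 / 2 : ℝ) • x + (1 / 2 : ℝ) • y‖ + ‖x‖ := by
  have h := norm_sub_le ((2 : ℝ) • ((1 / 2 : ℝ) • x + (1 / 2 : ℝ) • y)) x
  rwa [show (2 : ℝ) • ((1 / 2 : ℝ) • x + (1 / 2 : ℝ) • y) - x = y by module, norm_smul,
    Real.norm_ofNat] at h

lemma ball_midpoint_subset {A : Set E} (hA : Convex ℝ A) {x y : E} {ε : ℝ}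
    (hball : Metric.ball x ε ⊆ A) (hy : y ∈ A) :
    Metric.ball ((1 / 2 : ℝ) • x + (1 / 2 : ℝ) • y) (ε / 2) ⊆ A := by
  intro z hz
  have hz' : (2 : ℝ) • z - y ∈ Metric.ball x ε := by
    rw [mem_ball_iff_norm] at hz ⊢
    rw [show (2 : ℝ) • z - y - x = (2 : ℝ) • (z - ((1 / 2 : ℝ) • x + (1 / 2 : ℝ) • y)) by module,
      norm_smul, Real.norm_ofNat]
    linarith
  convert hA (hball hz') hy (by norm_num : (0 : ℝ) ≤ 1 / 2) (by norm_num : (0 : ℝ) ≤ 1 / 2)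
    (by norm_num) using 1
  module

lemma isBounded_of_convex_of_measure_lt_top [FiniteDimensional ℝ E] [MeasurableSpace E]
    [BorelSpace E] (μ : Measure E) [μ.IsAddHaarMeasure] {A : Set E} (hA : Convex ℝ A)
    (hne : (interior A).Nonempty) (hμ : μ A < ⊤) : Bornology.IsBounded A := by
  obtain ⟨x₀, hx₀⟩ := hne
  obtain ⟨ε, hε, hball⟩ := Metric.mem_nhds_iff.1 (mem_interior_iff_mem_nhds.1 hx₀)
  have : IsFiniteMeasure (μ.restrict A) := ⟨by simpa using hμ⟩
  have ball_pos : 0 < μ (Metric.ball 0 (ε / 2)) := Metric.measure_ball_pos μ _ (by positivity)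
  obtain ⟨C, hC, hCA⟩ := isTightMeasureSet_iff_exists_isCompact_measure_compl_le.1
    (isTightMeasureSet_singleton (μ := μ.restrict A)) _ (ENNReal.half_pos ball_pos.ne')
  obtain ⟨R, hR⟩ := hC.isBounded.exists_norm_le
  refine isBounded_iff_forall_norm_le.2 ⟨2 * (R + ε / 2) + ‖x₀‖, fun y hy ↦ ?_⟩
  set c := (1 / 2 : ℝ) • x₀ + (1 / 2 : ℝ) • y
  obtain ⟨z, hzC, hz⟩ : ∃ z ∈ C, z ∈ Metric.ball c (ε / 2) := by
    by_contra! hdisj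
    have h_le : μ (Metric.ball 0 (ε / 2)) ≤ μ (Metric.ball 0 (ε / 2)) / 2 := by
      rw [← Measure.addHaar_ball_center μ c, Measure.addHaar_ball_center]
      refine le_trans ?_ (hCA _ rfl)
      rw [Measure.restrict_apply hC.isClosed.isOpen_compl.measurableSet,
        ← Measure.addHaar_ball_center μ c]
      exact measure_mono fun z hz ↦ ⟨fun hzC ↦ hdisj z hzC hz, ball_midpoint_subset hA hball hy hz⟩
    exact h_le.not_gt (ENNReal.half_lt_self ball_pos.ne' measure_ball_lt_top.ne)
  rw [mem_ball_iff_norm'] at hz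
  calc ‖y‖ ≤ 2 * ‖c‖ + ‖x₀‖ := norm_le_two_mul_norm_midpoint_add x₀ y
    _ ≤ 2 * (R + ε / 2) + ‖x₀‖ := by
      gcongr
      calc ‖c‖ = ‖z + (c - z)‖ := by rw [add_sub_cancel]
        _ ≤ R + ε / 2 := (norm_add_le _ _).trans (add_le_add (hR z hzC) hz.le)

end ConvexBounded

section Density

variable {E : Type*} [NormedAddCommGroup E] [NormedSpace ℝ E] [MeasurableSpace E]

/-- Nonnegative integrable `γ`-concave functions, `0 < γ`, with positive integral and continuous on
their support. Concavity of `f ^ γ` on `{x | f x ≠ 0}` includes the convexity of that set. -/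
structure GammaConcaveDensity (γ : ℝ) (f : E → ℝ) (μ : Measure E) : Prop where
  exponent_pos : 0 < γ
  nonneg : 0 ≤ f
  concaveOn : ConcaveOn ℝ (Function.support f) fun x ↦ f x ^ γ
  continuousOn : ContinuousOn f (tsupport f)
  integrable : Integrable f μ
  integral_pos : 0 < ∫ x, f x ∂μ

namespace GammaConcaveDensity

variable {γ : ℝ} {f : E → ℝ} {μ : Measure E}

lemma convex_tsupport (hf : GammaConcaveDensity γ f μ) : Convex ℝ (tsupport f) :=
  hf.concaveOn.1.closure

lemma concaveOn_tsupport (hf : GammaConcaveDensity γ f μ) :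
    ConcaveOn ℝ (tsupport f) fun x ↦ f x ^ γ := by
  have hcont : ContinuousOn (fun x ↦ f x ^ γ) (tsupport f) :=
    hf.continuousOn.rpow_const fun _ _ ↦ .inr hf.exponent_pos.le
  refine ⟨hf.convex_tsupport, fun x hx y hy a b ha hb hab ↦ ?_⟩
  have hxy : (x, y) ∈ closure (Function.support f ×ˢ Function.support f) := by
    rw [closure_prod_eq]; exact ⟨hx, hy⟩
  have fst_mem : MapsTo Prod.fst (closure (Function.support f ×ˢ Function.support f))
      (tsupport f) := fun z hz ↦ (closure_prod_eq.subset hz).1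
  have snd_mem : MapsTo Prod.snd (closure (Function.support f ×ˢ Function.support f))
      (tsupport f) := fun z hz ↦ (closure_prod_eq.subset hz).2
  refine ContinuousWithinAt.closure_le
    (f := fun z : E × E ↦ a • f z.1 ^ γ + b • f z.2 ^ γ)
    (g := fun z : E × E ↦ f (a • z.1 + b • z.2) ^ γ) hxy ?_ ?_
    fun z hz ↦ hf.concaveOn.2 hz.1 hz.2 ha hb hab
  · exact (((hcont.comp continuousOn_fst fst_mem).const_smul a).add
      ((hcont.comp continuousOn_snd snd_mem).const_smul b) (x, y) hxy).mono subset_closure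
  · exact (hcont.comp (g := fun x ↦ f x ^ γ) (by fun_prop)
      (fun z hz ↦ hf.convex_tsupport (fst_mem hz) (snd_mem hz) ha hb hab) (x, y) hxy).mono
      subset_closure

lemma convex_superlevel (hf : GammaConcaveDensity γ f μ) {t : ℝ} (ht : 0 ≤ t) :
    Convex ℝ {x | t < f x} := by
  convert hf.concaveOn.convex_gt (t ^ γ) using 1
  ext x
  rw [mem_ofPred_eq, mem_ofPred_eq, Real.rpow_lt_rpow_iff ht (hf.nonneg x) hf.exponent_pos]
  exact ⟨fun h ↦ ⟨(ht.trans_lt h).ne', h⟩, And.right⟩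

variable [BorelSpace E]

lemma measurable (hf : GammaConcaveDensity γ f μ) : Measurable f := by
  classical
  rw [← indicator_eq_self.2 (subset_tsupport f), ← piecewise_eq_indicator]
  exact hf.continuousOn.measurable_piecewise continuousOn_const (isClosed_tsupport f).measurableSet

variable [FiniteDimensional ℝ E] [μ.IsAddHaarMeasure]

lemma interior_support_nonempty (hf : GammaConcaveDensity γ f μ) :
    (interior (Function.support f)).Nonempty := by
  rw [nonempty_iff_ne_empty]
  intro hempty
  have hnull : μ (Function.support f) = 0 := by
    refine measure_mono_null subset_closure ?_
    rw [← sdiff_union_of_subset interior_subset_closure, measure_union_null_iff]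
    exact ⟨hf.concaveOn.1.addHaar_frontier μ, by simp [hempty]⟩
  have hzero : f =ᵐ[μ] 0 := by
    filter_upwards [measure_eq_zero_iff_ae_notMem.1 hnull] with x hx
    exact Function.notMem_support.1 hx
  exact hf.integral_pos.ne' (integral_eq_zero_of_ae hzero)

lemma interior_tsupport (hf : GammaConcaveDensity γ f μ) :
    interior (tsupport f) = interior (Function.support f) :=
  hf.concaveOn.1.interior_closure_eq_interior_of_nonempty_interior hf.interior_support_nonempty

lemma interior_tsupport_nonempty (hf : GammaConcaveDensity γ f μ) :
    (interior (tsupport f)).Nonempty :=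
  hf.interior_tsupport ▸ hf.interior_support_nonempty

lemma pos_of_mem_interior (hf : GammaConcaveDensity γ f μ) {x : E}
    (hx : x ∈ interior (tsupport f)) : 0 < f x :=
  (hf.nonneg x).lt_of_ne' (interior_subset (hf.interior_tsupport ▸ hx))

lemma closure_interior_tsupport (hf : GammaConcaveDensity γ f μ) :
    closure (interior (tsupport f)) = tsupport f := by
  rw [hf.convex_tsupport.closure_interior_eq_closure_of_nonempty_interior
    hf.interior_tsupport_nonempty, (isClosed_tsupport f).closure_eq]

lemma isCompact_tsupport (hf : GammaConcaveDensity γ f μ) : IsCompact (tsupport f) := by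
  obtain ⟨x₀, hx₀⟩ := hf.interior_tsupport_nonempty
  have hc : 0 < f x₀ ^ γ := Real.rpow_pos_of_pos (hf.pos_of_mem_interior hx₀) γ
  set A := {x ∈ tsupport f | f x₀ ^ γ / 2 ≤ f x ^ γ}
  have convex_A : Convex ℝ A := hf.concaveOn_tsupport.convex_ge _
  have interior_A : (interior A).Nonempty := by
    refine ⟨x₀, mem_interior_iff_mem_nhds.2 ?_⟩
    have htsupport := mem_interior_iff_mem_nhds.1 hx₀
    have hcont : ContinuousAt (fun x ↦ f x ^ γ) x₀ :=
      (hf.continuousOn.continuousAt htsupport).rpow_const (.inr hf.exponent_pos.le)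
    filter_upwards [htsupport, hcont.eventually_const_lt (half_lt_self hc)] with x hx hlt
    exact ⟨hx, hlt.le⟩
  have measure_A : μ A < ⊤ := by
    have hδ : 0 < (f x₀ ^ γ / 2) ^ γ⁻¹ := by positivity
    refine (measure_mono fun x hx ↦ ?_).trans_lt (hf.integrable.measure_ge_lt_top hδ)
    exact (Real.rpow_inv_le_iff_of_pos (by positivity) (hf.nonneg x) hf.exponent_pos).2 hx.2
  have bounded_A := isBounded_of_convex_of_measure_lt_top μ convex_A interior_A measure_A
  have midpoint_mem {y : E} (hy : y ∈ tsupport f) : (1 / 2 : ℝ) • x₀ + (1 / 2 : ℝ) • y ∈ A := by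
    have hx₀' := interior_subset hx₀
    refine ⟨hf.convex_tsupport hx₀' hy (by norm_num) (by norm_num) (by norm_num), ?_⟩
    have hconc : (1 / 2 : ℝ) • f x₀ ^ γ + (1 / 2 : ℝ) • f y ^ γ ≤
        f ((1 / 2 : ℝ) • x₀ + (1 / 2 : ℝ) • y) ^ γ :=
      hf.concaveOn_tsupport.2 hx₀' hy (by norm_num) (by norm_num) (by norm_num)
    simp only [smul_eq_mul] at hconc
    linarith [Real.rpow_nonneg (hf.nonneg y) γ]
  obtain ⟨R, hR⟩ := bounded_A.exists_norm_le
  refine Metric.isCompact_of_isClosed_isBounded (isClosed_tsupport f)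
    (isBounded_iff_forall_norm_le.2 ⟨2 * R + ‖x₀‖, fun y hy ↦ ?_⟩)
  calc ‖y‖ ≤ 2 * ‖(1 / 2 : ℝ) • x₀ + (1 / 2 : ℝ) • y‖ + ‖x₀‖ :=
        norm_le_two_mul_norm_midpoint_add x₀ y
    _ ≤ 2 * R + ‖x₀‖ := by gcongr; exact hR _ (midpoint_mem hy)

lemma bddAbove_range (hf : GammaConcaveDensity γ f μ) : BddAbove (range f) := by
  obtain ⟨M, hM⟩ := hf.isCompact_tsupport.bddAbove_image hf.continuousOn
  refine ⟨max M 0, forall_mem_range.2 fun x ↦ ?_⟩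
  by_cases hx : x ∈ tsupport f
  · exact (hM (mem_image_of_mem f hx)).trans (le_max_left M 0)
  · exact (image_eq_zero_of_notMem_tsupport hx).trans_le (le_max_right M 0)

lemma integrable_smul {F : Type*} [NormedAddCommGroup F] [NormedSpace ℝ F]
    (hf : GammaConcaveDensity γ f μ) {g : E → F} (hg : Continuous g) :
    Integrable (fun x ↦ f x • g x) μ := by
  have hsupp : (Function.support fun x ↦ f x • g x) ⊆ tsupport f :=
    (Function.support_smul_subset_left f g).trans (subset_tsupport f)
  exact (integrableOn_iff_integrable_of_support_subset hsupp).1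
    (hf.integrable.integrableOn.smul_continuousOn hg.continuousOn hf.isCompact_tsupport)

lemma integral_mul_pos (hf : GammaConcaveDensity γ f μ) {g : E → ℝ} (hg : Continuous g)
    (hpos : ∀ x ∈ interior (tsupport f), 0 < g x) : 0 < ∫ x, f x * g x ∂μ := by
  have g_nonneg : tsupport f ⊆ {x | 0 ≤ g x} := hf.closure_interior_tsupport.symm.trans_subset <|
    closure_minimal (fun x hx ↦ (hpos x hx).le) (isClosed_le continuous_const hg)
  have nonneg : 0 ≤ fun x ↦ f x * g x := fun x ↦ by
    by_cases hx : x ∈ tsupport f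
    · exact mul_nonneg (hf.nonneg x) (g_nonneg hx)
    · simp [image_eq_zero_of_notMem_tsupport hx]
  rw [integral_pos_iff_support_of_nonneg nonneg (hf.integrable_smul hg)]
  refine (isOpen_interior.measure_pos μ hf.interior_tsupport_nonempty).trans_le
    (measure_mono fun x hx ↦ (mul_pos (hf.pos_of_mem_interior hx) (hpos x hx)).ne')

lemma integral_mul_clm_eq_zero (hf : GammaConcaveDensity γ f μ)
    (hcent : ∫ x, f x • x ∂μ = 0) (L : E →L[ℝ] ℝ) : ∫ x, f x * L x ∂μ = 0 := by
  simpa [hcent] using L.integral_comp_comm (hf.integrable_smul continuous_id)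

lemma zero_mem_interior_tsupport (hf : GammaConcaveDensity γ f μ) (hcent : ∫ x, f x • x ∂μ = 0) :
    (0 : E) ∈ interior (tsupport f) := by
  by_contra hzero
  obtain ⟨L, hL⟩ := geometric_hahn_banach_point_open hf.convex_tsupport.interior isOpen_interior
    hzero
  rw [map_zero] at hL
  exact (hf.integral_mul_pos L.continuous hL).ne' (hf.integral_mul_clm_eq_zero hcent L)

end GammaConcaveDensity

end Density

section TailIntegral

variable {g : ℝ → ℝ}

lemma integral_Ioi_eq_sub_intervalIntegral (hg : Integrable g) (a s : ℝ) :
    ∫ t in Ioi s, g t = (∫ t in Ioi a, g t) - ∫ t in a..s, g t := by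
  rw [← intervalIntegral.integral_interval_add_Ioi (a := a) (b := s) hg.integrableOn
    hg.integrableOn, add_sub_cancel_left]

lemma continuous_integral_Ioi (hg : Integrable g) : Continuous fun s ↦ ∫ t in Ioi s, g t := by
  rw [funext (integral_Ioi_eq_sub_intervalIntegral hg 0)]
  exact continuous_const.sub (intervalIntegral.continuous_primitive
    (fun _ _ ↦ hg.intervalIntegrable) 0)

lemma hasDerivAt_integral_Ioi (hg : Integrable g) {s : ℝ} (hs : ContinuousAt g s) :
    HasDerivAt (fun s ↦ ∫ t in Ioi s, g t) (-g s) s := by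
  rw [funext (integral_Ioi_eq_sub_intervalIntegral hg 0)]
  exact (intervalIntegral.integral_hasDerivAt_right hg.intervalIntegrable
    hg.aestronglyMeasurable.stronglyMeasurableAtFilter hs).const_sub _

lemma integral_mul_integral_Ioi_rpow {a b : ℝ} (hab : a ≤ b) (hg : Integrable g)
    (g_cont : ContinuousOn g (Icc a b)) (g_supp : Function.support g ⊆ Icc a b) {β : ℝ}
    (hβ : 0 < β) :
    ∫ s, g s * (∫ t in Ioi s, g t) ^ β = (∫ s, g s) ^ (1 + β) / (1 + β) := by
  set H : ℝ → ℝ := fun s ↦ ∫ t in Ioi s, g t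
  have H_cont : Continuous H := continuous_integral_Ioi hg
  have H_b : H b = 0 := setIntegral_eq_zero_of_forall_eq_zero fun t ht ↦
    Function.notMem_support.1 fun h ↦ (g_supp h).2.not_gt ht
  have H_a : H a = ∫ s, g s := by
    refine integral_Ici_eq_integral_Ioi.symm.trans ?_
    exact setIntegral_eq_integral_of_forall_compl_eq_zero fun t ht ↦
      Function.notMem_support.1 fun h ↦ ht (g_supp h).1
  have deriv : ∀ s ∈ Ioo a b,
      HasDerivAt (fun s ↦ -(H s ^ (1 + β) / (1 + β))) (g s * H s ^ β) s := fun s hs ↦ by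
    have hH := hasDerivAt_integral_Ioi hg (g_cont.continuousAt (Icc_mem_nhds hs.1 hs.2))
    refine ((hH.rpow_const (p := 1 + β) (.inr (by linarith))).div_const (1 + β)).neg.congr_deriv ?_
    rw [add_sub_cancel_left]
    field_simp
    rfl
  calc ∫ s, g s * H s ^ β = ∫ s in Icc a b, g s * H s ^ β :=
        (setIntegral_eq_integral_of_forall_compl_eq_zero fun s hs ↦ by
          rw [Function.notMem_support.1 fun h ↦ hs (g_supp h), zero_mul]).symm
    _ = ∫ s in a..b, g s * H s ^ β := by
        rw [intervalIntegral.integral_of_le hab, integral_Icc_eq_integral_Ioc]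
    _ = -(H b ^ (1 + β) / (1 + β)) - -(H a ^ (1 + β) / (1 + β)) := by
        refine intervalIntegral.integral_eq_sub_of_hasDerivAt_of_le hab ?_ deriv ?_
        · exact ((H_cont.rpow_const fun _ ↦ .inr (by linarith)).div_const _).neg.continuousOn
        · refine ContinuousOn.intervalIntegrable ?_
          rw [uIcc_of_le hab]
          exact g_cont.mul (H_cont.rpow_const fun _ ↦ .inr hβ.le).continuousOn
    _ = (∫ s, g s) ^ (1 + β) / (1 + β) := by
        rw [H_b, H_a, Real.zero_rpow (by linarith)]
        ring

end TailIntegral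

section Line

variable {E : Type*} [NormedAddCommGroup E] [NormedSpace ℝ E] {θ : E}

lemma isClosedEmbedding_add_smul (hθ : θ ≠ 0) (x : E) :
    Topology.IsClosedEmbedding fun s : ℝ ↦ x + s • θ :=
  (Homeomorph.addLeft x).isClosedEmbedding.comp (isClosedEmbedding_smul_left hθ)

lemma convex_preimage_add_smul {K : Set E} (hK : Convex ℝ K) (x : E) :
    Convex ℝ {s : ℝ | x + s • θ ∈ K} := by
  have := hK.affine_preimage (AffineMap.lineMap x (x + θ) : ℝ →ᵃ[ℝ] E)
  simpa [AffineMap.lineMap_apply, preimage, add_comm] using this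

lemma exists_add_smul_mem_iff_mem_Icc {K : Set E} (hK : IsCompact K) (hconv : Convex ℝ K)
    (hθ : θ ≠ 0) {x : E} (hx : ∃ s : ℝ, x + s • θ ∈ K) :
    ∃ a b : ℝ, a ≤ b ∧ ∀ s : ℝ, x + s • θ ∈ K ↔ s ∈ Icc a b := by
  set I : Set ℝ := {s | x + s • θ ∈ K}
  have hI : I = Icc (sInf I) (sSup I) := eq_Icc_of_connected_compact
    ⟨hx, (convex_preimage_add_smul hconv x).isPreconnected⟩
    ((isClosedEmbedding_add_smul hθ x).isCompact_preimage hK)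
  exact ⟨sInf I, sSup I, nonempty_Icc.1 (hI ▸ hx), fun s ↦ Set.ext_iff.1 hI s⟩

end Line

section SectionIntegral

variable {E : Type*} [NormedAddCommGroup E] [NormedSpace ℝ E] {f : E → ℝ} {θ : E} {S : Set ℝ}

/-- The integral of `f` along the part of the line `x + ℝθ` whose parameter lies in `S`; with
`S = Ioi 0` these are the half-line sections of `f`, with `S = univ` the full ones. -/
noncomputable def sectionIntegral (f : E → ℝ) (θ : E) (S : Set ℝ) (x : E) : ℝ :=
  ∫ s in S, f (x + s • θ)

lemma sectionIntegral_nonneg (hf : 0 ≤ f) (θ : E) (S : Set ℝ) (x : E) :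
    0 ≤ sectionIntegral f θ S x :=
  integral_nonneg fun _ ↦ hf _

lemma sectionIntegral_univ (f : E → ℝ) (θ x : E) :
    sectionIntegral f θ univ x = ∫ s : ℝ, f (x + s • θ) := by
  rw [sectionIntegral, setIntegral_univ]

lemma sectionIntegral_Ioi_add_smul (f : E → ℝ) (θ x : E) (s : ℝ) :
    sectionIntegral f θ (Ioi 0) (x + s • θ) = ∫ t in Ioi s, f (x + t • θ) := by
  have := (measurePreserving_add_left volume s).setIntegral_preimage_emb
    (measurableEmbedding_addLeft s) (fun t ↦ f (x + t • θ)) (Ioi s)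
  simpa [sectionIntegral, add_smul, add_assoc] using this

lemma sectionIntegral_univ_add_smul (f : E → ℝ) (θ x : E) (s : ℝ) :
    sectionIntegral f θ univ (x + s • θ) = sectionIntegral f θ univ x := by
  simp_rw [sectionIntegral_univ, ← integral_add_left_eq_self (fun t : ℝ ↦ f (x + t • θ)) s,
    add_smul, add_assoc]

variable [MeasurableSpace E] [BorelSpace E] [SecondCountableTopology E]

lemma measurable_sectionIntegral (hf : Measurable f) (θ : E) (S : Set ℝ) :
    Measurable (sectionIntegral f θ S) := by
  have hmeas : StronglyMeasurable fun p : E × ℝ ↦ f (p.1 + p.2 • θ) :=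
    (hf.comp (by fun_prop)).stronglyMeasurable
  exact hmeas.integral_prod_right'.measurable

end SectionIntegral

namespace GammaConcaveDensity

variable {E : Type*} [NormedAddCommGroup E] [NormedSpace ℝ E] [MeasurableSpace E] [BorelSpace E]
  {γ : ℝ} {f : E → ℝ} {μ : Measure E} {θ : E} {S : Set ℝ}

variable [FiniteDimensional ℝ E] [μ.IsAddHaarMeasure]

lemma integrable_line (hf : GammaConcaveDensity γ f μ) (hθ : θ ≠ 0) (x : E) :
    Integrable fun s : ℝ ↦ f (x + s • θ) := by
  have hcont : ContinuousOn (fun s : ℝ ↦ f (x + s • θ)) {s | x + s • θ ∈ tsupport f} :=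
    hf.continuousOn.comp (by fun_prop) fun _ h ↦ h
  have hcompact : IsCompact {s : ℝ | x + s • θ ∈ tsupport f} :=
    (isClosedEmbedding_add_smul hθ x).isCompact_preimage hf.isCompact_tsupport
  have hsupp : (Function.support fun s : ℝ ↦ f (x + s • θ)) ⊆ {s | x + s • θ ∈ tsupport f} :=
    fun s hs ↦ subset_tsupport f hs
  exact (integrableOn_iff_integrable_of_support_subset hsupp).1
    (hcont.integrableOn_compact hcompact)

lemma rpow_sectionIntegral_add_le (hf : GammaConcaveDensity γ f μ) (hθ : θ ≠ 0)
    (hS : MeasurableSet S) (S_convex : Convex ℝ S) {x y : E} (hx : 0 < sectionIntegral f θ S x)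
    (hy : 0 < sectionIntegral f θ S y) {a b : ℝ} (ha : 0 < a) (hb : 0 < b) (hab : a + b = 1) :
    a * sectionIntegral f θ S x ^ (γ / (γ + 1)) + b * sectionIntegral f θ S y ^ (γ / (γ + 1)) ≤
      sectionIntegral f θ S (a • x + b • y) ^ (γ / (γ + 1)) := by
  set h : E → ℝ → ℝ := fun x ↦ S.indicator fun s ↦ f (x + s • θ)
  have integral_h (x : E) : ∫ s, h x s = sectionIntegral f θ S x := integral_indicator hS
  have h_nonneg (x : E) : 0 ≤ h x := indicator_nonneg fun _ _ ↦ hf.nonneg _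
  have h_bdd (x : E) : BddAbove (range (h x)) := by
    obtain ⟨M, hM⟩ := hf.bddAbove_range
    exact ⟨M, forall_mem_range.2 fun s ↦
      (indicator_le_self' (fun _ _ ↦ hf.nonneg _) s).trans (hM (mem_range_self _))⟩
  have mem_of_pos {x : E} {t s : ℝ} (ht : 0 ≤ t) (hs : t < h x s) : s ∈ S ∧ t < f (x + s • θ) := by
    by_cases hsS : s ∈ S
    · exact ⟨hsS, by simpa only [h, indicator_of_mem hsS] using hs⟩
    · simp only [h, indicator_of_notMem hsS] at hs
      exact absurd hs ht.not_gt
  have h_conn (x : E) (t : ℝ) (ht : 0 < t) : OrdConnected {s | t < h x s} := by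
    have superlevel : {s | t < h x s} = S ∩ {s | x + s • θ ∈ {y | t < f y}} := by
      ext s
      refine ⟨mem_of_pos ht.le, fun hs ↦ ?_⟩
      simpa only [h, mem_ofPred_eq, indicator_of_mem hs.1] using hs.2
    rw [superlevel]
    exact (S_convex.inter (convex_preimage_add_smul (hf.convex_superlevel ht.le) x)).ordConnected
  rw [← integral_h] at hx hy
  simp only [← integral_h]
  refine borell_brascamp_lieb_s1 hf.exponent_pos ha hb (h_nonneg x) (h_nonneg y) (h_nonneg _)
    (h_bdd x) (h_bdd y) ((hf.integrable_line hθ _).indicator hS) (h_conn _) ?_ hx hy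
  intro s₀ s₁ hs₀ hs₁
  obtain ⟨hs₀S, hfs₀⟩ := mem_of_pos le_rfl hs₀
  obtain ⟨hs₁S, hfs₁⟩ := mem_of_pos le_rfl hs₁
  have hmem : a * s₀ + b * s₁ ∈ S := S_convex hs₀S hs₁S ha.le hb.le hab
  simp only [h, indicator_of_mem hs₀S, indicator_of_mem hs₁S, indicator_of_mem hmem]
  rw [show a • x + b • y + (a * s₀ + b * s₁) • θ = a • (x + s₀ • θ) + b • (y + s₁ • θ) by module]
  exact hf.concaveOn.2 hfs₀.ne' hfs₁.ne' ha.le hb.le hab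

lemma concaveOn_sectionIntegral_rpow (hf : GammaConcaveDensity γ f μ) (hθ : θ ≠ 0)
    (hS : MeasurableSet S) (S_convex : Convex ℝ S) :
    ConcaveOn ℝ {x | 0 < sectionIntegral f θ S x}
      fun x ↦ sectionIntegral f θ S x ^ (γ / (γ + 1)) := by
  refine concaveOn_iff_forall_pos.2 ⟨convex_iff_forall_pos.2 fun x hx y hy a b ha hb hab ↦ ?_,
    fun x hx y hy a b ha hb hab ↦
      hf.rpow_sectionIntegral_add_le hθ hS S_convex hx hy ha hb hab⟩
  have hpos : 0 < sectionIntegral f θ S (a • x + b • y) ^ (γ / (γ + 1)) := by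
    refine lt_of_lt_of_le ?_
      (hf.rpow_sectionIntegral_add_le hθ hS S_convex hx hy ha hb hab)
    rw [mem_ofPred_eq] at hx hy
    positivity
  refine (sectionIntegral_nonneg hf.nonneg _ _ _).lt_of_ne' fun hzero ↦ hpos.ne' ?_
  have := hf.exponent_pos
  rw [hzero, Real.zero_rpow (by positivity)]

lemma sectionIntegral_pos (hf : GammaConcaveDensity γ f μ) (hθ : θ ≠ 0) (hS : Ioi 0 ⊆ S) {x : E}
    (hx : x ∈ interior (tsupport f)) : 0 < sectionIntegral f θ S x := by
  rw [sectionIntegral, setIntegral_pos_iff_support_of_nonneg_ae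
    (f := fun s ↦ f (x + s • θ)) (.of_forall fun _ ↦ hf.nonneg _)
    (hf.integrable_line hθ x).integrableOn]
  have hopen : IsOpen {s : ℝ | x + s • θ ∈ interior (tsupport f)} :=
    isOpen_interior.preimage (by fun_prop)
  have hzero : {s : ℝ | x + s • θ ∈ interior (tsupport f)} ∈ nhds 0 :=
    hopen.mem_nhds (by simpa using hx)
  have hne : ({s : ℝ | x + s • θ ∈ interior (tsupport f)} ∩ Ioi 0).Nonempty :=
    (mem_closure_iff_nhds.1 (by simp : (0 : ℝ) ∈ closure (Ioi 0)) _ hzero)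
  exact ((hopen.inter isOpen_Ioi).measure_pos volume hne).trans_le
    (measure_mono (inter_subset_inter (fun s hs ↦ (hf.pos_of_mem_interior hs).ne') hS))

open scoped Pointwise in
lemma bddAbove_range_sectionIntegral (hf : GammaConcaveDensity γ f μ) (hθ : θ ≠ 0) (S : Set ℝ) :
    BddAbove (range (sectionIntegral f θ S)) := by
  obtain ⟨M, hM⟩ := hf.bddAbove_range
  have hM₀ : 0 ≤ M := (hf.nonneg 0).trans (hM (mem_range_self 0))
  set I : Set ℝ := (fun s ↦ s • θ) ⁻¹' (tsupport f - tsupport f)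
  have I_compact : IsCompact I := (isClosedEmbedding_smul_left hθ).isCompact_preimage <| by
    rw [sub_eq_add_neg]
    exact hf.isCompact_tsupport.add hf.isCompact_tsupport.neg
  have univ_le {x : E} (hx : x ∈ tsupport f) :
      sectionIntegral f θ univ x ≤ ∫ s, I.indicator (fun _ ↦ M) s := by
    rw [sectionIntegral_univ]
    refine integral_mono (hf.integrable_line hθ x) ((integrable_indicator_iff
      I_compact.measurableSet).2 (integrableOn_const I_compact.measure_ne_top)) fun s ↦ ?_
    by_cases hs : s ∈ I
    · rw [indicator_of_mem hs]
      exact hM (mem_range_self _)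
    · rw [indicator_of_notMem hs]
      exact (image_eq_zero_of_notMem_tsupport fun h ↦
        hs (mem_sub.2 ⟨_, h, x, hx, add_sub_cancel_left _ _⟩)).le
  refine ⟨∫ s, I.indicator (fun _ ↦ M) s, forall_mem_range.2 fun x ↦ ?_⟩
  calc sectionIntegral f θ S x ≤ sectionIntegral f θ univ x := by
        rw [sectionIntegral_univ]
        exact setIntegral_le_integral (hf.integrable_line hθ x) (.of_forall fun _ ↦ hf.nonneg _)
    _ ≤ _ := ?_
  by_cases hx : ∃ s : ℝ, x + s • θ ∈ tsupport f
  · obtain ⟨s, hs⟩ := hx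
    exact sectionIntegral_univ_add_smul f θ x s ▸ univ_le hs
  · have hzero (s : ℝ) : f (x + s • θ) = 0 :=
      image_eq_zero_of_notMem_tsupport fun h ↦ hx ⟨s, h⟩
    simp only [sectionIntegral_univ, hzero, integral_zero]
    exact integral_nonneg (indicator_nonneg fun _ _ ↦ hM₀)

lemma integral_mul_sectionIntegral_rpow (hf : GammaConcaveDensity γ f μ) (hθ : θ ≠ 0) {β : ℝ}
    (hβ : 0 < β) (x : E) :
    ∫ s : ℝ, f (x + s • θ) * sectionIntegral f θ (Ioi 0) (x + s • θ) ^ β =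
      sectionIntegral f θ univ x ^ (1 + β) / (1 + β) := by
  simp_rw [sectionIntegral_Ioi_add_smul, sectionIntegral_univ]
  by_cases hx : ∃ s : ℝ, x + s • θ ∈ tsupport f
  · obtain ⟨a, b, hab, hmem⟩ :=
      exists_add_smul_mem_iff_mem_Icc hf.isCompact_tsupport hf.convex_tsupport hθ hx
    exact integral_mul_integral_Ioi_rpow hab (hf.integrable_line hθ x)
      (hf.continuousOn.comp (by fun_prop) fun s hs ↦ (hmem s).2 hs)
      (fun s hs ↦ (hmem s).1 (subset_tsupport f hs)) hβ
  · have hzero (s : ℝ) : f (x + s • θ) = 0 :=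
      image_eq_zero_of_notMem_tsupport fun h ↦ hx ⟨s, h⟩
    simp [hzero, Real.zero_rpow (by linarith : 1 + β ≠ 0)]

lemma hasDerivAt_sectionIntegral (hf : GammaConcaveDensity γ f μ) (hθ : θ ≠ 0) {x : E}
    (hx : x ∈ interior (tsupport f)) :
    HasDerivAt (fun s : ℝ ↦ sectionIntegral f θ (Ioi 0) (x + s • θ)) (-f x) 0 := by
  simp_rw [sectionIntegral_Ioi_add_smul]
  have hcont : ContinuousAt (fun s : ℝ ↦ f (x + s • θ)) 0 := by
    refine ContinuousAt.comp (g := f) ?_ (by fun_prop)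
    simpa using hf.continuousOn.continuousAt (mem_interior_iff_mem_nhds.1 hx)
  simpa using hasDerivAt_integral_Ioi (hf.integrable_line hθ x) hcont

end GammaConcaveDensity

section Slicing

variable {E : Type*} [NormedAddCommGroup E] [NormedSpace ℝ E] [FiniteDimensional ℝ E]
  {φ : E →L[ℝ] ℝ} {θ : E}

lemma finrank_ker_add_one (hφ : φ θ = 1) : Module.finrank ℝ φ.ker + 1 = Module.finrank ℝ E :=
  Module.Dual.finrank_ker_add_one_of_ne_zero fun h ↦
    one_ne_zero (hφ.symm.trans (LinearMap.congr_fun h θ))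

variable [MeasurableSpace E] [BorelSpace E]

lemma measurableEmbedding_coe_add_smul (hφ : φ θ = 1) :
    MeasurableEmbedding fun p : ℝ × φ.ker ↦ (p.2 : E) + p.1 • θ := by
  have h := (ContinuousLinearEquiv.equivOfRightInverse φ (.toSpanSingleton ℝ θ)
    fun s ↦ by simp [hφ]).symm.toHomeomorph.measurableEmbedding
  convert h using 2
  exact add_comm _ _

lemma exists_measurePreserving_coe_add_smul (hφ : φ θ = 1) (μ : Measure E) [μ.IsAddHaarMeasure]
    (ν : Measure φ.ker) [ν.IsAddHaarMeasure] : ∃ c : NNReal, 0 < c ∧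
      MeasurePreserving (fun p : ℝ × φ.ker ↦ (p.2 : E) + p.1 • θ) (volume.prod ν) (c • μ) := by
  set T := (ContinuousLinearEquiv.equivOfRightInverse φ (.toSpanSingleton ℝ θ)
    fun s ↦ by simp [hφ]).symm
  have hT : (fun p : ℝ × φ.ker ↦ (p.2 : E) + p.1 • θ) = T := funext fun _ ↦ add_comm _ _
  set ρ : Measure E := Measure.map T (volume.prod ν)
  have : ρ.IsAddHaarMeasure := T.isAddHaarMeasure_map _
  refine ⟨ρ.addHaarScalarFactor μ, ρ.addHaarScalarFactor_pos_of_isAddHaarMeasure μ, ?_, ?_⟩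
  · fun_prop
  · rw [hT]
    exact ρ.isAddLeftInvariant_eq_smul μ

end Slicing

section RadialMoments

lemma rpow_add_mul_rpow_mul_sub_le {q u v : ℝ} (hq : 1 ≤ q) (hu : 0 < u) (hv : 0 ≤ v) :
    u ^ q + q * u ^ (q - 1) * (v - u) ≤ v ^ q := by
  have hbernoulli : 1 + q * (v / u - 1) ≤ (v / u) ^ q := by
    have := one_add_mul_self_le_rpow_one_add (s := v / u - 1)
      (by linarith [div_nonneg hv hu.le]) hq
    rwa [add_sub_cancel] at this
  calc u ^ q + q * u ^ (q - 1) * (v - u) = (1 + q * (v / u - 1)) * u ^ q := by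
        rw [Real.rpow_sub_one hu.ne']
        field_simp
    _ ≤ (v / u) ^ q * u ^ q := by gcongr
    _ = v ^ q := by rw [← Real.mul_rpow (by positivity) hu.le, div_mul_cancel₀ _ hu.ne']

lemma le_nat_mul_of_forall_pow_mul_le {d : ℕ} {A X : ℝ} (hA : 0 ≤ A)
    (h : ∀ t ∈ Ioo (0 : ℝ) 1, t ^ d * (A + (1 - t) * X) ≤ A) : X ≤ d * A := by
  have key : ∀ t ∈ Ioo (0 : ℝ) 1, t ^ d * X ≤ d * A := fun t ht ↦ by
    have hbernoulli : 1 + d * (t - 1) ≤ t ^ d := by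
      simpa using one_add_mul_le_pow (a := t - 1) (by linarith [ht.1]) d
    have : (1 - t) * (t ^ d * X) ≤ (1 - t) * (d * A) := by
      nlinarith [h t ht, mul_le_mul_of_nonneg_right hbernoulli hA]
    exact le_of_mul_le_mul_left this (sub_pos.2 ht.2)
  have hlim : Filter.Tendsto (fun t : ℝ ↦ t ^ d * X) (nhdsWithin 1 (Iio 1)) (nhds X) :=
    (Continuous.tendsto' (by fun_prop) 1 X (by simp)).mono_left nhdsWithin_le_nhds
  exact le_of_tendsto hlim (Filter.eventually_of_mem (Ioo_mem_nhdsLT one_pos) key)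

lemma mul_integral_rpow_le_mul_integral_rpow_add_one {W : Type*} [NormedAddCommGroup W]
    [NormedSpace ℝ W] [FiniteDimensional ℝ W] [MeasurableSpace W] [BorelSpace W] (ν : Measure W)
    [ν.IsAddHaarMeasure] {N : W → ℝ} {p : ℝ} (hp : 0 < p) (hN : 0 ≤ N) (hN₀ : 0 < N 0)
    (hconc : ConcaveOn ℝ {w | 0 < N w} N) (hint : Integrable (fun w ↦ N w ^ p) ν)
    (hint' : Integrable (fun w ↦ N w ^ (p + 1)) ν) :
    (p + 1) * (N 0 * ∫ w, N w ^ p ∂ν) ≤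
      (Module.finrank ℝ W + p + 1) * ∫ w, N w ^ (p + 1) ∂ν := by
  set A := ∫ w, N w ^ (p + 1) ∂ν
  set B := ∫ w, N w ^ p ∂ν
  suffices (p + 1) * (N 0 * B - A) ≤ Module.finrank ℝ W * A by linarith
  refine le_nat_mul_of_forall_pow_mul_le (integral_nonneg fun w ↦ Real.rpow_nonneg (hN w) _)
    fun t ⟨ht₀, ht₁⟩ ↦ ?_
  have pointwise (w : W) : N w ^ (p + 1) + (1 - t) * ((p + 1) * (N 0 * N w ^ p - N w ^ (p + 1))) ≤
      N (t • w) ^ (p + 1) := by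
    rcases (hN w).eq_or_lt with hw | hw
    · simp only [← hw, Pi.zero_apply, Real.zero_rpow hp.ne',
        Real.zero_rpow (by linarith : p + 1 ≠ 0), mul_zero, sub_zero, add_zero]
      exact Real.rpow_nonneg (hN _) _
    · rw [Pi.zero_apply] at hw
      have hv : 0 ≤ (1 - t) * N 0 + t * N w :=
        add_nonneg (mul_nonneg (sub_nonneg.2 ht₁.le) hN₀.le) (mul_nonneg ht₀.le hw.le)
      have hconc_t : (1 - t) * N 0 + t * N w ≤ N (t • w) := by
        simpa using hconc.2 hN₀ hw (sub_nonneg.2 ht₁.le) ht₀.le (sub_add_cancel 1 t)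
      calc _ = N w ^ (p + 1) + (p + 1) * N w ^ (p + 1 - 1) * ((1 - t) * N 0 + t * N w - N w) := by
            rw [add_sub_cancel_right, Real.rpow_add_one hw.ne']
            ring
        _ ≤ ((1 - t) * N 0 + t * N w) ^ (p + 1) :=
            rpow_add_mul_rpow_mul_sub_le (by linarith) hw hv
        _ ≤ N (t • w) ^ (p + 1) := Real.rpow_le_rpow hv hconc_t (by linarith)
  have int_diff : Integrable (fun w ↦ N 0 * N w ^ p - N w ^ (p + 1)) ν :=
    (hint.const_mul _).sub hint'
  have integrated : A + (1 - t) * ((p + 1) * (N 0 * B - A)) ≤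
      (t ^ Module.finrank ℝ W)⁻¹ * A := by
    have h := integral_mono (hint'.add ((int_diff.const_mul (p + 1)).const_mul (1 - t)))
      (hint'.comp_smul ht₀.ne') pointwise
    rwa [Pi.add_def, integral_add hint' ((int_diff.const_mul (p + 1)).const_mul (1 - t)),
      integral_const_mul, integral_const_mul, integral_sub (hint.const_mul _) hint',
      integral_const_mul, Measure.integral_comp_smul ν (fun w ↦ N w ^ (p + 1)) t,
      abs_of_pos (by positivity), smul_eq_mul] at h
  calc _ ≤ t ^ Module.finrank ℝ W * ((t ^ Module.finrank ℝ W)⁻¹ * A) := by gcongr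
    _ = A := mul_inv_cancel_left₀ (by positivity) A

end RadialMoments

namespace GammaConcaveDensity

variable {E : Type*} [NormedAddCommGroup E] [NormedSpace ℝ E] [MeasurableSpace E] [BorelSpace E]
  [FiniteDimensional ℝ E] {γ : ℝ} {f : E → ℝ} {μ : Measure E} [μ.IsAddHaarMeasure] {θ : E}

lemma integrable_mul_sectionIntegral_rpow (hf : GammaConcaveDensity γ f μ) (hθ : θ ≠ 0)
    (S : Set ℝ) {β : ℝ} (hβ : 0 ≤ β) :
    Integrable (fun x ↦ f x * sectionIntegral f θ S x ^ β) μ := by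
  obtain ⟨C, hC⟩ := hf.bddAbove_range_sectionIntegral hθ S
  refine hf.integrable.mul_bdd (c := C ^ β)
    ((measurable_sectionIntegral hf.measurable θ S).pow_const β).aestronglyMeasurable
    (.of_forall fun x ↦ ?_)
  have hG := sectionIntegral_nonneg hf.nonneg θ S x
  rw [Real.norm_of_nonneg (Real.rpow_nonneg hG β)]
  exact Real.rpow_le_rpow hG (hC (mem_range_self x)) hβ

/-- On a hyperplane transversal to `θ`, the full sections `M` of `f` have `∫ M ∝ ∫ f` and, by
integrating the derivative of `G ^ (1 + β)` along each line, `∫ M ^ (1 + β) ∝ ∫ f * G ^ β`. -/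
lemma exists_integral_sectionIntegral_ker (hf : GammaConcaveDensity γ f μ) {φ : E →L[ℝ] ℝ}
    (hφ : φ θ = 1) (ν : Measure φ.ker) [ν.IsAddHaarMeasure] {β : ℝ} (hβ : 0 < β) :
    ∃ c : ℝ, 0 < c ∧ Integrable (fun w : φ.ker ↦ sectionIntegral f θ univ w) ν ∧
      Integrable (fun w : φ.ker ↦ sectionIntegral f θ univ w ^ (1 + β)) ν ∧
      ∫ w : φ.ker, sectionIntegral f θ univ w ∂ν = c * ∫ x, f x ∂μ ∧
      ∫ w : φ.ker, sectionIntegral f θ univ w ^ (1 + β) ∂ν =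
        (1 + β) * (c * ∫ x, f x * sectionIntegral f θ (Ioi 0) x ^ β ∂μ) := by
  have hθ : θ ≠ 0 := by
    rintro rfl
    simp at hφ
  obtain ⟨c, hc, hT⟩ := exists_measurePreserving_coe_add_smul hφ μ ν
  have hemb := measurableEmbedding_coe_add_smul hφ
  have slice {g : E → ℝ} (hg : Integrable g μ) :
      Integrable (fun w : φ.ker ↦ ∫ s : ℝ, g (w + s • θ)) ν ∧
        ∫ w : φ.ker, (∫ s : ℝ, g (w + s • θ)) ∂ν = c * ∫ x, g x ∂μ := by
    have hgT : Integrable (fun p : ℝ × φ.ker ↦ g (p.2 + p.1 • θ)) (volume.prod ν) :=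
      (hT.integrable_comp_emb hemb).2 hg.smul_measure_nnreal
    refine ⟨hgT.integral_prod_right, ?_⟩
    rw [← integral_prod_symm _ hgT, hT.integral_comp hemb g, integral_smul_nnreal_measure]
    rfl
  have hM := slice hf.integrable
  have hG := slice (hf.integrable_mul_sectionIntegral_rpow hθ (Ioi 0) hβ.le)
  simp only [← sectionIntegral_univ] at hM
  simp only [hf.integral_mul_sectionIntegral_rpow hθ hβ, integral_div] at hG
  refine ⟨c, hc, hM.1, ?_, hM.2, ?_⟩
  · simpa [div_mul_cancel₀ _ (by positivity : 1 + β ≠ 0)] using hG.1.mul_const (1 + β)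
  · rw [← hG.2, mul_div_cancel₀ _ (by positivity)]

lemma mul_sectionIntegral_rpow_mul_integral_le (hf : GammaConcaveDensity γ f μ) (hθ : θ ≠ 0)
    (hzero : (0 : E) ∈ interior (tsupport f)) :
    (γ + 1) / (γ * Module.finrank ℝ E + γ + 1) * sectionIntegral f θ univ 0 ^ (γ / (γ + 1)) *
      ∫ x, f x ∂μ ≤ ∫ x, f x * sectionIntegral f θ (Ioi 0) x ^ (γ / (γ + 1)) ∂μ := by
  have hγ := hf.exponent_pos
  set β := γ / (γ + 1) with hβ_def
  have hβ : 0 < β := by positivity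
  obtain ⟨φ, hφ⟩ := SeparatingDual.exists_eq_one (R := ℝ) hθ
  obtain ⟨c, hc, hM, hM', M_eq, M'_eq⟩ := hf.exists_integral_sectionIntegral_ker hφ
    (Measure.addHaar : Measure φ.ker) hβ
  set M : φ.ker → ℝ := fun w ↦ sectionIntegral f θ univ w
  have M_nonneg : 0 ≤ M := fun w ↦ sectionIntegral_nonneg hf.nonneg _ _ _
  have M_zero : M 0 = sectionIntegral f θ univ 0 := by simp only [M, ZeroMemClass.coe_zero]
  have rpow_pos_iff (w : φ.ker) : 0 < M w ^ β ↔ 0 < M w := by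
    refine ⟨fun h ↦ (M_nonneg w).lt_of_ne' fun h₀ ↦ h.ne' ?_, fun h ↦ Real.rpow_pos_of_pos h β⟩
    rw [h₀, Pi.zero_apply, Real.zero_rpow hβ.ne']
  have rpow_one (w : φ.ker) : (M w ^ β) ^ (1 / β) = M w := by
    rw [one_div, Real.rpow_rpow_inv (M_nonneg w) hβ.ne']
  have rpow_add_one (w : φ.ker) : (M w ^ β) ^ (1 / β + 1) = M w ^ (1 + β) := by
    rw [← Real.rpow_mul (M_nonneg w), mul_add, mul_one_div_cancel hβ.ne', mul_one]
  have M_conc : ConcaveOn ℝ {w | 0 < M w ^ β} fun w ↦ M w ^ β := by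
    simp only [rpow_pos_iff]
    exact (hf.concaveOn_sectionIntegral_rpow hθ .univ convex_univ).comp_linearMap φ.ker.subtype
  have M_zero_pos : 0 < M 0 ^ β :=
    (rpow_pos_iff 0).2 (M_zero ▸ hf.sectionIntegral_pos hθ (subset_univ _) hzero)
  have radial := mul_integral_rpow_le_mul_integral_rpow_add_one Measure.addHaar
    (N := fun w ↦ M w ^ β) (by positivity : 0 < 1 / β) (fun w ↦ Real.rpow_nonneg (M_nonneg w) β)
    M_zero_pos M_conc (by simpa only [rpow_one] using hM) (by simpa only [rpow_add_one] using hM')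
  simp only [rpow_one, rpow_add_one] at radial
  rw [M_eq, M'_eq, M_zero] at radial
  have kappa_eq : (γ + 1) / (γ * Module.finrank ℝ E + γ + 1) =
      ((Module.finrank ℝ φ.ker + 1) * β + 1)⁻¹ := by
    rw [hβ_def, ← finrank_ker_add_one hφ, Nat.cast_add_one]
    field_simp
    ring
  rw [kappa_eq, mul_assoc, inv_mul_le_iff₀ (by positivity)]
  refine le_of_mul_le_mul_left (a := c * (1 + β) / β) ?_ (by positivity)
  calc _ = (1 / β + 1) * (sectionIntegral f θ univ 0 ^ β * (c * ∫ x, f x ∂μ)) := by field_simp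
    _ ≤ _ := radial
    _ = _ := by
      field_simp
      ring

end GammaConcaveDensity

section Supergradient

variable {E : Type*} [NormedAddCommGroup E] [NormedSpace ℝ E]

lemma exists_forall_le_add_clm_sub {U : Set E} {Φ : E → ℝ} (hΦ : ConcaveOn ℝ U Φ) (hU : IsOpen U)
    (hcont : ContinuousOn Φ U) {x₀ : E} (hx₀ : x₀ ∈ U) :
    ∃ ℓ : E →L[ℝ] ℝ, ∀ x ∈ U, Φ x ≤ Φ x₀ + ℓ (x - x₀) := by
  have hypograph_open : IsOpen {p : E × ℝ | p.1 ∈ U ∧ p.2 < Φ p.1} := by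
    have h := ((hcont.comp continuousOn_fst fun p hp ↦ hp.1).sub
      continuousOn_snd).isOpen_inter_preimage (hU.prod isOpen_univ) (isOpen_Ioi (a := (0 : ℝ)))
    convert h using 1
    ext p
    simp
  obtain ⟨F, hF⟩ := geometric_hahn_banach_open_point hΦ.convex_strict_hypograph hypograph_open
    (by simp : (x₀, Φ x₀) ∉ {p : E × ℝ | p.1 ∈ U ∧ p.2 < Φ p.1})
  set b := F (0, 1)
  have F_apply (x : E) (t : ℝ) : F (x, t) = F (x, 0) + t * b := by
    rw [← smul_eq_mul, ← map_smul, ← map_add]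
    simp
  have hb : 0 < b := by
    have h := hF (x₀, Φ x₀ - 1) ⟨hx₀, sub_one_lt _⟩
    rw [F_apply, F_apply x₀ (Φ x₀)] at h
    linarith
  refine ⟨-(b⁻¹ • F.comp (.inl ℝ E ℝ)), fun x hx ↦ le_of_forall_lt fun t ht ↦ ?_⟩
  have h := hF (x, t) ⟨hx, ht⟩
  rw [F_apply, F_apply x₀] at h
  have hx_sub : F (x - x₀, 0) = F (x, 0) - F (x₀, 0) := by rw [← map_sub, Prod.mk_sub_mk, sub_zero]
  calc t < (F (x₀, 0) + Φ x₀ * b - F (x, 0)) / b := by rw [lt_div_iff₀ hb]; linarith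
    _ = Φ x₀ + -(b⁻¹ * F (x - x₀, 0)) := by
      rw [hx_sub]
      field_simp
      ring

end Supergradient

namespace GammaConcaveDensity

variable {E : Type*} [NormedAddCommGroup E] [NormedSpace ℝ E] [MeasurableSpace E] [BorelSpace E]
  [FiniteDimensional ℝ E] {γ : ℝ} {f : E → ℝ} {μ : Measure E} [μ.IsAddHaarMeasure] {θ : E}

lemma concaveOn_interior_sectionIntegral_rpow (hf : GammaConcaveDensity γ f μ) (hθ : θ ≠ 0) :
    ConcaveOn ℝ (interior (tsupport f))
      fun x ↦ sectionIntegral f θ (Ioi 0) x ^ (γ / (γ + 1)) :=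
  (hf.concaveOn_sectionIntegral_rpow hθ measurableSet_Ioi (convex_Ioi 0)).subset
    (fun _ hx ↦ hf.sectionIntegral_pos hθ Subset.rfl hx) hf.convex_tsupport.interior

lemma exists_eqOn_add_clm_of_mul_integral_le (hf : GammaConcaveDensity γ f μ)
    (hcent : ∫ x, f x • x ∂μ = 0) {Φ : E → ℝ} (hΦ : ConcaveOn ℝ (interior (tsupport f)) Φ)
    (hint : Integrable (fun x ↦ f x * Φ x) μ)
    (hle : Φ 0 * ∫ x, f x ∂μ ≤ ∫ x, f x * Φ x ∂μ) :
    ∃ ℓ : E →L[ℝ] ℝ, EqOn Φ (fun x ↦ Φ 0 + ℓ x) (interior (tsupport f)) := by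
  have hcont := hΦ.continuousOn isOpen_interior
  obtain ⟨ℓ, hℓ⟩ :=
    exists_forall_le_add_clm_sub hΦ isOpen_interior hcont (hf.zero_mem_interior_tsupport hcent)
  simp only [sub_zero] at hℓ
  refine ⟨ℓ, ?_⟩
  have int_affine : Integrable (fun x ↦ f x * (Φ 0 + ℓ x)) μ :=
    hf.integrable_smul (g := fun x ↦ Φ 0 + ℓ x) (by fun_prop)
  have integral_affine : ∫ x, f x * (Φ 0 + ℓ x) ∂μ = Φ 0 * ∫ x, f x ∂μ := by
    have int_ℓ : Integrable (fun x ↦ f x * ℓ x) μ := hf.integrable_smul ℓ.continuous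
    simp only [mul_add]
    rw [integral_add (hf.integrable.mul_const _) int_ℓ,
      hf.integral_mul_clm_eq_zero hcent, integral_mul_const, add_zero, mul_comm]
  have frontier_null : ∀ᵐ x ∂μ, x ∉ frontier (tsupport f) :=
    measure_eq_zero_iff_ae_notMem.1 (hf.convex_tsupport.addHaar_frontier μ)
  have gap_nonneg : ∀ᵐ x ∂μ, 0 ≤ f x * (Φ 0 + ℓ x) - f x * Φ x := by
    filter_upwards [frontier_null] with x hx
    rw [← mul_sub]
    by_cases hxK : x ∈ tsupport f
    · have hx_int : x ∈ interior (tsupport f) := by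
        by_contra h
        exact hx ⟨subset_closure hxK, h⟩
      exact mul_nonneg (hf.nonneg x) (sub_nonneg.2 (hℓ x hx_int))
    · rw [image_eq_zero_of_notMem_tsupport hxK, zero_mul]
  have gap_ae_zero := (integral_eq_zero_iff_of_nonneg_ae gap_nonneg (int_affine.sub hint)).1 <|
    le_antisymm (by rw [integral_sub int_affine hint, integral_affine]; linarith)
      (integral_nonneg_of_ae gap_nonneg)
  refine Measure.eqOn_open_of_ae_eq (μ := μ) ?_ isOpen_interior hcont (by fun_prop)
  rw [Filter.EventuallyEq, ae_restrict_iff' isOpen_interior.measurableSet]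
  filter_upwards [gap_ae_zero] with x hx hx_int
  rw [Pi.zero_apply, ← mul_sub, mul_eq_zero_iff_left (hf.pos_of_mem_interior hx_int).ne'] at hx
  exact (sub_eq_zero.1 hx).symm

lemma exists_eqOn_sectionIntegral_rpow (hf : GammaConcaveDensity γ f μ) (hθ : θ ≠ 0)
    (hcent : ∫ x, f x • x ∂μ = 0)
    (heq : sectionIntegral f θ (Ioi 0) 0 =
      ((γ + 1) / (γ * Module.finrank ℝ E + γ + 1)) ^ ((γ + 1) / γ) * sectionIntegral f θ univ 0) :
    ∃ ℓ : E →L[ℝ] ℝ, EqOn (fun x ↦ sectionIntegral f θ (Ioi 0) x ^ (γ / (γ + 1)))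
      (fun x ↦ sectionIntegral f θ (Ioi 0) 0 ^ (γ / (γ + 1)) + ℓ x) (interior (tsupport f)) := by
  have hγ := hf.exponent_pos
  refine hf.exists_eqOn_add_clm_of_mul_integral_le hcent
    (hf.concaveOn_interior_sectionIntegral_rpow hθ)
    (hf.integrable_mul_sectionIntegral_rpow hθ _ (by positivity)) ?_
  calc _ = (γ + 1) / (γ * Module.finrank ℝ E + γ + 1) *
        sectionIntegral f θ univ 0 ^ (γ / (γ + 1)) * ∫ x, f x ∂μ := by
        rw [heq, Real.mul_rpow (by positivity) (sectionIntegral_nonneg hf.nonneg _ _ _),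
          ← Real.rpow_mul (by positivity), div_mul_div_cancel₀ (by positivity),
          div_self (by positivity), Real.rpow_one]
    _ ≤ _ := hf.mul_sectionIntegral_rpow_mul_integral_le hθ (hf.zero_mem_interior_tsupport hcent)

lemma eq_rpow_of_sectionIntegral_rpow_eq (hf : GammaConcaveDensity γ f μ) (hθ : θ ≠ 0) {c : ℝ}
    {ℓ : E →L[ℝ] ℝ}
    (hℓ : ∀ x ∈ interior (tsupport f), sectionIntegral f θ (Ioi 0) x ^ (γ / (γ + 1)) = c + ℓ x)
    {x : E} (hx : x ∈ interior (tsupport f)) :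
    0 < c + ℓ x ∧ sectionIntegral f θ (Ioi 0) x = (c + ℓ x) ^ (1 / γ + 1) ∧
      f x = (1 / γ + 1) * -ℓ θ * (c + ℓ x) ^ (1 / γ) := by
  have hγ := hf.exponent_pos
  have affine_pos : 0 < c + ℓ x := hℓ x hx ▸ Real.rpow_pos_of_pos
    (hf.sectionIntegral_pos hθ Subset.rfl hx) _
  have section_eq {y : E} (hy : y ∈ interior (tsupport f)) :
      sectionIntegral f θ (Ioi 0) y = (c + ℓ y) ^ (1 / γ + 1) := by
    rw [← hℓ y hy, ← Real.rpow_mul (sectionIntegral_nonneg hf.nonneg _ _ _),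
      show γ / (γ + 1) * (1 / γ + 1) = 1 by field_simp; ring, Real.rpow_one]
  refine ⟨affine_pos, section_eq hx, ?_⟩
  have deriv_affine : HasDerivAt (fun s : ℝ ↦ c + ℓ (x + s • θ)) (ℓ θ) 0 := by
    simpa using ((((hasDerivAt_id (0 : ℝ)).mul_const (ℓ θ)).const_add (ℓ x)).const_add c)
  have deriv_rpow := deriv_affine.rpow_const (p := 1 / γ + 1)
    (.inl (by simpa using affine_pos.ne'))
  have near : ∀ᶠ s : ℝ in nhds 0, x + s • θ ∈ interior (tsupport f) :=
    ContinuousAt.eventually_mem (f := fun s : ℝ ↦ x + s • θ) (by fun_prop)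
      (isOpen_interior.mem_nhds (by simpa using hx))
  have deriv_eq := (hf.hasDerivAt_sectionIntegral hθ hx).unique
    (deriv_rpow.congr_of_eventuallyEq (near.mono fun s hs ↦ section_eq hs))
  rw [zero_smul, add_zero, add_sub_cancel_right] at deriv_eq
  linarith

lemma exists_eq_mul_sub_rpow (hf : GammaConcaveDensity γ f μ) (hθ : θ ≠ 0)
    (hcent : ∫ x, f x • x ∂μ = 0)
    (heq : sectionIntegral f θ (Ioi 0) 0 =
      ((γ + 1) / (γ * Module.finrank ℝ E + γ + 1)) ^ ((γ + 1) / γ) * sectionIntegral f θ univ 0) :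
    ∃ (φ : E →L[ℝ] ℝ) (m r : ℝ), φ θ = 1 ∧ 0 < m ∧ 0 < r ∧
      (∀ x ∈ interior (tsupport f), φ x < r) ∧
      (∀ x ∈ tsupport f, f x = m * (r - φ x) ^ (1 / γ)) ∧
      sectionIntegral f θ (Ioi 0) 0 = m / (1 / γ + 1) * r ^ (1 / γ + 1) := by
  have hγ := hf.exponent_pos
  have hzero := hf.zero_mem_interior_tsupport hcent
  obtain ⟨ℓ, hℓ⟩ := hf.exists_eqOn_sectionIntegral_rpow hθ hcent heq
  set c := sectionIntegral f θ (Ioi 0) 0 ^ (γ / (γ + 1))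
  obtain ⟨c_pos, section_zero, f_zero⟩ := hf.eq_rpow_of_sectionIntegral_rpow_eq hθ hℓ hzero
  rw [map_zero, add_zero] at c_pos section_zero f_zero
  have slope_pos : 0 < -ℓ θ := by
    have h := f_zero ▸ hf.pos_of_mem_interior hzero
    exact pos_of_mul_pos_right (pos_of_mul_pos_left h (Real.rpow_nonneg c_pos.le _)) (by positivity)
  set a := -ℓ θ with ha
  have affine_eq (x : E) : c / a - (-(a⁻¹ • ℓ)) x = (c + ℓ x) / a := by
    simp only [neg_apply, FunLike.coe_smul, Pi.smul_apply, smul_eq_mul]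
    field_simp
    ring
  have interior_eq : EqOn f (fun x ↦ (1 / γ + 1) * a ^ (1 / γ + 1) *
      (c / a - (-(a⁻¹ • ℓ)) x) ^ (1 / γ)) (interior (tsupport f)) := fun x hx ↦ by
    obtain ⟨x_pos, -, f_x⟩ := hf.eq_rpow_of_sectionIntegral_rpow_eq hθ hℓ hx
    simp only [affine_eq]
    rw [f_x, ← ha, Real.div_rpow x_pos.le slope_pos.le, Real.rpow_add_one slope_pos.ne']
    field_simp
  refine ⟨-(a⁻¹ • ℓ), (1 / γ + 1) * a ^ (1 / γ + 1), c / a, ?_, by positivity, by positivity,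
    fun x hx ↦ ?_, fun x hx ↦ ?_, ?_⟩
  · simp only [neg_apply, FunLike.coe_smul, Pi.smul_apply, smul_eq_mul]
    rw [← mul_neg, ← ha, inv_mul_cancel₀ slope_pos.ne']
  · rw [← sub_pos, affine_eq]
    exact div_pos (hf.eq_rpow_of_sectionIntegral_rpow_eq hθ hℓ hx).1 slope_pos
  · exact interior_eq.of_subset_closure hf.continuousOn (continuousOn_const.mul
      (ContinuousOn.rpow_const (by fun_prop) fun _ _ ↦ .inr (by positivity))) interior_subset
      hf.closure_interior_tsupport.ge hx
  · rw [section_zero, mul_div_cancel_left₀ _ (by positivity), Real.div_rpow c_pos.le slope_pos.le,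
      mul_div_cancel₀ _ (by positivity)]

end GammaConcaveDensity

section ConeRigidity

open scoped Pointwise

variable {E : Type*} [NormedAddCommGroup E] [NormedSpace ℝ E] {K : Set E} {φ : E →L[ℝ] ℝ}
  {u q : ℝ}

lemma div_two_mul_le_sub_of_smul_mem (hstar : StarConvex ℝ 0 K) (hu : 0 ≤ u) {δ s σ t : ℝ}
    (hδ : 0 ≤ δ) (ht : 0 < t) (hσ : 0 < σ) {x : E} (hx : x ∈ K) (hz : σ • x ∈ K)
    (htz : t • σ • x ∉ K) (hφ : δ ≤ u - φ (t • σ • x)) (hs : 1 / 2 < s) (hxs : x ∉ s • K) :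
    δ / (2 * t) ≤ u - φ x := by
  have hs₀ : 0 < s := by linarith
  have one_lt_mul : 1 < t * σ := by
    by_contra! h
    exact htz (smul_smul t σ x ▸ hstar.smul_mem hx (by positivity) h)
  have mul_lt_one : s * σ < 1 := by
    by_contra! h
    refine hxs ((mem_smul_set_iff_inv_smul_mem₀ hs₀.ne' K x).2 ?_)
    convert hstar.smul_mem hz (t := (s * σ)⁻¹) (by positivity) (inv_le_one_of_one_le₀ h) using 1
    rw [smul_smul]
    congr 1
    field_simp
  have hσ₂ : σ ≤ 2 := by nlinarith
  simp only [map_smul, smul_eq_mul] at hφ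
  rw [div_le_iff₀ (by positivity)]
  nlinarith

variable [MeasurableSpace E] [BorelSpace E] [FiniteDimensional ℝ E] {μ : Measure E}
  [μ.IsAddHaarMeasure]

/-- By the divergence theorem, `(n + q + 1) ∫ L ^ (q + 1) - (q + 1) L(0) ∫ L ^ q` over `K`, with
`L = u - φ`, is the flux of `L ^ (q + 1) x` through the boundary of `K`. If it vanishes, then
`∫ L ^ (q + 1)` over `t • K` has derivative `0` at `t = 1`. -/
lemma mul_setIntegral_le_setIntegral_smul (hK : IsCompact K) (hstar : StarConvex ℝ 0 K)
    (hφ : ∀ y ∈ K, φ y ≤ u) (hq : 0 < q)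
    (hmoment : (q + 1) * (u * ∫ y in K, (u - φ y) ^ q ∂μ) =
      (Module.finrank ℝ E + q + 1) * ∫ y in K, (u - φ y) ^ (q + 1) ∂μ)
    {t : ℝ} (ht : t ∈ Ioo (0 : ℝ) 1) :
    (1 + (1 - t) * Module.finrank ℝ E) * ∫ y in K, (u - φ y) ^ (q + 1) ∂μ ≤
      (t ^ Module.finrank ℝ E)⁻¹ * ∫ y in t • K, (u - φ y) ^ (q + 1) ∂μ := by
  obtain ⟨ht₀, ht₁⟩ := ht
  set n := Module.finrank ℝ E
  set A := ∫ y in K, (u - φ y) ^ (q + 1) ∂μ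
  have integrable_rpow {p : ℝ} (hp : 0 ≤ p) {g : E → ℝ} (hg : Continuous g) :
      IntegrableOn (fun y ↦ g y ^ p) K μ :=
    (hg.rpow_const fun _ ↦ .inr hp).continuousOn.integrableOn_compact hK
  have int_q := integrable_rpow (p := q) (g := fun y ↦ u - φ y) hq.le (by fun_prop)
  have int_q' := integrable_rpow (p := q + 1) (g := fun y ↦ u - φ y) (by positivity) (by fun_prop)
  have smul_subset : t • K ⊆ K := by
    rintro _ ⟨y, hy, rfl⟩
    exact hstar.smul_mem hy ht₀.le ht₁.le
  have tangent (y : E) (hy : y ∈ K) : (u - φ y) ^ (q + 1) +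
      (1 - t) * ((q + 1) * (u * (u - φ y) ^ q - (u - φ y) ^ (q + 1))) ≤
        (u - φ (t • y)) ^ (q + 1) := by
    have h_t := sub_nonneg.2 (hφ _ (smul_subset (smul_mem_smul_set hy)))
    rcases (sub_nonneg.2 (hφ y hy)).eq_or_lt with h | h
    · rw [← h, Real.zero_rpow hq.ne', Real.zero_rpow (by positivity)]
      simpa using Real.rpow_nonneg h_t (q + 1)
    · convert rpow_add_mul_rpow_mul_sub_le (by linarith : 1 ≤ q + 1) h h_t using 1
      rw [add_sub_cancel_right, Real.rpow_add_one h.ne', map_smul, smul_eq_mul]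
      ring
  have int_diff : IntegrableOn
      (fun y ↦ (1 - t) * ((q + 1) * (u * (u - φ y) ^ q - (u - φ y) ^ (q + 1)))) K μ :=
    (((int_q.const_mul u).sub int_q').const_mul _).const_mul _
  calc (1 + (1 - t) * n) * A
      = A + (1 - t) * ((q + 1) * (u * ∫ y in K, (u - φ y) ^ q ∂μ - A)) := by
        linear_combination -(1 - t) * hmoment
    _ = ∫ y in K, ((u - φ y) ^ (q + 1) +
        (1 - t) * ((q + 1) * (u * (u - φ y) ^ q - (u - φ y) ^ (q + 1)))) ∂μ := by
        rw [integral_add int_q' int_diff, integral_const_mul,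
          integral_const_mul, integral_sub (int_q.const_mul u) int_q', integral_const_mul]
    _ ≤ ∫ y in K, (u - φ (t • y)) ^ (q + 1) ∂μ :=
        setIntegral_mono_on (int_q'.add int_diff)
          (integrable_rpow (by positivity) (by fun_prop)) hK.measurableSet tangent
    _ = _ := Measure.setIntegral_comp_smul_of_pos μ (fun y ↦ (u - φ y) ^ (q + 1)) K ht₀

lemma setIntegral_sdiff_smul_le (hK : IsCompact K) (hstar : StarConvex ℝ 0 K)
    (hφ : ∀ y ∈ K, φ y ≤ u) (hq : 0 < q)
    (hmoment : (q + 1) * (u * ∫ y in K, (u - φ y) ^ q ∂μ) =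
      (Module.finrank ℝ E + q + 1) * ∫ y in K, (u - φ y) ^ (q + 1) ∂μ)
    {t : ℝ} (ht : t ∈ Ioo (0 : ℝ) 1) :
    ∫ y in K \ t • K, (u - φ y) ^ (q + 1) ∂μ ≤
      (1 - t ^ Module.finrank ℝ E) ^ 2 * ∫ y in K, (u - φ y) ^ (q + 1) ∂μ := by
  have scaled_ge := mul_setIntegral_le_setIntegral_smul hK hstar hφ hq hmoment ht
  obtain ⟨ht₀, ht₁⟩ := ht
  set n := Module.finrank ℝ E
  set A := ∫ y in K, (u - φ y) ^ (q + 1) ∂μ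
  have smul_subset : t • K ⊆ K := by
    rintro _ ⟨y, hy, rfl⟩
    exact hstar.smul_mem hy ht₀.le ht₁.le
  have int_rpow : IntegrableOn (fun y ↦ (u - φ y) ^ (q + 1)) K μ :=
    (Continuous.rpow_const (by fun_prop) fun _ ↦ .inr (by positivity)).continuousOn
      |>.integrableOn_compact hK
  rw [setIntegral_sdiff (hK.smul t).measurableSet int_rpow smul_subset]
  have A_nonneg : 0 ≤ A := setIntegral_nonneg hK.measurableSet fun y hy ↦
    Real.rpow_nonneg (sub_nonneg.2 (hφ y hy)) _
  have hbernoulli : 1 - n * (1 - t) ≤ t ^ n := by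
    have := one_add_mul_le_pow (a := t - 1) (by linarith) n
    rw [add_sub_cancel] at this
    linarith
  have tn_pos : 0 < t ^ n := by positivity
  rw [inv_mul_eq_div, le_div_iff₀ tn_pos] at scaled_ge
  nlinarith [mul_le_mul_of_nonneg_right hbernoulli (mul_nonneg tn_pos.le A_nonneg)]

lemma measureReal_inter_cone_sdiff_smul (hK : IsCompact K) (hstar : StarConvex ℝ 0 K) {C : Set E}
    (hC : MeasurableSet C) (hcone : ∀ t : ℝ, 0 < t → ∀ x ∈ C, t • x ∈ C) {t : ℝ}
    (ht : t ∈ Ioo (0 : ℝ) 1) :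
    μ.real ((K ∩ C) \ t • K) = (1 - t ^ Module.finrank ℝ E) * μ.real (K ∩ C) := by
  obtain ⟨ht₀, ht₁⟩ := ht
  have smul_C : t • C = C := by
    refine Subset.antisymm (smul_set_subset_iff.2 (hcone t ht₀)) fun x hx ↦ ?_
    exact (mem_smul_set_iff_inv_smul_mem₀ ht₀.ne' C x).2 (hcone _ (inv_pos.2 ht₀) x hx)
  have smul_inter : t • (K ∩ C) = t • K ∩ C := by rw [smul_set_inter₀ ht₀.ne', smul_C]
  have smul_subset : t • K ⊆ K :=
    smul_set_subset_iff.2 fun y hy ↦ hstar.smul_mem hy ht₀.le ht₁.le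
  have shell_eq : (K ∩ C) \ t • K = (K ∩ C) \ t • (K ∩ C) := by
    rw [smul_inter]
    ext x
    simp only [mem_sdiff, mem_inter_iff]
    tauto
  rw [shell_eq, measureReal_sdiff (smul_inter ▸ inter_subset_inter_left C smul_subset)
    ((hK.measurableSet.inter hC).const_smul₀ t)
    ((measure_mono_top inter_subset_left).mt hK.measure_ne_top)]
  simp only [measureReal_def, Measure.addHaar_smul_of_nonneg μ ht₀.le, ENNReal.toReal_mul,
    ENNReal.toReal_ofReal (pow_nonneg ht₀.le _)]
  ring

lemma measureReal_inter_cone_eq_zero [Nontrivial E] (hK : IsCompact K) (hstar : StarConvex ℝ 0 K)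
    (hφ : ∀ y ∈ K, φ y ≤ u) (hq : 0 < q)
    (hmoment : (q + 1) * (u * ∫ y in K, (u - φ y) ^ q ∂μ) =
      (Module.finrank ℝ E + q + 1) * ∫ y in K, (u - φ y) ^ (q + 1) ∂μ)
    {C : Set E} (hC : MeasurableSet C) (hcone : ∀ t : ℝ, 0 < t → ∀ x ∈ C, t • x ∈ C)
    {ε : ℝ} (hε : 0 < ε) (hlow : ∀ t ∈ Ioo (1 / 2 : ℝ) 1, ∀ x ∈ (K ∩ C) \ t • K, ε ≤ u - φ x) :
    μ.real (K ∩ C) = 0 := by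
  set n := Module.finrank ℝ E
  set A := ∫ y in K, (u - φ y) ^ (q + 1) ∂μ
  have hKm := hK.measurableSet
  have int_K : IntegrableOn (fun y ↦ (u - φ y) ^ (q + 1)) K μ :=
    (Continuous.rpow_const (by fun_prop)
      fun _ ↦ .inr (by positivity)).continuousOn.integrableOn_compact hK
  have shell_le : ∀ t ∈ Ioo (1 / 2 : ℝ) 1, ε ^ (q + 1) * μ.real (K ∩ C) ≤ (1 - t ^ n) * A := by
    rintro t ⟨ht, ht₁⟩
    have ht₀ : 0 < t := by linarith
    have htK : MeasurableSet (t • K) := (hK.smul t).measurableSet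
    have tn_lt : 0 < 1 - t ^ n :=
      sub_pos.2 (pow_lt_one₀ ht₀.le ht₁ (Module.finrank_pos (R := ℝ) (M := E)).ne')
    refine le_of_mul_le_mul_left ?_ tn_lt
    calc (1 - t ^ n) * (ε ^ (q + 1) * μ.real (K ∩ C))
        = ε ^ (q + 1) * μ.real ((K ∩ C) \ t • K) := by
          rw [measureReal_inter_cone_sdiff_smul hK hstar hC hcone ⟨ht₀, ht₁⟩]; ring
      _ ≤ ∫ y in (K ∩ C) \ t • K, (u - φ y) ^ (q + 1) ∂μ :=
          setIntegral_ge_of_const_le_real ((hKm.inter hC).diff htK)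
            ((measure_mono_top (sdiff_subset.trans inter_subset_left)).mt hK.measure_ne_top)
            (fun x hx ↦ Real.rpow_le_rpow hε.le (hlow t ⟨ht, ht₁⟩ x hx) (by positivity))
            (int_K.mono_set (sdiff_subset.trans inter_subset_left))
      _ ≤ ∫ y in K \ t • K, (u - φ y) ^ (q + 1) ∂μ :=
          setIntegral_mono_set (int_K.mono_set sdiff_subset)
            (ae_restrict_of_forall_mem (hKm.diff htK)
              fun y hy ↦ Real.rpow_nonneg (sub_nonneg.2 (hφ y hy.1)) _)
            (Filter.Eventually.of_forall fun y hy ↦ ⟨hy.1.1, hy.2⟩)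
      _ ≤ (1 - t ^ n) ^ 2 * A := setIntegral_sdiff_smul_le hK hstar hφ hq hmoment ⟨ht₀, ht₁⟩
      _ = _ := by ring
  have hlim : Filter.Tendsto (fun t : ℝ ↦ (1 - t ^ n) * A) (nhdsWithin 1 (Iio 1)) (nhds 0) :=
    (Continuous.tendsto' (by fun_prop) 1 0 (by simp)).mono_left nhdsWithin_le_nhds
  have hle := ge_of_tendsto hlim
    (Filter.eventually_of_mem (Ioo_mem_nhdsLT (by norm_num)) shell_le)
  exact le_antisymm (nonpos_of_mul_nonpos_right hle (by positivity)) measureReal_nonneg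

lemma smul_mem_of_mem_interior (hK : IsCompact K) (hstar : StarConvex ℝ 0 K)
    (hφ : ∀ y ∈ K, φ y ≤ u) (hq : 0 < q)
    (hmoment : (q + 1) * (u * ∫ y in K, (u - φ y) ^ q ∂μ) =
      (Module.finrank ℝ E + q + 1) * ∫ y in K, (u - φ y) ^ (q + 1) ∂μ)
    {y : E} (hy : y ∈ interior K) {t : ℝ} (ht : 1 < t) (hty : φ (t • y) < u) : t • y ∈ K := by
  have ht₀ : 0 < t := by linarith
  by_contra hmem
  have hy₀ : y ≠ 0 := by
    rintro rfl
    exact hmem (by simpa using interior_subset hy)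
  have : Nontrivial E := ⟨y, 0, hy₀⟩
  obtain ⟨δ, hδ, hδt⟩ := exists_between (sub_pos.2 hty)
  have hu : 0 ≤ u := by
    simpa using hφ 0 (hstar.mem ⟨y, interior_subset hy⟩)
  set B := interior K ∩ {z | δ < u - φ (t • z)} ∩ (t • ·) ⁻¹' Kᶜ
  have B_open : IsOpen B :=
    (isOpen_interior.inter (isOpen_lt (by fun_prop) (by fun_prop))).inter
      (hK.isClosed.isOpen_compl.preimage (by fun_prop))
  set C := ⋃ s ∈ Ioi (0 : ℝ), (s • ·) ⁻¹' B
  have mem_C {x : E} : x ∈ C ↔ ∃ s : ℝ, 0 < s ∧ s • x ∈ B := by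
    simp only [C, mem_iUnion₂, mem_Ioi, mem_preimage, exists_prop]
  have C_open : IsOpen C :=
    isOpen_biUnion fun s _ ↦ B_open.preimage (continuous_const_smul s)
  have C_cone : ∀ s : ℝ, 0 < s → ∀ x ∈ C, s • x ∈ C := by
    intro s hs x hx
    obtain ⟨s', hs', hx⟩ := mem_C.1 hx
    exact mem_C.2 ⟨s' / s, by positivity, by rwa [smul_smul, div_mul_cancel₀ _ hs.ne']⟩
  have B_subset : B ⊆ K ∩ C := fun z hz ↦
    ⟨interior_subset hz.1.1, mem_C.2 ⟨1, one_pos, by rwa [one_smul]⟩⟩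
  have measure_pos : 0 < μ.real (K ∩ C) :=
    ENNReal.toReal_pos ((B_open.measure_pos μ ⟨y, ⟨hy, hδt⟩, hmem⟩).trans_le
      (measure_mono B_subset)).ne' ((measure_mono_top inter_subset_left).mt hK.measure_ne_top)
  refine measure_pos.ne' (measureReal_inter_cone_eq_zero hK hstar hφ hq hmoment
    C_open.measurableSet C_cone (ε := δ / (2 * t)) (by positivity) ?_)
  rintro s ⟨hs, -⟩ x ⟨⟨hxK, hxC⟩, hxs⟩
  obtain ⟨σ, hσ, ⟨hzK, hzδ⟩, hzt⟩ := mem_C.1 hxC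
  exact div_two_mul_le_sub_of_smul_mem hstar hu hδ.le ht₀ hσ hxK (interior_subset hzK) hzt hzδ.le
    hs hxs

/-- The interior is dense in `K`, and both sides are stable under limits. -/
lemma smul_mem_of_lt (hK : IsCompact K) (hconv : Convex ℝ K) (h₀ : 0 ∈ K)
    (hint : (interior K).Nonempty) (hφ : ∀ y ∈ K, φ y ≤ u) (hq : 0 < q)
    (hmoment : (q + 1) * (u * ∫ y in K, (u - φ y) ^ q ∂μ) =
      (Module.finrank ℝ E + q + 1) * ∫ y in K, (u - φ y) ^ (q + 1) ∂μ)
    {y : E} (hy : y ∈ K) {t : ℝ} (ht : 1 < t) (hty : φ (t • y) < u) : t • y ∈ K := by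
  have y_mem_closure : y ∈ closure ({z | φ (t • z) < u} ∩ interior K) := by
    refine (isOpen_lt (by fun_prop) (by fun_prop)).inter_closure ⟨hty, ?_⟩
    rw [hconv.closure_interior_eq_closure_of_nonempty_interior hint]
    exact subset_closure hy
  rw [← hK.isClosed.closure_eq]
  exact map_mem_closure (continuous_const_smul t) y_mem_closure fun z ⟨hz, hzK⟩ ↦
    smul_mem_of_mem_interior hK (hconv.starConvex h₀) hφ hq hmoment hzK ht hz

lemma eq_convexHull_insert_zero (hK : IsCompact K) (hconv : Convex ℝ K) (h₀ : 0 ∈ K)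
    (hint : (interior K).Nonempty) (hφ : ∀ y ∈ K, φ y ≤ u) (hu : 0 < u) (hq : 0 < q)
    (hmoment : (q + 1) * (u * ∫ y in K, (u - φ y) ^ q ∂μ) =
      (Module.finrank ℝ E + q + 1) * ∫ y in K, (u - φ y) ^ (q + 1) ∂μ) :
    K = convexHull ℝ (insert 0 {y ∈ K | φ y = u}) := by
  refine Subset.antisymm (fun y hy ↦ ?_)
    (convexHull_min (insert_subset h₀ (sep_subset _ _)) hconv)
  rcases eq_or_ne y 0 with rfl | hy₀
  · exact subset_convexHull ℝ _ (mem_insert _ _)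
  have stretch {t : ℝ} (ht : 1 < t) (hty : φ (t • y) < u) : t • y ∈ K :=
    smul_mem_of_lt hK hconv h₀ hint hφ hq hmoment hy ht hty
  have φ_pos : 0 < φ y := by
    by_contra! hle
    obtain ⟨R, hR⟩ := hK.isBounded.exists_norm_le
    obtain ⟨t, ht⟩ := exists_gt (max 1 (R / ‖y‖))
    rw [max_lt_iff, div_lt_iff₀ (norm_pos_iff.2 hy₀)] at ht
    have hty := hR _ (stretch ht.1 (by rw [map_smul, smul_eq_mul]; nlinarith [ht.1]))
    rw [norm_smul, Real.norm_of_nonneg (by linarith)] at hty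
    linarith
  set t₁ := u / φ y
  have ht₁ : 1 ≤ t₁ := (one_le_div φ_pos).2 (hφ y hy)
  have φ_t₁ : φ (t₁ • y) = u := by rw [map_smul, smul_eq_mul, div_mul_cancel₀ _ φ_pos.ne']
  have t₁_mem : t₁ • y ∈ K := by
    rcases ht₁.eq_or_lt with h | h
    · rwa [← h, one_smul]
    have h_mem : t₁ ∈ closure (Ioo 1 t₁) := by
      rw [closure_Ioo h.ne]
      exact right_mem_Icc.2 h.le
    rw [← hK.isClosed.closure_eq]
    exact map_mem_closure (f := (· • y)) (by fun_prop) h_mem fun t ht ↦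
      stretch ht.1 ((map_smul φ t y).trans_lt ((lt_div_iff₀ φ_pos).1 ht.2))
  convert ((convex_convexHull ℝ (insert 0 {y ∈ K | φ y = u})).starConvex
    (subset_convexHull ℝ _ (mem_insert _ _))).smul_mem (subset_convexHull ℝ _
      (mem_insert_of_mem _ ⟨t₁_mem, φ_t₁⟩)) (t := t₁⁻¹) (by positivity)
      (inv_le_one_of_one_le₀ ht₁) using 1
  rw [smul_smul, inv_mul_cancel₀ (by positivity), one_smul]

lemma eq_convexHull_insert (hK : IsCompact K) (hconv : Convex ℝ K) {p : E} (hp : p ∈ K)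
    (hint : (interior K).Nonempty) (hφ : ∀ y ∈ K, φ y ≤ u) (hu : φ p < u) (hq : 0 < q)
    (hmoment : (q + 1) * ((u - φ p) * ∫ y in K, (u - φ y) ^ q ∂μ) =
      (Module.finrank ℝ E + q + 1) * ∫ y in K, (u - φ y) ^ (q + 1) ∂μ) :
    K = convexHull ℝ (insert p {y ∈ K | φ y = u}) := by
  set e := Homeomorph.addLeft p
  have φ_e (y : E) : u - φ p - φ y = u - φ (e y) := by
    rw [Homeomorph.coe_addLeft, map_add φ p y]
    ring
  have integral_preimage (s : ℝ) :
      ∫ y in e ⁻¹' K, (u - φ p - φ y) ^ s ∂μ = ∫ y in K, (u - φ y) ^ s ∂μ := by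
    simp only [φ_e]
    exact (measurePreserving_add_left μ p).setIntegral_preimage_emb e.measurableEmbedding
      (fun y ↦ (u - φ y) ^ s) K
  have hull := eq_convexHull_insert_zero (K := e ⁻¹' K) (φ := φ) (u := u - φ p) (q := q) (μ := μ)
    (e.isCompact_preimage.2 hK) (hconv.translate_preimage_right p) (by simpa [e] using hp)
    (by simpa only [e.preimage_interior] using hint.preimage e.surjective)
    (fun y hy ↦ by linarith [hφ _ hy, φ_e y]) (sub_pos.2 hu) hq
    (by simpa only [integral_preimage] using hmoment)
  have image_preimage : p +ᵥ e ⁻¹' K = K := e.image_preimage K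
  conv_lhs => rw [← image_preimage, hull, ← convexHull_vadd, vadd_set_insert, vadd_eq_add, add_zero]
  congr 2
  rw [← e.image_preimage {y ∈ K | φ y = u}]
  refine congrArg (e '' ·) (ext fun y ↦ and_congr_right fun _ ↦ ?_)
  constructor <;> intro h <;> linarith [φ_e y]

end ConeRigidity

section CentralChord

variable {E : Type*} [NormedAddCommGroup E] [NormedSpace ℝ E] {K : Set E} {f : E → ℝ}
  {φ : E →L[ℝ] ℝ} {θ : E} {m r q a b : ℝ}

lemma setIntegral_Icc_mul_sub_rpow (m r : ℝ) (hq : 0 < q) (hab : a ≤ b) :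
    ∫ s in Icc a b, m * (r - s) ^ q =
      m / (q + 1) * ((r - a) ^ (q + 1) - (r - b) ^ (q + 1)) := by
  rw [integral_Icc_eq_integral_Ioc, ← intervalIntegral.integral_of_le hab,
    intervalIntegral.integral_const_mul,
    intervalIntegral.integral_comp_sub_left (fun s ↦ s ^ q) r, integral_rpow (.inl (by linarith))]
  ring

lemma apply_smul_eq_indicator (hf : ∀ x, f x = m * K.indicator (fun y ↦ (r - φ y) ^ q) x)
    (hφ : φ θ = 1) (hK : ∀ s : ℝ, s • θ ∈ K ↔ s ∈ Icc a b) (s : ℝ) :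
    f (s • θ) = (Icc a b).indicator (fun s ↦ m * (r - s) ^ q) s := by
  rw [hf, ← indicator_const_mul]
  by_cases hs : s ∈ Icc a b
  · simp [indicator_of_mem hs, indicator_of_mem ((hK s).2 hs), hφ]
  · rw [indicator_of_notMem hs, indicator_of_notMem (mt (hK s).1 hs)]

lemma sectionIntegral_univ_zero_eq
    (hf : ∀ x, f x = m * K.indicator (fun y ↦ (r - φ y) ^ q) x) (hφ : φ θ = 1)
    (hK : ∀ s : ℝ, s • θ ∈ K ↔ s ∈ Icc a b) (hq : 0 < q) (hab : a ≤ b) :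
    sectionIntegral f θ univ 0 =
      m / (q + 1) * ((r - a) ^ (q + 1) - (r - b) ^ (q + 1)) := by
  simp only [sectionIntegral, setIntegral_univ, zero_add, apply_smul_eq_indicator hf hφ hK]
  rw [integral_indicator measurableSet_Icc, setIntegral_Icc_mul_sub_rpow m r hq hab]

lemma sectionIntegral_Ioi_zero_eq
    (hf : ∀ x, f x = m * K.indicator (fun y ↦ (r - φ y) ^ q) x) (hφ : φ θ = 1)
    (hK : ∀ s : ℝ, s • θ ∈ K ↔ s ∈ Icc a b) (hq : 0 < q) (ha : a ≤ 0) (hb : 0 ≤ b) :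
    sectionIntegral f θ (Ioi 0) 0 =
      m / (q + 1) * (r ^ (q + 1) - (r - b) ^ (q + 1)) := by
  have inter_eq : Ici 0 ∩ Icc a b = Icc 0 b := by
    ext s
    simp only [mem_inter_iff, mem_Ici, mem_Icc]
    exact ⟨fun h ↦ ⟨h.1, h.2.2⟩, fun h ↦ ⟨h.1, ha.trans h.1, h.2⟩⟩
  simp only [sectionIntegral, zero_add, apply_smul_eq_indicator hf hφ hK]
  rw [← integral_Ici_eq_integral_Ioi, setIntegral_indicator measurableSet_Icc, inter_eq,
    setIntegral_Icc_mul_sub_rpow m r hq hb, sub_zero]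

lemma eq_of_sectionIntegral_Ioi_zero_eq
    (hf : ∀ x, f x = m * K.indicator (fun y ↦ (r - φ y) ^ q) x) (hφ : φ θ = 1)
    (hK : ∀ s : ℝ, s • θ ∈ K ↔ s ∈ Icc a b) (hq : 0 < q) (ha : a ≤ 0) (hb : 0 ≤ b) (hbr : b ≤ r)
    (hm : 0 < m) (heq : sectionIntegral f θ (Ioi 0) 0 = m / (q + 1) * r ^ (q + 1)) : b = r := by
  rw [sectionIntegral_Ioi_zero_eq hf hφ hK hq ha hb] at heq
  have rpow_zero : (r - b) ^ (q + 1) = 0 := by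
    have := mul_left_cancel₀ (by positivity) heq
    linarith
  rw [Real.rpow_eq_zero (by linarith) (by positivity)] at rpow_zero
  linarith

lemma sectionIntegral_Ioi_eq_iff {γ : ℝ} (hγ : 0 < γ) (d : ℕ)
    (hf : ∀ x, f x = m * K.indicator (fun y ↦ (r - φ y) ^ (1 / γ)) x) (hφ : φ θ = 1)
    (hK : ∀ s : ℝ, s • θ ∈ K ↔ s ∈ Icc (-a) r) (hm : 0 < m) (ha : 0 ≤ a) (hr : 0 < r) :
    sectionIntegral f θ (Ioi 0) 0 =
        ((γ + 1) / (γ * d + γ + 1)) ^ ((γ + 1) / γ) * sectionIntegral f θ univ 0 ↔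
      a = d * γ / (γ + 1) * r := by
  have exponent_eq : (γ + 1) / γ = 1 / γ + 1 := by field_simp; ring
  rw [sectionIntegral_Ioi_zero_eq hf hφ hK (by positivity) (by linarith) hr.le,
    sectionIntegral_univ_zero_eq hf hφ hK (by positivity) (by linarith), sub_self,
    Real.zero_rpow (by positivity), sub_zero, sub_zero, sub_neg_eq_add, exponent_eq,
    mul_left_comm, mul_right_inj' (by positivity), ← Real.mul_rpow (by positivity) (by positivity),
    Real.rpow_left_inj hr.le (by positivity) (by positivity)]
  field_simp
  constructor <;> intro h <;> linarith

end CentralChord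

section ConicalSupport

variable {E : Type*} [NormedAddCommGroup E] [NormedSpace ℝ E] [MeasurableSpace E] [BorelSpace E]
  [FiniteDimensional ℝ E] {γ : ℝ} {f : E → ℝ} {μ : Measure E} [μ.IsAddHaarMeasure]
  {φ : E →L[ℝ] ℝ} {θ : E} {m r : ℝ}

namespace GammaConcaveDensity

lemma mul_setIntegral_rpow_eq (hf : GammaConcaveDensity γ f μ) (hcent : ∫ x, f x • x ∂μ = 0)
    (hm : m ≠ 0) (hr : ∀ x ∈ tsupport f, φ x ≤ r)
    (hfφ : ∀ x, f x = m * (tsupport f).indicator (fun y ↦ (r - φ y) ^ (1 / γ)) x) :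
    r * ∫ y in tsupport f, (r - φ y) ^ (1 / γ) ∂μ =
      ∫ y in tsupport f, (r - φ y) ^ (1 / γ + 1) ∂μ := by
  have hγ := hf.exponent_pos
  have weighted (g : E → ℝ) :
      ∫ x, f x * g x ∂μ = m * ∫ y in tsupport f, (r - φ y) ^ (1 / γ) * g y ∂μ := by
    rw [← integral_const_mul, ← integral_indicator (isClosed_tsupport f).measurableSet]
    congr with x
    rw [hfφ]
    by_cases hx : x ∈ tsupport f <;> simp [hx, mul_assoc]
  have int_mul : Integrable (fun x ↦ f x * φ x) μ := hf.integrable_smul φ.continuous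
  have moment : r * ∫ x, f x * 1 ∂μ = ∫ x, f x * (r - φ x) ∂μ := by
    simp only [mul_sub, mul_one]
    rw [integral_sub (hf.integrable.mul_const r) int_mul,
      hf.integral_mul_clm_eq_zero hcent, integral_mul_const, sub_zero, mul_comm]
  rw [weighted, weighted, mul_left_comm, mul_right_inj' hm] at moment
  simp only [mul_one] at moment
  rw [moment]
  refine setIntegral_congr_fun (isClosed_tsupport f).measurableSet fun y hy ↦ ?_
  exact (Real.rpow_add_one' (sub_nonneg.2 (hr y hy)) (by positivity)).symm

/-- In the equality case the centroid condition is the moment equation of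
`eq_convexHull_insert` with apex `-(n * γ / (γ + 1)) * r • θ`. -/
lemma exists_tsupport_eq_convexHull (hf : GammaConcaveDensity γ f μ) (hθ : θ ≠ 0)
    (hcent : ∫ x, f x • x ∂μ = 0)
    (heq : sectionIntegral f θ (Ioi 0) 0 =
      ((γ + 1) / (γ * Module.finrank ℝ E + γ + 1)) ^ ((γ + 1) / γ) * sectionIntegral f θ univ 0) :
    ∃ (φ : E →L[ℝ] ℝ) (m r : ℝ), φ θ = 1 ∧ 0 < m ∧ 0 < r ∧
      tsupport f = convexHull ℝ
        (insert ((-(Module.finrank ℝ E * γ / (γ + 1)) * r) • θ) {y ∈ tsupport f | φ y = r}) ∧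
      ∀ x, f x = m * (tsupport f).indicator (fun y ↦ (r - φ y) ^ (1 / γ)) x := by
  obtain ⟨φ, m, r, hφ, hm, hr, hlt, hfK, hG⟩ := hf.exists_eq_mul_sub_rpow hθ hcent heq
  have hγ := hf.exponent_pos
  have hzero := interior_subset (hf.zero_mem_interior_tsupport hcent)
  have hφr : ∀ x ∈ tsupport f, φ x ≤ r := hf.closure_interior_tsupport.symm.trans_subset <|
    closure_minimal (fun x hx ↦ (hlt x hx).le) (isClosed_le φ.continuous continuous_const)
  have hfφ (x : E) : f x = m * (tsupport f).indicator (fun y ↦ (r - φ y) ^ (1 / γ)) x := by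
    by_cases hx : x ∈ tsupport f
    · rw [indicator_of_mem hx, hfK x hx]
    · rw [indicator_of_notMem hx, mul_zero, image_eq_zero_of_notMem_tsupport hx]
  obtain ⟨a, b, hab, hchord⟩ :=
    exists_add_smul_mem_iff_mem_Icc hf.isCompact_tsupport hf.convex_tsupport hθ (x := 0)
      ⟨0, by simpa using hzero⟩
  simp only [zero_add] at hchord
  obtain ⟨ha, hb⟩ : 0 ∈ Icc a b := (hchord 0).1 (by simpa using hzero)
  have φ_smul (s : ℝ) : φ (s • θ) = s := by rw [map_smul, hφ, smul_eq_mul, mul_one]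
  have hbr : b ≤ r := φ_smul b ▸ hφr _ ((hchord b).2 (right_mem_Icc.2 hab))
  obtain rfl := eq_of_sectionIntegral_Ioi_zero_eq hfφ hφ hchord (by positivity) ha hb hbr hm hG
  obtain ⟨a, rfl⟩ : ∃ a', a = -a' := ⟨-a, (neg_neg a).symm⟩
  have ha_eq := (sectionIntegral_Ioi_eq_iff hγ _ hfφ hφ hchord hm (by linarith) hr).1 heq
  refine ⟨φ, m, b, hφ, hm, hr, ?_, hfφ⟩
  rw [neg_mul, ← ha_eq]
  refine eq_convexHull_insert (μ := μ) (q := 1 / γ) hf.isCompact_tsupport hf.convex_tsupport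
    ((hchord _).2 (left_mem_Icc.2 hab)) ⟨0, hf.zero_mem_interior_tsupport hcent⟩ hφr
    (by rw [φ_smul]; linarith) (by positivity) ?_
  rw [← hf.mul_setIntegral_rpow_eq hcent hm.ne' hφr hfφ, φ_smul, ha_eq]
  field_simp
  ring

end GammaConcaveDensity

end ConicalSupport

section SolidCone

open scoped Pointwise

variable {E : Type*} [NormedAddCommGroup E] [NormedSpace ℝ E] {φ : E →L[ℝ] ℝ} {θ : E} {a r : ℝ}

/-- The cone with apex `a • θ` over the base `r • θ + D`. The base is given by a subset of the
hyperplane `φ.ker`, whose Haar measures serve as `(n - 1)`-dimensional volume. -/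
def solidCone (θ : E) (a r : ℝ) (D : Set φ.ker) : Set E :=
  convexHull ℝ (insert (a • θ) ((fun d : φ.ker ↦ r • θ + (d : E)) '' D))

lemma coe_add_smul_mem_solidCone_iff (hφ : φ θ = 1) (har : a < r) {D : Set φ.ker}
    (hD : Convex ℝ D) (hne : D.Nonempty) (w : φ.ker) (s : ℝ) :
    (w : E) + s • θ ∈ solidCone θ a r D ↔ s ∈ Icc a r ∧ w ∈ ((s - a) / (r - a)) • D := by
  have hra : 0 < r - a := sub_pos.2 har
  have base_convex : Convex ℝ ((fun d : φ.ker ↦ r • θ + (d : E)) '' D) := by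
    rw [← image_image (fun x : E ↦ r • θ + x) Subtype.val]
    exact (hD.is_linear_image φ.ker.subtype.isLinear).translate _
  rw [solidCone, convexHull_insert (hne.image _), base_convex.convexHull_eq]
  simp only [mem_convexJoin, mem_singleton_iff, exists_eq_left, exists_mem_image]
  constructor
  · rintro ⟨d, hd, u, t, hu, ht, hut, hw⟩
    have hs : u * a + t * r = s := by
      simpa [hφ, show φ d = 0 from d.2, show φ w = 0 from w.2] using congrArg φ hw
    obtain rfl : u = 1 - t := by linarith
    have ht_eq : (s - a) / (r - a) = t := by
      rw [div_eq_iff hra.ne']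
      linarith
    refine ⟨⟨by nlinarith, by nlinarith⟩, ht_eq.symm ▸ ⟨d, hd, Subtype.ext ?_⟩⟩
    rw [← hs] at hw
    linear_combination (norm := (simp only [Submodule.coe_smul]; module)) hw
  · rintro ⟨⟨has, hsr⟩, d, hd, rfl⟩
    set t := (s - a) / (r - a)
    have ht : t ≤ 1 := (div_le_one hra).2 (by linarith)
    have hs : s = a + t * (r - a) := by
      rw [div_mul_cancel₀ _ hra.ne']
      ring
    refine ⟨d, hd, 1 - t, t, sub_nonneg.2 ht, div_nonneg (sub_nonneg.2 has) hra.le, by ring, ?_⟩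
    rw [hs, Submodule.coe_smul]
    module

lemma base_nonempty_of_zero_mem_solidCone (hφ : φ θ = 1) (ha : a ≠ 0) {D : Set φ.ker}
    (hzero : 0 ∈ solidCone θ a r D) : D.Nonempty := by
  rw [nonempty_iff_ne_empty]
  rintro rfl
  rw [solidCone, image_empty, insert_empty_eq, convexHull_singleton, mem_singleton_iff] at hzero
  exact ha (by simpa [hφ] using (congrArg φ hzero).symm)

lemma smul_mem_solidCone_iff (hφ : φ θ = 1) (ha : a < 0) (hr : 0 < r) {D : Set φ.ker}
    (hD : Convex ℝ D) (hzero : 0 ∈ solidCone θ a r D) (s : ℝ) :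
    s • θ ∈ solidCone θ a r D ↔ s ∈ Icc a r := by
  have hne := base_nonempty_of_zero_mem_solidCone hφ ha.ne hzero
  have hmem := coe_add_smul_mem_solidCone_iff hφ (ha.trans hr) hD hne 0
  simp only [Submodule.coe_zero, zero_add] at hmem
  obtain ⟨-, d, hd, hd_zero⟩ := (hmem 0).1 (by simpa using hzero)
  have ht : (0 - a) / (r - a) ≠ 0 := (div_pos (by linarith) (by linarith)).ne'
  obtain rfl : d = 0 := (smul_eq_zero.1 hd_zero).resolve_left ht
  rw [hmem]
  exact and_iff_left ⟨0, hd, smul_zero _⟩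

lemma solidCone_eq_convexHull_insert_sep {K : Set E} (hφ : φ θ = 1) :
    solidCone θ a r {d : φ.ker | r • θ + (d : E) ∈ K} =
      convexHull ℝ (insert (a • θ) {y ∈ K | φ y = r}) := by
  have image_eq : (fun d : φ.ker ↦ r • θ + (d : E)) '' {d : φ.ker | r • θ + (d : E) ∈ K} =
      {y ∈ K | φ y = r} := by
    ext y
    constructor
    · rintro ⟨d, hd, rfl⟩
      exact ⟨hd, by simp [hφ]⟩
    · rintro ⟨hy, hφy⟩
      exact ⟨⟨y - r • θ, by simp [hφ, hφy]⟩, by simpa using hy, by simp⟩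
  rw [solidCone, image_eq]

lemma le_of_mem_solidCone (hφ : φ θ = 1) (har : a ≤ r) {D : Set φ.ker} {x : E}
    (hx : x ∈ solidCone θ a r D) : φ x ≤ r := by
  refine convexHull_min ?_ (convex_halfSpace_le φ.isLinear r) hx
  rintro - (rfl | ⟨d, -, rfl⟩)
  · simpa [hφ] using har
  · simp [hφ]

end SolidCone

section HausdorffMeasure

variable {E : Type*} [NormedAddCommGroup E] [NormedSpace ℝ E] [MeasurableSpace E] [BorelSpace E]
  {W : Submodule ℝ E} {d : ℝ}

lemma setIntegral_coe_image_hausdorffMeasure {F : Type*} [NormedAddCommGroup F] [NormedSpace ℝ F]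
    (hW : IsClosed (W : Set E)) (hd : 0 ≤ d) (D : Set W) (g : E → F) :
    ∫ x in Subtype.val '' D, g x ∂μH[d] = ∫ w in D, g w ∂μH[d] := by
  have hemb : MeasurableEmbedding (Subtype.val : W → E) := .subtype_coe hW.measurableSet
  rw [← Measure.restrict_restrict_of_subset (image_subset_range _ D),
    ← isometry_subtype_coe.map_hausdorffMeasure (.inl hd), hemb.setIntegral_map,
    Subtype.val_injective.preimage_image]

end HausdorffMeasure

section BaseOfCone

open scoped Pointwise

lemma setIntegral_smul_id {W : Type*} [NormedAddCommGroup W] [NormedSpace ℝ W] [MeasurableSpace W]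
    [BorelSpace W] [FiniteDimensional ℝ W] (ν : Measure W) [ν.IsAddHaarMeasure] (D : Set W)
    {t : ℝ} (ht : 0 ≤ t) :
    ∫ w in t • D, w ∂ν = t ^ (Module.finrank ℝ W + 1) • ∫ w in D, w ∂ν := by
  rcases ht.eq_or_lt with rfl | ht
  · rw [zero_pow (by positivity), zero_smul]
    refine setIntegral_eq_zero_of_forall_eq_zero fun w hw ↦ ?_
    obtain ⟨d, -, rfl⟩ := hw
    exact zero_smul ℝ d
  · have h := Measure.setIntegral_comp_smul_of_pos ν (fun w ↦ w) D ht
    rw [integral_smul, eq_inv_smul_iff₀ (by positivity)] at h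
    rw [← h, smul_smul, pow_succ]

variable {E : Type*} [NormedAddCommGroup E] [NormedSpace ℝ E] [MeasurableSpace E] [BorelSpace E]
  [FiniteDimensional ℝ E] {φ : E →L[ℝ] ℝ} {θ : E} {a r : ℝ} {D : Set φ.ker}

lemma measure_base_pos (hφ : φ θ = 1) (ha : a < 0) (hr : 0 < r) (hD : Convex ℝ D)
    (hzero : 0 ∈ interior (solidCone θ a r D)) (ν : Measure φ.ker) [ν.IsAddHaarMeasure] :
    0 < ν D := by
  have hne := base_nonempty_of_zero_mem_solidCone hφ ha.ne (interior_subset hzero)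
  set U : Set φ.ker := Subtype.val ⁻¹' interior (solidCone θ a r D)
  have U_open : IsOpen U := isOpen_interior.preimage continuous_subtype_val
  have U_subset : U ⊆ ((0 - a) / (r - a)) • D := fun w hw ↦
    ((coe_add_smul_mem_solidCone_iff hφ (ha.trans hr) hD hne w 0).1
      (by simpa using interior_subset hw)).2
  have smul_pos := (U_open.measure_pos ν ⟨0, hzero⟩).trans_le (measure_mono U_subset)
  rw [Measure.addHaar_smul] at smul_pos
  exact pos_of_mul_pos_right smul_pos zero_le

lemma integral_slice_smul_eq {f : E → ℝ} {m q : ℝ} (hφ : φ θ = 1) (har : a < r)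
    (hD : Convex ℝ D) (hDc : IsCompact D) (hne : D.Nonempty)
    (hf : ∀ x, f x = m * (solidCone θ a r D).indicator (fun y ↦ (r - φ y) ^ q) x)
    (ν : Measure φ.ker) [ν.IsAddHaarMeasure] (s : ℝ) :
    ∫ w : φ.ker, f (w + s • θ) • w ∂ν = (Icc a r).indicator (fun s ↦ m * (r - s) ^ q *
      ((s - a) / (r - a)) ^ (Module.finrank ℝ φ.ker + 1)) s • ∫ w in D, w ∂ν := by
  by_cases hs : s ∈ Icc a r
  · set t := (s - a) / (r - a)
    have slice_eq (w : φ.ker) :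
        f (w + s • θ) • w = (t • D).indicator (fun w ↦ (m * (r - s) ^ q) • w) w := by
      have hiff := coe_add_smul_mem_solidCone_iff hφ har hD hne w s
      rw [hf]
      by_cases hw : w ∈ t • D
      · rw [indicator_of_mem hw, indicator_of_mem (hiff.2 ⟨hs, hw⟩), map_add, map_smul, hφ,
          show φ w = 0 from w.2, zero_add, smul_eq_mul, mul_one]
      · rw [indicator_of_notMem hw, indicator_of_notMem (fun h ↦ hw (hiff.1 h).2), mul_zero,
          zero_smul]
    have ht : 0 ≤ t := div_nonneg (sub_nonneg.2 hs.1) (sub_nonneg.2 har.le)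
    simp only [slice_eq]
    rw [integral_indicator (hDc.smul t).measurableSet, integral_smul, setIntegral_smul_id ν D ht,
      indicator_of_mem hs, smul_smul]
  · have slice_eq (w : φ.ker) : f (w + s • θ) = 0 := by
      rw [hf, indicator_of_notMem, mul_zero]
      exact fun h ↦ hs ((coe_add_smul_mem_solidCone_iff hφ har hD hne w s).1 h).1
    simp only [slice_eq, zero_smul, integral_zero, indicator_of_notMem hs]

lemma setIntegral_Icc_mul_rpow_mul_pow_pos {m q : ℝ} (hm : 0 < m) (hq : 0 ≤ q) (har : a < r)
    (d : ℕ) : 0 < ∫ s in Icc a r, m * (r - s) ^ q * ((s - a) / (r - a)) ^ d := by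
  rw [integral_Icc_eq_integral_Ioc, ← intervalIntegral.integral_of_le har.le]
  refine intervalIntegral.intervalIntegral_pos_of_pos_on
    (Continuous.intervalIntegrable ?_ _ _) (fun s ⟨has, hsr⟩ ↦ ?_) har
  · exact (continuous_const.mul (Continuous.rpow_const (by fun_prop) fun _ ↦ .inr hq)).mul
      (by fun_prop)
  · exact mul_pos (mul_pos hm (Real.rpow_pos_of_pos (sub_pos.2 hsr) q))
      (pow_pos (div_pos (sub_pos.2 has) (sub_pos.2 har)) d)

/-- The slices of `f • x` parallel to the base are positive multiples of `∫ w in D, w`, and their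
sum is the projection of the centroid along `θ`. -/
lemma setIntegral_base_eq_zero {f : E → ℝ} {μ : Measure E} [μ.IsAddHaarMeasure] {m q : ℝ}
    (hφ : φ θ = 1) (har : a < r) (hD : Convex ℝ D) (hDc : IsCompact D) (hne : D.Nonempty)
    (hm : 0 < m) (hq : 0 ≤ q)
    (hf : ∀ x, f x = m * (solidCone θ a r D).indicator (fun y ↦ (r - φ y) ^ q) x)
    (hint : Integrable (fun x ↦ f x • x) μ) (hcent : ∫ x, f x • x ∂μ = 0)
    (ν : Measure φ.ker) [ν.IsAddHaarMeasure] : ∫ w in D, w ∂ν = 0 := by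
  set P := φ.projKerOfRightInverse (.toSpanSingleton ℝ θ) fun s ↦ by simp [hφ]
  have P_slice (p : ℝ × φ.ker) : P (p.2 + p.1 • θ) = p.2 := by
    ext
    simp [P, hφ]
  have P_int : Integrable (fun x ↦ f x • P x) μ := by
    simpa only [map_smul] using P.integrable_comp hint
  have P_cent : ∫ x, f x • P x ∂μ = 0 := by
    simpa only [map_smul, hcent, map_zero] using P.integral_comp_comm hint
  obtain ⟨c, -, hT⟩ := exists_measurePreserving_coe_add_smul hφ μ ν
  have hemb := measurableEmbedding_coe_add_smul hφ
  have slices_int := (hT.integrable_comp_emb hemb).2 P_int.smul_measure_nnreal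
  have slices_cent := hT.integral_comp hemb fun x ↦ f x • P x
  rw [integral_smul_nnreal_measure, P_cent, smul_zero] at slices_cent
  simp only [Function.comp_def, P_slice] at slices_int slices_cent
  rw [integral_prod _ slices_int] at slices_cent
  simp only [integral_slice_smul_eq hφ har hD hDc hne hf ν] at slices_cent
  rw [integral_smul_const, integral_indicator measurableSet_Icc] at slices_cent
  exact (smul_eq_zero.1 slices_cent).resolve_left
    (setIntegral_Icc_mul_rpow_mul_pow_pos hm hq har _).ne'

end BaseOfCone

section EqualityCase

lemma finrank_sub_one_eq_finrank_ker {E : Type*} [NormedAddCommGroup E] [NormedSpace ℝ E]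
    [FiniteDimensional ℝ E] {φ : E →L[ℝ] ℝ} {θ : E} (hφ : φ θ = 1) :
    (Module.finrank ℝ E : ℝ) - 1 = Module.finrank ℝ φ.ker := by
  rw [← finrank_ker_add_one hφ, Nat.cast_add_one, add_sub_cancel_right]

lemma neg_finrank_mul_neg {E : Type*} [NormedAddCommGroup E] [NormedSpace ℝ E]
    [FiniteDimensional ℝ E] {φ : E →L[ℝ] ℝ} {θ : E} {γ r : ℝ} (hγ : 0 < γ) (hφ : φ θ = 1)
    (hr : 0 < r) : -(Module.finrank ℝ E * γ / (γ + 1)) * r < 0 := by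
  have hrank := finrank_ker_add_one hφ
  have : (0 : ℝ) < Module.finrank ℝ E := by exact_mod_cast (by lia)
  rw [neg_mul]
  exact neg_neg_of_pos (by positivity)

variable {E : Type*} [NormedAddCommGroup E] [NormedSpace ℝ E] [MeasurableSpace E] [BorelSpace E]
  [FiniteDimensional ℝ E] {γ : ℝ} {f : E → ℝ} {μ : Measure E} [μ.IsAddHaarMeasure]
  {φ : E →L[ℝ] ℝ} {θ : E} {m r : ℝ} {D : Set φ.ker}

namespace GammaConcaveDensity

lemma exists_tsupport_eq_solidCone (hf : GammaConcaveDensity γ f μ) (hθ : θ ≠ 0)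
    (hcent : ∫ x, f x • x ∂μ = 0)
    (heq : sectionIntegral f θ (Ioi 0) 0 =
      ((γ + 1) / (γ * Module.finrank ℝ E + γ + 1)) ^ ((γ + 1) / γ) * sectionIntegral f θ univ 0) :
    ∃ (φ : E →L[ℝ] ℝ) (m r : ℝ) (D : Set φ.ker),
      φ θ = 1 ∧ 0 < m ∧ 0 < r ∧ Convex ℝ D ∧ IsCompact D ∧
      tsupport f = solidCone θ (-(Module.finrank ℝ E * γ / (γ + 1)) * r) r D ∧
      ∀ x, f x = m * (tsupport f).indicator (fun y ↦ (r - φ y) ^ (1 / γ)) x := by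
  obtain ⟨φ, m, r, hφ, hm, hr, hK, hfφ⟩ := hf.exists_tsupport_eq_convexHull hθ hcent heq
  refine ⟨φ, m, r, {d | r • θ + (d : E) ∈ tsupport f}, hφ, hm, hr, ?_, ?_, ?_, hfφ⟩
  · exact (hf.convex_tsupport.translate_preimage_right (r • θ)).linear_preimage φ.ker.subtype
  · have hemb : Topology.IsClosedEmbedding fun d : φ.ker ↦ r • θ + (d : E) :=
      (Homeomorph.addLeft (r • θ)).isClosedEmbedding.comp
        φ.isClosed_ker.isClosedEmbedding_subtypeVal
    exact hemb.isCompact_preimage hf.isCompact_tsupport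
  · rwa [solidCone_eq_convexHull_insert_sep hφ]

lemma sectionIntegral_Ioi_eq_of_tsupport_eq_solidCone (hf : GammaConcaveDensity γ f μ)
    (hcent : ∫ x, f x • x ∂μ = 0) (hφ : φ θ = 1) (hm : 0 < m) (hr : 0 < r) (hD : Convex ℝ D)
    (hK : tsupport f = solidCone θ (-(Module.finrank ℝ E * γ / (γ + 1)) * r) r D)
    (hfφ : ∀ x, f x = m * (tsupport f).indicator (fun y ↦ (r - φ y) ^ (1 / γ)) x) :
    sectionIntegral f θ (Ioi 0) 0 =
      ((γ + 1) / (γ * Module.finrank ℝ E + γ + 1)) ^ ((γ + 1) / γ) *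
        sectionIntegral f θ univ 0 := by
  have hγ := hf.exponent_pos
  have hzero : 0 ∈ tsupport f := interior_subset (hf.zero_mem_interior_tsupport hcent)
  have hchord (s : ℝ) :
      s • θ ∈ tsupport f ↔ s ∈ Icc (-(Module.finrank ℝ E * γ / (γ + 1) * r)) r := by
    rw [hK] at hzero ⊢
    rw [smul_mem_solidCone_iff hφ (neg_finrank_mul_neg hγ hφ hr) hr hD hzero, neg_mul]
  exact (sectionIntegral_Ioi_eq_iff hγ _ hfφ hφ hchord hm (by positivity) hr).2 rfl

lemma hausdorffMeasure_base_pos (hf : GammaConcaveDensity γ f μ) (hcent : ∫ x, f x • x ∂μ = 0)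
    (hφ : φ θ = 1) (hr : 0 < r) (hD : Convex ℝ D)
    (hK : tsupport f = solidCone θ (-(Module.finrank ℝ E * γ / (γ + 1)) * r) r D) :
    0 < μH[(Module.finrank ℝ E : ℝ) - 1] (Subtype.val '' D) := by
  rw [finrank_sub_one_eq_finrank_ker hφ,
    isometry_subtype_coe.hausdorffMeasure_image (.inl (Nat.cast_nonneg _))]
  exact measure_base_pos hφ (neg_finrank_mul_neg hf.exponent_pos hφ hr) hr hD
    (hK ▸ hf.zero_mem_interior_tsupport hcent) _

lemma setIntegral_hausdorffMeasure_base_eq_zero (hf : GammaConcaveDensity γ f μ)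
    (hcent : ∫ x, f x • x ∂μ = 0) (hφ : φ θ = 1) (hm : 0 < m) (hr : 0 < r) (hD : Convex ℝ D)
    (hDc : IsCompact D)
    (hK : tsupport f = solidCone θ (-(Module.finrank ℝ E * γ / (γ + 1)) * r) r D)
    (hfφ : ∀ x, f x = m * (tsupport f).indicator (fun y ↦ (r - φ y) ^ (1 / γ)) x) :
    ∫ x in Subtype.val '' D, x ∂μH[(Module.finrank ℝ E : ℝ) - 1] = 0 := by
  have apex_neg := neg_finrank_mul_neg hf.exponent_pos hφ hr
  have hne : D.Nonempty := base_nonempty_of_zero_mem_solidCone hφ apex_neg.ne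
    (hK ▸ interior_subset (hf.zero_mem_interior_tsupport hcent))
  have base_cent : ∫ w in D, w ∂μH[Module.finrank ℝ φ.ker] = 0 :=
    setIntegral_base_eq_zero hφ (apex_neg.trans hr) hD hDc hne hm
      (one_div_nonneg.2 hf.exponent_pos.le) (hK ▸ hfφ) (hf.integrable_smul continuous_id) hcent _
  have integrableOn_id : IntegrableOn (fun w : φ.ker ↦ w) D μH[Module.finrank ℝ φ.ker] :=
    continuousOn_id.integrableOn_compact hDc
  rw [finrank_sub_one_eq_finrank_ker hφ,
    setIntegral_coe_image_hausdorffMeasure φ.isClosed_ker (Nat.cast_nonneg _)]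
  exact (φ.ker.subtypeL.integral_comp_comm integrableOn_id).trans (by rw [base_cent, map_zero])

end GammaConcaveDensity

end EqualityCase

section Normal

variable {E : Type*} [NormedAddCommGroup E] [InnerProductSpace ℝ E]

lemma exists_unit_eq_inv_inner_smul_innerSL [CompleteSpace E] {φ : E →L[ℝ] ℝ} {θ : E}
    (hφ : φ θ = 1) :
    ∃ ξ : E, ‖ξ‖ = 1 ∧ 0 < ⟪θ, ξ⟫ ∧ φ = ⟪θ, ξ⟫⁻¹ • innerSL ℝ ξ := by
  obtain ⟨v, rfl⟩ := (InnerProductSpace.toDual ℝ E).surjective φ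
  rw [InnerProductSpace.toDual_apply_apply] at hφ
  have hv : 0 < ‖v‖ := norm_pos_iff.2 fun h ↦ by simp [h] at hφ
  have inner_eq : ⟪θ, ‖v‖⁻¹ • v⟫ = ‖v‖⁻¹ := by
    rw [inner_smul_right, real_inner_comm, hφ, mul_one]
  refine ⟨‖v‖⁻¹ • v, norm_smul_inv_norm (norm_pos_iff.1 hv), ?_, ?_⟩
  · rw [inner_eq]
    positivity
  · ext x
    simp [inner_eq, hv.ne']

lemma mem_ker_inv_inner_smul_innerSL {θ ξ : E} (hξ : 0 < ⟪θ, ξ⟫) (x : E) :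
    x ∈ (⟪θ, ξ⟫⁻¹ • innerSL ℝ ξ).ker ↔ ⟪x, ξ⟫ = 0 := by
  rw [LinearMap.mem_ker, ContinuousLinearMap.coe_coe, smul_apply, innerSL_apply_apply,
    smul_eq_zero_iff_right (inv_ne_zero hξ.ne'), real_inner_comm]

lemma indicator_inner_rpow_eq {K : Set E} {θ ξ : E} {r : ℝ} (q : ℝ) (hξ : 0 < ⟪θ, ξ⟫)
    (hK : ∀ y ∈ K, (⟪θ, ξ⟫⁻¹ • innerSL ℝ ξ) y ≤ r) (x : E) :
    K.indicator (fun y ↦ (-⟪y, ξ⟫ + r * ⟪θ, ξ⟫) ^ q) x =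
      ⟪θ, ξ⟫ ^ q * K.indicator (fun y ↦ (r - (⟪θ, ξ⟫⁻¹ • innerSL ℝ ξ) y) ^ q) x := by
  by_cases hx : x ∈ K
  · rw [indicator_of_mem hx, indicator_of_mem hx,
      ← Real.mul_rpow hξ.le (sub_nonneg.2 (hK x hx))]
    congr 1
    rw [smul_apply, innerSL_apply_apply, real_inner_comm, smul_eq_mul]
    field_simp
    ring
  · simp [hx]

end Normal

lemma concaveOn_support_rpow {E : Type*} [AddCommGroup E] [Module ℝ E] {f : E → ℝ} {γ : ℝ}
    (hγ : 0 < γ) (hf_nonneg : ∀ x, 0 ≤ f x)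
    (hf : ∀ x y : E, f x ≠ 0 → f y ≠ 0 → ∀ l : ℝ, 0 ≤ l → l ≤ 1 →
      (l * f x ^ γ + (1 - l) * f y ^ γ) ^ (1 / γ) ≤ f (l • x + (1 - l) • y)) :
    ConcaveOn ℝ (Function.support f) fun x ↦ f x ^ γ := by
  have f_pos {x : E} (hx : x ∈ Function.support f) : 0 < f x := (hf_nonneg x).lt_of_ne' hx
  have mean_pos {x y : E} (hx : x ∈ Function.support f) (hy : y ∈ Function.support f) {a b : ℝ}
      (ha : 0 ≤ a) (hb : 0 ≤ b) (hab : a + b = 1) : 0 < a * f x ^ γ + b * f y ^ γ := by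
    have := Real.rpow_pos_of_pos (f_pos hx) γ
    have := Real.rpow_pos_of_pos (f_pos hy) γ
    rcases ha.eq_or_lt with rfl | ha
    · rw [zero_add] at hab
      simpa [hab]
    · positivity
  have mean_le {x y : E} (hx : x ∈ Function.support f) (hy : y ∈ Function.support f) {a b : ℝ}
      (ha : 0 ≤ a) (hb : 0 ≤ b) (hab : a + b = 1) :
      (a * f x ^ γ + b * f y ^ γ) ^ (1 / γ) ≤ f (a • x + b • y) := by
    obtain rfl : b = 1 - a := by linarith
    exact hf x y hx hy a ha (by linarith)
  refine ⟨fun x hx y hy a b ha hb hab ↦ ?_, fun x hx y hy a b ha hb hab ↦ ?_⟩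
  · exact ((Real.rpow_pos_of_pos (mean_pos hx hy ha hb hab) _).trans_le
      (mean_le hx hy ha hb hab)).ne'
  · have h := Real.rpow_le_rpow (Real.rpow_nonneg (mean_pos hx hy ha hb hab).le _)
      (mean_le hx hy ha hb hab) hγ.le
    rwa [← Real.rpow_mul (mean_pos hx hy ha hb hab).le, one_div_mul_cancel hγ.ne',
      Real.rpow_one] at h

theorem grunbaum_one_dim_sections_equality_general {E : Type*} [NormedAddCommGroup E]
    [InnerProductSpace ℝ E] [FiniteDimensional ℝ E] [MeasurableSpace E] [BorelSpace E]
    {μ : Measure E} [μ.IsAddHaarMeasure] {γ : ℝ} {f : E → ℝ} {θ : E}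
    (hf : GammaConcaveDensity γ f μ) (hθ : θ ≠ 0) (hcent : ∫ x, f x • x ∂μ = 0) :
    sectionIntegral f θ (Ioi 0) 0 =
        ((γ + 1) / (γ * Module.finrank ℝ E + γ + 1)) ^ ((γ + 1) / γ) *
          sectionIntegral f θ univ 0 ↔
      ∃ (m r : ℝ) (ξ : E) (D : Set E), 0 < m ∧ 0 < r ∧ ‖ξ‖ = 1 ∧ 0 < ⟪θ, ξ⟫ ∧
        Convex ℝ D ∧ IsCompact D ∧ D ⊆ {x | ⟪x, ξ⟫ = 0} ∧
        0 < μH[(Module.finrank ℝ E : ℝ) - 1] D ∧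
        ∫ x in D, x ∂μH[(Module.finrank ℝ E : ℝ) - 1] = 0 ∧
        tsupport f = convexHull ℝ (insert ((-(Module.finrank ℝ E * γ / (γ + 1)) * r) • θ)
          ((fun d ↦ r • θ + d) '' D)) ∧
        ∀ x, f x =
          m * (tsupport f).indicator (fun y ↦ (-⟪y, ξ⟫ + r * ⟪θ, ξ⟫) ^ (1 / γ)) x := by
  have hγ := hf.exponent_pos
  constructor
  · intro heq
    obtain ⟨φ, m, r, D, hφ, hm, hr, hD, hDc, hK, hfφ⟩ :=
      hf.exists_tsupport_eq_solidCone hθ hcent heq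
    obtain ⟨ξ, hξ, hθξ, rfl⟩ := exists_unit_eq_inv_inner_smul_innerSL hφ
    refine ⟨m / ⟪θ, ξ⟫ ^ (1 / γ), r, ξ, Subtype.val '' D, by positivity, hr, hξ, hθξ,
      hD.is_linear_image (Submodule.subtype _).isLinear, hDc.image continuous_subtype_val, ?_,
      hf.hausdorffMeasure_base_pos hcent hφ hr hD hK,
      hf.setIntegral_hausdorffMeasure_base_eq_zero hcent hφ hm hr hD hDc hK hfφ,
      by rw [hK, solidCone, image_image], fun x ↦ ?_⟩
    · rintro - ⟨d, -, rfl⟩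
      exact (mem_ker_inv_inner_smul_innerSL hθξ _).1 d.2
    · have hle : ∀ y ∈ tsupport f, (⟪θ, ξ⟫⁻¹ • innerSL ℝ ξ) y ≤ r := fun y hy ↦
        le_of_mem_solidCone hφ ((neg_finrank_mul_neg hγ hφ hr).trans hr).le (hK.subset hy)
      rw [indicator_inner_rpow_eq _ hθξ hle, ← mul_assoc, div_mul_cancel₀ _ (by positivity), hfφ]
  · rintro ⟨m, r, ξ, D, hm, hr, -, hθξ, hD, -, hDξ, -, -, hK, hfξ⟩
    have hφ : (⟪θ, ξ⟫⁻¹ • innerSL ℝ ξ) θ = 1 := by simp [real_inner_comm, hθξ.ne']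
    obtain ⟨D, rfl⟩ : ∃ D' : Set (⟪θ, ξ⟫⁻¹ • innerSL ℝ ξ).ker, Subtype.val '' D' = D :=
      subset_range_iff_exists_image_eq.1 fun x hx ↦
        ⟨⟨x, (mem_ker_inv_inner_smul_innerSL hθξ x).2 (hDξ hx)⟩, rfl⟩
    have D_convex : Convex ℝ D := by
      rw [← preimage_image_eq D Subtype.val_injective]
      exact hD.linear_preimage (Submodule.subtype _)
    have hK' : tsupport f = solidCone θ (-(Module.finrank ℝ E * γ / (γ + 1)) * r) r D := by
      rw [hK, solidCone, image_image]
    have hle : ∀ y ∈ tsupport f, (⟪θ, ξ⟫⁻¹ • innerSL ℝ ξ) y ≤ r := fun y hy ↦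
      le_of_mem_solidCone hφ ((neg_finrank_mul_neg hγ hφ hr).trans hr).le (hK'.subset hy)
    refine hf.sectionIntegral_Ioi_eq_of_tsupport_eq_solidCone hcent hφ
      (mul_pos hm (Real.rpow_pos_of_pos hθξ (1 / γ))) hr D_convex hK' fun x ↦ ?_
    rw [hfξ, indicator_inner_rpow_eq _ hθξ hle, mul_assoc]

/-- **Equality case of Grünbaum's inequality for one-dimensional sections of
γ-concave functions.** Equality holds iff `f` is (up to constants) the `1/γ`-th
power of an affine function supported on a suitable cone. -/
theorem grunbaum_one_dim_sections_equality
    (n : ℕ) (hn : 1 ≤ n)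
    (θ : EuclideanSpace ℝ (Fin n)) (hθ : ‖θ‖ = 1)
    (γ : ℝ) (hγ : 0 < γ)
    (f : EuclideanSpace ℝ (Fin n) → ℝ)
    (hf_nonneg : ∀ x, 0 ≤ f x)
    (hf_concave : ∀ x y : EuclideanSpace ℝ (Fin n), f x ≠ 0 → f y ≠ 0 →
      ∀ l : ℝ, 0 ≤ l → l ≤ 1 →
        (l * f x ^ γ + (1 - l) * f y ^ γ) ^ (1 / γ) ≤ f (l • x + (1 - l) • y))
    (hf_cont : ContinuousOn f (tsupport f))
    (hf_int : Integrable f)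
    (hf_pos : 0 < ∫ x, f x)
    (hf_cent_int : Integrable (fun x => f x • x))
    (hf_cent : (∫ x, f x • x) = (0 : EuclideanSpace ℝ (Fin n))) :
    (∫ s in Ioi (0 : ℝ), f (s • θ)) =
        ((γ + 1) / (γ * n + γ + 1)) ^ ((γ + 1) / γ) * (∫ s : ℝ, f (s • θ)) ↔
      ∃ (m r : ℝ) (ξ : EuclideanSpace ℝ (Fin n)) (D : Set (EuclideanSpace ℝ (Fin n))),
        0 < m ∧ 0 < r ∧ ‖ξ‖ = 1 ∧ 0 < ⟪θ, ξ⟫ ∧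
        -- `D` is an `(n-1)`-dimensional convex body in `ξ^⊥` ...
        Convex ℝ D ∧ IsCompact D ∧ D ⊆ {x | ⟪x, ξ⟫ = 0} ∧ 0 < μH[(n : ℝ) - 1] D ∧
        -- ... whose centroid (taken in `ξ^⊥`) is at the origin,
        (∫ x in D, x ∂μH[(n : ℝ) - 1]) = (0 : EuclideanSpace ℝ (Fin n)) ∧
        -- `K_f = conv( -(nγ/(γ+1)) r θ , r θ + D )`,
        tsupport f = convexHull ℝ
          (insert ((-(n * γ / (γ + 1)) * r) • θ) ((fun d => r • θ + d) '' D)) ∧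
        -- and `f(x) = m 𝟙_{K_f}(x) (-⟨x,ξ⟩ + r⟨θ,ξ⟩)^{1/γ}`.
        ∀ x, f x =
          m * (tsupport f).indicator (fun y => (-⟪y, ξ⟫ + r * ⟪θ, ξ⟫) ^ (1 / γ)) x := by
  have hf : GammaConcaveDensity γ f volume :=
    ⟨hγ, hf_nonneg, concaveOn_support_rpow hγ hf_nonneg hf_concave, hf_cont, hf_int, hf_pos⟩
  have hθ_ne : θ ≠ 0 := norm_ne_zero_iff.1 (by rw [hθ]; exact one_ne_zero)
  simpa only [sectionIntegral, setIntegral_univ, zero_add, finrank_euclideanSpace_fin] using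
    grunbaum_one_dim_sections_equality_general hf hθ_ne hf_cent
end
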